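/- arXiv:1205.1458 — 10 statements merged into one kernel-verified Lean document; each statement's English description precedes it below -/
import Mathlib

section
/- Let L be a field of characteristic different from 2, let E be a finite étale commutative L-algebra, and let σ be an L-linear algebra involution of E. Let h be a nondegenerate L-bilinear form on E satisfying h(a·x, y) = h(x, σ(a)·y) for all a, x, y ∈ E. Then there exists an invertible element b ∈ E such that h = φ_b, i.e. h(x,y) = Tr_{E/L}(x·b·σ(y)) for all x, y ∈ E; moreover, if h is symmetric then σ(b) = b, and if h is skew-symmetric then σ(b) = −b. -/
theorem aux_trace_single {L I : Type*} [Field L] [Finite I] [DecidableEq I] (A : I → Type*)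
    [∀ i, Field (A i)] [∀ i, Algebra L (A i)] [∀ i, Module.Finite L (A i)] (i : I) (u : A i) :
    Algebra.trace L (∀ i, A i) (Pi.single i u) = Algebra.trace L (A i) u := by
  have h1 : Algebra.lmul L (∀ i, A i) (Pi.single i u) =
      (LinearMap.single L A i ∘ₗ Algebra.lmul L (A i) u) ∘ₗ LinearMap.proj i := by
    apply LinearMap.ext
    intro x
    funext j
    by_cases hj : j = i
    · subst hj
      simp
    · simp [hj]
  have h2 : (LinearMap.proj i : (∀ i, A i) →ₗ[L] A i) ∘ₗ
      (LinearMap.single L A i ∘ₗ Algebra.lmul L (A i) u) = Algebra.lmul L (A i) u := by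
    apply LinearMap.ext
    intro x
    simp
  rw [Algebra.trace_apply, Algebra.trace_apply, h1, LinearMap.trace_comp_comm', h2]

theorem aux_trace_nondeg {L E : Type u} [Field L] [CommRing E] [Algebra L E]
    [Algebra.Etale L E] (z : E) (hz : ∀ x, Algebra.trace L E (x * z) = 0) : z = 0 := by
  classical
  obtain ⟨I, _, A, _, _, e, hA⟩ := (Algebra.Etale.iff_exists_algEquiv_prod L E).mp inferInstance
  have hf := fun i => (hA i).1
  have hs := fun i => (hA i).2
  apply e.injective
  rw [map_zero]
  funext i
  apply (traceForm_nondegenerate L (A i)).1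
  intro w
  have h1 := hz (e.symm (Pi.single i w))
  rw [← Algebra.trace_eq_of_algEquiv e, map_mul, e.apply_symm_apply] at h1
  have h2 : (Pi.single i w : ∀ i, A i) * e z = Pi.single i (e z i * w) := by
    funext j
    by_cases hj : j = i
    · subst hj
      simp [mul_comm]
    · simp [hj]
  rw [h2, aux_trace_single] at h1
  exact h1

/-- Let `L` be a field of characteristic `≠ 2`, `E` a finite étale commutative
`L`-algebra with involution `σ`, and `h` a nondegenerate `L`-bilinear form on `E` satisfying
`h (a * x) y = h x (σ a * y)`.  Then `h = φ_b` for some invertible `b ∈ E`, i.e.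
`h x y = Tr_{E/L} (x * b * σ y)`; moreover if `h` is symmetric then `σ b = b`, and if `h` is
skew-symmetric then `σ b = -b`. -/
theorem statement2 {L E : Type u} [Field L] [CommRing E] [Algebra L E]
    [FiniteDimensional L E] [Algebra.Etale L E]
    (hchar : ringChar L ≠ 2)
    (σ : E →ₐ[L] E) (hσ : ∀ x, σ (σ x) = x)
    (h : E →ₗ[L] E →ₗ[L] L)
    (hnd : ∀ x : E, (∀ y : E, h x y = 0) → x = 0)
    (hassoc : ∀ a x y : E, h (a * x) y = h x (σ a * y)) :
    ∃ b : E, IsUnit b ∧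
      (∀ x y : E, h x y = Algebra.trace L E (x * b * σ y)) ∧
      ((∀ x y : E, h x y = h y x) → σ b = b) ∧
      ((∀ x y : E, h x y = - h y x) → σ b = -b) := by
  classical
  have hinj : Function.Injective (Algebra.traceForm L E) := by
    rw [injective_iff_map_eq_zero]
    intro z hz
    apply aux_trace_nondeg (L := L)
    intro x
    rw [mul_comm]
    exact LinearMap.congr_fun hz x
  have hsurj : Function.Surjective (Algebra.traceForm L E) :=
    (LinearMap.injective_iff_surjective_of_finrank_eq_finrank
      (Subspace.dual_finrank_eq (K := L) (V := E)).symm).mp hinj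
  obtain ⟨b, hb⟩ := hsurj (h.flip 1)
  have hb1 : ∀ x, h x 1 = Algebra.trace L E (b * x) := fun x =>
    (LinearMap.congr_fun hb x).symm
  have key : ∀ x y : E, h x y = Algebra.trace L E (x * b * σ y) := by
    intro x y
    have h1 := hassoc (σ y) x 1
    rw [hσ, mul_one] at h1
    rw [← h1, hb1]
    congr 1
    ring
  let e : E ≃ₐ[L] E := AlgEquiv.ofAlgHom σ σ (AlgHom.ext hσ) (AlgHom.ext hσ)
  have htr : ∀ x, Algebra.trace L E (σ x) = Algebra.trace L E x := fun x =>
    Algebra.trace_eq_of_algEquiv e x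
  have h1x : ∀ x, h 1 x = Algebra.trace L E (x * σ b) := by
    intro x
    rw [key, ← htr]
    simp only [map_mul, hσ, map_one, one_mul]
    rw [mul_comm]
  refine ⟨b, ?_, key, ?_, ?_⟩
  · have hbi : Function.Injective (LinearMap.mulLeft L b) := by
      rw [injective_iff_map_eq_zero]
      intro c hc
      apply hnd
      intro y
      have hc' : b * c = 0 := hc
      rw [key, mul_comm c b, hc', zero_mul, map_zero]
    obtain ⟨c, hc⟩ := LinearMap.injective_iff_surjective.mp hbi 1
    exact IsUnit.of_mul_eq_one c hc
  · intro hsym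
    rw [← sub_eq_zero]
    apply aux_trace_nondeg (L := L)
    intro x
    rw [mul_sub, map_sub, ← h1x, mul_comm x b, ← hb1, hsym, sub_self]
  · intro hsk
    rw [← sub_eq_zero]
    apply aux_trace_nondeg (L := L)
    intro x
    rw [mul_sub, map_sub, ← h1x, mul_neg, map_neg, mul_comm x b, ← hb1, hsk, sub_self]
end

section
/- Let K be an infinite field of characteristic different from 2, let ℓ ≥ 1, let E be a finite étale commutative K-algebra of K-dimension 2ℓ, and let σ be a K-linear algebra involution of E whose fixed-point subalgebra E^σ has K-dimension ℓ. Then there exists an element e ∈ E with σ(e) = −e such that 1, e, e², …, e^{2ℓ−1} form a K-basis of E (equivalently, E = K[e]). -/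
universe u

open TensorProduct in
lemma aux_card_ge (K E : Type u) [Field K] [CommRing E] [Algebra K E]
    [FiniteDimensional K E] [Algebra.Etale K E] :
    Module.finrank K E ≤ Nat.card (E →ₐ[K] AlgebraicClosure K) := by
  let Ω := AlgebraicClosure K
  let A := Ω ⊗[K] E
  let e : A ≃ₐ[Ω] (PrimeSpectrum A → Ω) := Algebra.FormallyEtale.equivPiOfIsSepClosed Ω A
  have hA : IsArtinianRing A := isArtinian_of_tower Ω inferInstance
  have hfin : Finite (PrimeSpectrum A) := inferInstance
  have := Fintype.ofFinite (PrimeSpectrum A)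
  have h1 : Module.finrank Ω A = Nat.card (PrimeSpectrum A) := by
    rw [e.toLinearEquiv.finrank_eq, Module.finrank_fintype_fun_eq_card, Nat.card_eq_fintype_card]
  have h2 : Module.finrank Ω A = Module.finrank K E := Module.finrank_baseChange
  rw [← h2, h1]
  let F : PrimeSpectrum A → (E →ₐ[K] Ω) := fun p =>
    (AlgHom.liftEquiv K Ω E Ω).symm ((Pi.evalAlgHom Ω (fun _ => Ω) p).comp e.toAlgHom)
  have hF : Function.Injective F := by
    intro p q hpq
    have h := (AlgHom.liftEquiv K Ω E Ω).symm.injective hpq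
    by_contra hne
    classical
    have := DFunLike.congr_fun h (e.symm (Pi.single p 1))
    simp [Ne.symm hne] at this
  exact Nat.card_le_card_of_injective F hF

lemma aux_dedekind {K E Ω : Type u} [Field K] [CommRing E] [Algebra K E] [Field Ω] [Algebra K Ω]
    (h2 : (2 : Ω) ≠ 0) (a b c d : E →ₐ[K] Ω) (h : ∀ x, a x + b x = c x + d x) :
    a = c ∨ a = d := by
  classical
  have hli := linearIndependent_algHom_toLinearMap K E Ω
  have : Finsupp.single a (1 : Ω) + Finsupp.single b 1 =
      Finsupp.single c 1 + Finsupp.single d 1 := by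
    apply hli
    ext x
    simpa using h x
  have h3 := DFunLike.congr_fun this a
  by_contra! hne
  simp only [Finsupp.add_apply, Finsupp.single_apply, if_neg hne.1.symm, if_neg hne.2.symm] at h3
  by_cases hba : b = a
  · rw [if_pos trivial, if_pos hba] at h3
    exact h2 (by linear_combination h3)
  · rw [if_pos trivial, if_neg hba] at h3
    exact h2 (by linear_combination 2 * h3)

theorem statement4 {K E : Type u} [Field K] [Infinite K] [CommRing E] [Algebra K E]
    [FiniteDimensional K E] [Algebra.Etale K E]
    (hchar : ringChar K ≠ 2)
    (ℓ : ℕ) (hℓ : 1 ≤ ℓ)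
    (hdim : Module.finrank K E = 2 * ℓ)
    (σ : E →ₐ[K] E) (hσ : ∀ x, σ (σ x) = x)
    (hfix : Module.finrank K (LinearMap.ker (σ.toLinearMap - LinearMap.id)) = ℓ) :
    ∃ e : E, σ e = -e ∧
      ∃ B : Module.Basis (Fin (2 * ℓ)) K E, ∀ i : Fin (2 * ℓ), B i = e ^ (i : ℕ) := by
  classical
  let Ω := AlgebraicClosure K
  have h2K : (2 : K) ≠ 0 := Ring.two_ne_zero hchar
  have h2 : (2 : Ω) ≠ 0 := by
    have := (map_ne_zero (algebraMap K Ω)).2 h2K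
    rwa [map_ofNat] at this
  have hcard : _ ≤ Nat.card (E →ₐ[K] Ω) := aux_card_ge K E
  rw [hdim] at hcard
  let S : Subalgebra K E := AlgHom.equalizer σ (AlgHom.id K E)
  have hS : Module.finrank K S = ℓ := by
    rw [← hfix]
    have : Subalgebra.toSubmodule S = LinearMap.ker (σ.toLinearMap - LinearMap.id) := by
      ext x
      simp [S, AlgHom.mem_equalizer, sub_eq_zero]
    rw [← this]
    rfl
  have hfinE : Finite (E →ₐ[K] Ω) := inferInstance
  have hfinS : Finite (S →ₐ[K] Ω) := inferInstance
  have := Fintype.ofFinite (E →ₐ[K] Ω)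
  have := Fintype.ofFinite (S →ₐ[K] Ω)
  have hcardS : Nat.card (S →ₐ[K] Ω) ≤ ℓ := hS ▸ card_algHom_le_finrank K S Ω
  rw [Nat.card_eq_fintype_card] at hcard hcardS
  let r : (E →ₐ[K] Ω) → (S →ₐ[K] Ω) := fun φ => φ.comp S.val
  have hr : ∀ φ ψ, r φ = r ψ → φ = ψ ∨ φ = ψ.comp σ := by
    intro φ ψ h
    apply aux_dedekind h2 φ (φ.comp σ)
    intro x
    have hx : x + σ x ∈ S := by
      simp [S, AlgHom.mem_equalizer, hσ, add_comm]
    simpa [r] using DFunLike.congr_fun h (⟨_, hx⟩ : S)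
  have hfree : ∀ φ : E →ₐ[K] Ω, φ ≠ φ.comp σ := by
    intro φ₀ h0
    have key := Finset.card_le_mul_card_image_of_maps_to (f := r)
      (s := Finset.univ.erase φ₀) (t := Finset.univ.erase (r φ₀)) (by
        intro ψ hψ
        simp only [Finset.mem_erase, Finset.mem_univ, and_true] at hψ ⊢
        intro h
        rcases hr _ _ h with h | h
        · exact hψ h
        · exact hψ (h.trans h0.symm)) 2 (by
        intro b _
        by_cases hb : ∃ φ, r φ = b
        · obtain ⟨φ, rfl⟩ := hb
          refine (Finset.card_le_card (t := {φ, φ.comp σ}) ?_).trans Finset.card_le_two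
          intro ψ hψ
          simpa using hr _ _ (Finset.mem_filter.1 hψ).2
        · push Not at hb
          simp [hb])
    rw [Finset.card_erase_of_mem (Finset.mem_univ _), Finset.card_erase_of_mem (Finset.mem_univ _),
      Finset.card_univ, Finset.card_univ] at key
    omega
  let V : Submodule K E := LinearMap.ker (σ.toLinearMap + LinearMap.id)
  let P : {p : (E →ₐ[K] Ω) × (E →ₐ[K] Ω) // p.1 ≠ p.2} → Submodule K V := fun p =>
    LinearMap.ker ((p.1.1.toLinearMap - p.1.2.toLinearMap).comp V.subtype)
  obtain ⟨e, he⟩ := Submodule.exists_forall_notMem_of_forall_ne_top P (by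
    rintro ⟨⟨φ, ψ⟩, hne⟩ htop
    have : φ = φ.comp σ ∨ φ = ψ := by
      apply aux_dedekind h2 φ (ψ.comp σ)
      intro x
      have hx : x - σ x ∈ V := by
        simp [V, hσ]
      have : (⟨_, hx⟩ : V) ∈ P ⟨⟨φ, ψ⟩, hne⟩ := htop ▸ Submodule.mem_top
      simp [P] at this
      simp only [AlgHom.comp_apply]
      linear_combination this
    exact this.elim (hfree φ) hne)
  have hinj : Function.Injective (fun φ : E →ₐ[K] Ω => φ e) := by
    intro φ ψ h
    by_contra hne
    apply he ⟨⟨φ, ψ⟩, hne⟩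
    simpa [P, sub_eq_zero] using h
  have hev : σ e = -(e : E) := by
    have := e.2
    simp only [V, LinearMap.mem_ker] at this
    exact eq_neg_of_add_eq_zero_left this
  have hli : LinearIndependent K (fun i : Fin (2 * ℓ) => (e : E) ^ (i : ℕ)) := by
    rw [Fintype.linearIndependent_iff]
    intro g hg
    let p : Polynomial Ω := ∑ i : Fin (2 * ℓ), Polynomial.monomial (i : ℕ) (algebraMap K Ω (g i))
    have hp : p = 0 := by
      apply Polynomial.eq_zero_of_natDegree_lt_card_of_eval_eq_zero p hinj
      · intro φ
        have := congrArg φ hg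
        simpa [p, Polynomial.eval_finsetSum, Algebra.smul_def] using this
      · refine lt_of_lt_of_le ?_ hcard
        have : p.natDegree ≤ 2 * ℓ - 1 := by
          apply Polynomial.natDegree_sum_le_of_forall_le
          intro i _
          exact (Polynomial.natDegree_monomial_le _).trans (by omega)
        omega
    intro i
    have := congrArg (fun q => Polynomial.coeff q (i : ℕ)) hp
    simpa [p, Polynomial.finsetSum_coeff, Polynomial.coeff_monomial, Fin.val_inj] using this
  have : Nonempty (Fin (2 * ℓ)) := ⟨⟨0, by omega⟩⟩
  exact ⟨e, hev, basisOfLinearIndependentOfCardEqFinrank hli (by simp [hdim]), by simp⟩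
end

section
/- Let K be a field of characteristic different from 2, let ℓ ≥ 1, let E be a finite étale commutative K-algebra of K-dimension 2ℓ, and let σ be a K-linear algebra involution of E with dim_K E^σ = ℓ. Then there exists a nondegenerate symmetric K-bilinear form h on E satisfying h(a·x, y) = h(x, σ(a)·y) for all a, x, y ∈ E, and such that h admits a totally isotropic K-subspace of dimension ℓ − 1 (i.e. h has Witt index at least ℓ − 1). -/
open TensorProduct in
theorem aux_split (K E : Type*) [Field K] [CommRing E] [Algebra K E]
    [FiniteDimensional K E] [Algebra.Etale K E] :
    ∃ φ : Fin (Module.finrank K E) → (E →ₐ[K] AlgebraicClosure K), Function.Injective φ ∧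
      (∀ a, (∀ i, φ i a = 0) → a = 0) ∧
      (∀ a, (∀ b, Algebra.trace K E (a * b) = 0) → a = 0) := by
  set Ω := AlgebraicClosure K
  obtain ⟨n, ⟨e⟩⟩ := Algebra.IsFiniteSplit.nonempty_algEquiv_fun Ω (Ω ⊗[K] E)
  have hn : n = Module.finrank K E := by
    have h1 := e.toLinearEquiv.finrank_eq
    rw [Module.finrank_baseChange] at h1
    simpa using h1.symm
  subst hn
  let ψ : Fin (Module.finrank K E) → (E →ₐ[K] Ω) := fun i =>
    (((Pi.evalAlgHom Ω (fun _ => Ω) i).comp e.toAlgHom).restrictScalars K).comp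
      Algebra.TensorProduct.includeRight
  have hψ : ∀ i a, ψ i a = e (1 ⊗ₜ a) i := fun i a => rfl
  have hinj : ∀ a, (∀ i, ψ i a = 0) → a = 0 := by
    intro a ha
    have : e (1 ⊗ₜ a) = 0 := by ext i; exact ha i
    have h2 : (1 : Ω) ⊗ₜ[K] a = 0 := by simpa using this
    have h3 : Function.Injective (Algebra.TensorProduct.includeRight : E →ₐ[K] Ω ⊗[K] E) :=
      Algebra.TensorProduct.includeRight_injective (algebraMap K Ω).injective
    exact h3 (by simpa using h2)
  refine ⟨ψ, ?_, hinj, ?_⟩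
  · intro i j hij
    by_contra hne
    have key : ∀ z : Ω ⊗[K] E, e z i = e z j := by
      intro z
      induction z with
      | zero => simp
      | add x y hx hy => simp [hx, hy]
      | tmul c a =>
        have : c ⊗ₜ[K] a = c • ((1 : Ω) ⊗ₜ[K] a) := by simp [TensorProduct.smul_tmul']
        rw [this, map_smul, Pi.smul_apply, Pi.smul_apply, ← hψ, ← hψ, hij]
    have := key (e.symm (Pi.single i 1))
    simp [Pi.single_apply, Ne.symm hne] at this
  · intro a ha
    apply hinj
    intro i
    have h1 : ∀ z : Ω ⊗[K] E, Algebra.trace Ω (Ω ⊗[K] E) ((1 ⊗ₜ a) * z) = 0 := by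
      intro z
      induction z with
      | zero => simp
      | add x y hx hy => simp [mul_add, hx, hy]
      | tmul c b =>
        have : (1 ⊗ₜ[K] a) * (c ⊗ₜ[K] b) = c • ((1 : Ω) ⊗ₜ[K] (a * b)) := by
          simp [TensorProduct.smul_tmul']
        rw [this, map_smul, Algebra.trace_apply]
        have h2 : Algebra.lmul Ω (Ω ⊗[K] E) ((1 : Ω) ⊗ₜ[K] (a * b)) =
            (Algebra.lmul K E (a * b)).baseChange Ω := by
          ext; simp
        have h3 : LinearMap.trace K E (Algebra.lmul K E (a * b)) = 0 := ha b
        erw [h2]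
        rw [LinearMap.trace_baseChange, h3]; simp
    have h2 := h1 (e.symm (Pi.single i 1))
    rw [← Algebra.trace_eq_of_algEquiv e, map_mul, AlgEquiv.apply_symm_apply,
      Algebra.trace_eq_matrix_trace (Pi.basisFun Ω _), Matrix.trace] at h2
    simp [Algebra.leftMulMatrix_apply, LinearMap.toMatrix_apply, Pi.single_apply] at h2
    rw [hψ]; exact h2

theorem aux_fin {K V : Type*} [Field K] [Finite K] [AddCommGroup V] [Module K V]
    [FiniteDimensional K V] (ℓ : ℕ) (hdim : Module.finrank K V = 2 * ℓ)
    (h : V →ₗ[K] V →ₗ[K] K) (hsym : ∀ x y, h x y = h y x) (m : ℕ) (hm : m ≤ ℓ - 1) :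
    ∃ W : Submodule K V, Module.finrank K W = m ∧ ∀ w ∈ W, ∀ w' ∈ W, h w w' = 0 := by
  classical
  have := Fintype.ofFinite K
  induction m with
  | zero => exact ⟨⊥, by simp, by simp⟩
  | succ m ih =>
    obtain ⟨W, hW, hiso⟩ := ih (by omega)
    let O : Submodule K V := LinearMap.ker ((h.compr₂ (LinearMap.id)).flip.flip.compl₂ LinearMap.id
      |> fun g => ((LinearMap.lcomp K K W.subtype).comp g))
    have hO : ∀ x, x ∈ O ↔ ∀ w ∈ W, h x w = 0 := by
      intro x
      simp only [O, LinearMap.mem_ker]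
      constructor
      · intro hx w hw
        exact LinearMap.congr_fun hx ⟨w, hw⟩
      · intro hx
        ext w
        exact hx w w.2
    have hOdim : 2 * ℓ - m ≤ Module.finrank K O := by
      have h1 := LinearMap.finrank_range_add_finrank_ker ((LinearMap.lcomp K K W.subtype).comp
        ((h.compr₂ (LinearMap.id)).flip.flip.compl₂ LinearMap.id))
      have h2 := Submodule.finrank_le (LinearMap.range ((LinearMap.lcomp K K W.subtype).comp
        ((h.compr₂ (LinearMap.id)).flip.flip.compl₂ LinearMap.id)))
      have h3 : Module.finrank K (W →ₗ[K] K) = m := by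
        rw [← hW]; exact Subspace.dual_finrank_eq
      change _ + Module.finrank K O = _ at h1
      omega
    obtain ⟨C, hC⟩ := Submodule.exists_isCompl W
    have hCd := Submodule.finrank_add_eq_of_isCompl hC
    have h4 := Submodule.finrank_sup_add_finrank_inf_eq C O
    have h5 := Submodule.finrank_le (C ⊔ O)
    let D := C ⊓ O
    have hD : 3 ≤ Module.finrank K D := by change 3 ≤ Module.finrank K ↥(C ⊓ O); omega
    let b := Module.finBasis K D
    let Q : MvPolynomial (Fin (Module.finrank K D)) K := ∑ i, ∑ j,
      MvPolynomial.C (h (b i) (b j)) * (MvPolynomial.X i * MvPolynomial.X j)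
    have hQ : ∀ x, MvPolynomial.eval x Q = h (∑ i, x i • (b i : V)) (∑ i, x i • (b i : V)) := by
      intro x
      simp only [Q, map_sum, map_mul, MvPolynomial.eval_C, MvPolynomial.eval_X, map_smul,
        LinearMap.sum_apply, LinearMap.smul_apply, smul_eq_mul, Finset.mul_sum]
      rw [Finset.sum_comm]
      exact Finset.sum_congr rfl fun i _ => Finset.sum_congr rfl fun j _ => by ring
    have hQd : Q.totalDegree < Fintype.card (Fin (Module.finrank K D)) := by
      rw [Fintype.card_fin]
      refine lt_of_le_of_lt (b := 2) ?_ (by omega)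
      refine MvPolynomial.totalDegree_finsetSum_le fun i _ => 
        MvPolynomial.totalDegree_finsetSum_le fun j _ => ?_
      refine (MvPolynomial.totalDegree_mul _ _).trans ?_
      have := MvPolynomial.totalDegree_mul (MvPolynomial.X i : MvPolynomial _ K) (MvPolynomial.X j)
      simp only [MvPolynomial.totalDegree_X, MvPolynomial.totalDegree_C] at this ⊢
      omega
    obtain ⟨p, hp⟩ := CharP.exists K
    have hpp : p.Prime := (CharP.char_is_prime_or_zero K p).resolve_right
      (CharP.char_ne_zero_of_finite K p)
    have hdvd := char_dvd_card_solutions p hQd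
    have hex : ∃ x, MvPolynomial.eval x Q = 0 ∧ x ≠ 0 := by
      by_contra hcon
      push Not at hcon
      have : Fintype.card { x // MvPolynomial.eval x Q = 0 } = 1 := by
        rw [Fintype.card_eq_one_iff]
        refine ⟨⟨0, by rw [hQ]; simp⟩, fun y => Subtype.ext (hcon y y.2)⟩
      rw [this] at hdvd
      exact hpp.one_lt.ne' (Nat.dvd_one.mp hdvd)
    obtain ⟨x, hx0, hxne⟩ := hex
    rw [hQ] at hx0
    set v : V := ∑ i, x i • (b i : V) with hv
    have hvD : v = ((∑ i, x i • b i : D) : V) := by simp [hv]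
    have hvmem : v ∈ D := by rw [hvD]; exact Subtype.mem _
    have hvne : v ≠ 0 := by
      intro h0
      rw [hvD] at h0
      have h0' : ∑ i, x i • b i = 0 := by exact_mod_cast h0
      exact hxne (funext (Fintype.linearIndependent_iff.mp b.linearIndependent x h0'))
    have hvW : v ∉ W := fun hw =>
      hvne (by simpa using hC.disjoint.le_bot ⟨hw, hvmem.1⟩)
    have hvO := (hO v).mp hvmem.2
    refine ⟨W ⊔ Submodule.span K {v}, ?_, ?_⟩
    · have h6 := Submodule.finrank_sup_add_finrank_inf_eq W (Submodule.span K {v})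
      have h7 : W ⊓ Submodule.span K {v} = ⊥ := by
        rw [← disjoint_iff]
        exact (Submodule.disjoint_span_singleton' hvne).mpr hvW
      rw [h7, finrank_bot, finrank_span_singleton hvne] at h6
      omega
    · intro w hw w' hw'
      obtain ⟨y, hy, z, hz, rfl⟩ := Submodule.mem_sup.mp hw
      obtain ⟨y', hy', z', hz', rfl⟩ := Submodule.mem_sup.mp hw'
      obtain ⟨c, rfl⟩ := Submodule.mem_span_singleton.mp hz
      obtain ⟨c', rfl⟩ := Submodule.mem_span_singleton.mp hz'
      simp [hiso y hy y' hy', hvO y' hy', hsym y v, hvO y hy, hx0]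

theorem aux_avoid {K V Ω ι : Type*} [Field K] [Infinite K] [AddCommGroup V] [Module K V]
    [Field Ω] [Algebra K Ω] (s : Finset ι) (f : ι → V →ₗ[K] Ω)
    (hf : ∀ i ∈ s, f i ≠ 0) : ∃ v, ∀ i ∈ s, f i v ≠ 0 := by
  classical
  have h := Subspace.biUnion_ne_univ_of_top_notMem (k := K) (E := V)
    (s := s.image fun i => LinearMap.ker (f i)) (by
      intro h
      obtain ⟨i, hi, h⟩ := Finset.mem_image.mp h
      exact hf i hi (LinearMap.ker_eq_top.mp h))
  obtain ⟨v, hv⟩ := (Set.ne_univ_iff_exists_notMem _).mp h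
  refine ⟨v, fun i hi h0 => hv ?_⟩
  simp only [Set.mem_iUnion]
  exact ⟨_, Finset.mem_image_of_mem _ hi, h0⟩

theorem aux_gen {K E Ω : Type*} [Field K] [Infinite K] [CommRing E] [Algebra K E]
    [FiniteDimensional K E] [Field Ω] [Algebra K Ω]
    (h2 : (2 : K) ≠ 0) (ℓ : ℕ) (hdim : Module.finrank K E = 2 * ℓ)
    (σ : E →ₐ[K] E) (hσ : ∀ x, σ (σ x) = x)
    (hfix : Module.finrank K (LinearMap.ker (σ.toLinearMap - LinearMap.id)) = ℓ)
    (n : ℕ) (φ : Fin n → (E →ₐ[K] Ω)) (hφ : Function.Injective φ)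
    (hker : ∀ a, (∀ i, φ i a = 0) → a = 0) :
    ∃ x : E, σ x = -x ∧ (∀ i, φ i x ≠ 0) ∧ Function.Injective (fun i => φ i x) := by
  classical
  let P : Submodule K E := LinearMap.ker (σ.toLinearMap - LinearMap.id)
  let N : Submodule K E := LinearMap.ker (σ.toLinearMap + LinearMap.id)
  have hP : ∀ x, x ∈ P ↔ σ x = x := fun x => by simp [P, sub_eq_zero]
  have hN : ∀ x, x ∈ N ↔ σ x = -x := fun x => by simp [N, add_eq_zero_iff_eq_neg]
  have hdec : ∀ x : E, x = (2 : K)⁻¹ • (x + σ x) + (2 : K)⁻¹ • (x - σ x) := by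
    intro x
    rw [← smul_add, show x + σ x + (x - σ x) = (2 : K) • x by rw [two_smul]; abel, smul_smul,
      inv_mul_cancel₀ h2, one_smul]
  have hPm : ∀ x : E, (2 : K)⁻¹ • (x + σ x) ∈ P := fun x => by
    rw [hP]; simp [hσ, add_comm]
  have hNm : ∀ x : E, (2 : K)⁻¹ • (x - σ x) ∈ N := fun x => by
    rw [hN, map_smul, map_sub, hσ, ← smul_neg, neg_sub]
  have hNdim : Module.finrank K N = ℓ := by
    have hc : IsCompl P N := by
      constructor
      · rw [Submodule.disjoint_def]
        intro x hx hx'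
        rw [hP] at hx; rw [hN] at hx'
        have : (2 : K) • x = 0 := by rw [two_smul]; nth_rw 1 [← hx]; rw [hx']; simp
        exact (smul_eq_zero.mp this).resolve_left h2
      · rw [codisjoint_iff, eq_top_iff]
        intro x _
        rw [hdec x]
        exact Submodule.add_mem_sup (hPm x) (hNm x)
    have := Submodule.finrank_add_eq_of_isCompl hc
    change Module.finrank K P = ℓ at hfix
    omega
  let g : Fin n → (N →ₗ[K] Ω) := fun i => (φ i).toLinearMap.comp N.subtype
  have hg : ∀ i (y : N), g i y = φ i y := fun _ _ => rfl
  -- no hom vanishes on N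
  have hnv : ∀ i, g i ≠ 0 := by
    intro i0 h0
    obtain ⟨e, he⟩ := aux_avoid (Finset.univ.filter fun i => g i ≠ 0) g (by simp)
    let M : N →ₗ[K] P := LinearMap.codRestrict P ((LinearMap.mulLeft K (e : E)).comp N.subtype)
      (by
        intro y
        rw [hP]
        have h1 := (hN _).mp e.2
        have h3 := (hN _).mp y.2
        simp [h1, h3])
    have hM : ∀ y, ((M y : P) : E) = e * y := fun _ => rfl
    have hMinj : Function.Injective M := by
      rw [injective_iff_map_eq_zero]
      intro y hy
      have h1 : (e : E) * y = 0 := by rw [← hM, hy]; rfl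
      apply Subtype.ext
      refine hker _ fun i => ?_
      by_cases hi : g i = 0
      · rw [← hg, hi]; rfl
      · have h3 := congrArg (φ i) h1
        rw [map_mul, map_zero] at h3
        exact (mul_eq_zero.mp h3).resolve_left (he i (by simp [hi]))
    have hMsurj : Function.Surjective M :=
      (LinearMap.injective_iff_surjective_of_finrank_eq_finrank (hNdim.trans hfix.symm)).mp hMinj
    obtain ⟨y, hy⟩ := hMsurj ⟨1, by rw [hP]; simp⟩
    have h1 : (e : E) * y = 1 := by rw [← hM, hy]
    have h3 := congrArg (φ i0) h1
    rw [map_mul, map_one, ← hg, h0] at h3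
    simp at h3
  -- separating
  have hsep : ∀ i j, i ≠ j → g i - g j ≠ 0 := by
    intro i j hij h0
    have h1 : ∀ y ∈ N, φ i y = φ j y := fun y hy => by
      have := LinearMap.congr_fun h0 ⟨y, hy⟩
      exact sub_eq_zero.mp this
    apply hij; apply hφ
    have h3 : ∃ e : N, g i e ≠ 0 := by
      by_contra hcon
      push Not at hcon
      exact hnv i (LinearMap.ext hcon)
    obtain ⟨e, he⟩ := h3
    have h4 : ∀ y ∈ P, φ i y = φ j y := fun y hy => by
      have h5 : (e : E) * y ∈ N := by
        rw [hN, map_mul, (hN _).mp e.2, (hP _).mp hy, neg_mul]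
      have h6 := h1 _ h5
      rw [map_mul, map_mul, ← h1 e e.2] at h6
      exact mul_left_cancel₀ he h6
    ext x
    rw [hdec x, map_add, map_add, h1 _ (hNm x), h4 _ (hPm x)]
  let f : (Fin n ⊕ (Fin n × Fin n)) → (N →ₗ[K] Ω) := Sum.elim g fun p => g p.1 - g p.2
  obtain ⟨x, hx⟩ := aux_avoid (Finset.univ.filter fun i => f i ≠ 0) f (by simp)
  refine ⟨x, (hN _).mp x.2, fun i => hx (Sum.inl i) (by simpa [f] using hnv i), ?_⟩
  intro i j hij
  by_contra hne
  refine hx (Sum.inr (i, j)) (by simpa [f] using hsep i j hne) ?_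
  simp only [f, Sum.elim_inr, LinearMap.sub_apply, hg]
  exact sub_eq_zero.mpr hij

theorem aux_inf {K E Ω : Type*} [Field K] [CommRing E] [Algebra K E]
    [FiniteDimensional K E] [Field Ω] [Algebra K Ω]
    (ℓ : ℕ) (hℓ : 1 ≤ ℓ) (hdim : Module.finrank K E = 2 * ℓ)
    (σ : E →ₐ[K] E) (hσ : ∀ x, σ (σ x) = x)
    (φ : Fin (Module.finrank K E) → (E →ₐ[K] Ω))
    (hker : ∀ a, (∀ i, φ i a = 0) → a = 0)
    (x : E) (hx : σ x = -x) (hx0 : ∀ i, φ i x ≠ 0)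
    (hxi : Function.Injective (fun i => φ i x)) :
    ∃ h : E →ₗ[K] E →ₗ[K] K,
      (∀ x : E, (∀ y : E, h x y = 0) → x = 0) ∧
      (∀ x y : E, h x y = h y x) ∧
      (∀ a x y : E, h (a * x) y = h x (σ a * y)) ∧
      ∃ W : Submodule K E, Module.finrank K W = ℓ - 1 ∧
        ∀ w ∈ W, ∀ w' ∈ W, h w w' = 0 := by
  classical
  -- polynomials of small degree vanishing at x are zero
  have hpz : ∀ p : Polynomial K, p.degree < (2 * ℓ : ℕ) → Polynomial.aeval x p = 0 → p = 0 := by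
    intro p hp hpx
    have hq : p.map (algebraMap K Ω) = 0 := by
      refine Polynomial.eq_zero_of_degree_lt_of_eval_finset_eq_zero
        (Finset.univ.image fun i => φ i x) ?_ ?_
      · rw [Finset.card_image_of_injective _ hxi, Finset.card_univ, Fintype.card_fin, hdim,
          Polynomial.degree_map]
        exact hp
      · intro y hy
        obtain ⟨i, _, rfl⟩ := Finset.mem_image.mp hy
        rw [Polynomial.eval_map_algebraMap, Polynomial.aeval_algHom_apply, hpx, map_zero]
    exact (Polynomial.map_eq_zero _).mp hq
  have hli : LinearIndependent K (fun i : Fin (2 * ℓ) => x ^ (i : ℕ)) := by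
    rw [Fintype.linearIndependent_iff]
    intro c hc i
    let p : Polynomial K := ∑ i : Fin (2 * ℓ), Polynomial.monomial (i : ℕ) (c i)
    have hp : p = 0 := by
      apply hpz
      · refine (Polynomial.degree_sum_le _ _).trans_lt ?_
        rw [Finset.sup_lt_iff (WithBot.bot_lt_coe _)]
        intro j _
        refine (Polynomial.degree_monomial_le _ _).trans_lt ?_
        exact_mod_cast j.2
      · simp only [p, map_sum, Polynomial.aeval_monomial]
        simpa [Algebra.smul_def] using hc
    have := congrArg (fun q => Polynomial.coeff q (i : ℕ)) hp
    simpa [p, Polynomial.finset_sum_coeff, Polynomial.coeff_monomial, Fin.val_inj] using this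
  have : Nonempty (Fin (2 * ℓ)) := ⟨⟨0, by omega⟩⟩
  let b := basisOfLinearIndependentOfCardEqFinrank hli (by simp [hdim])
  have hb : ∀ i, b i = x ^ (i : ℕ) := fun i => by simp [b]
  let s : E →ₗ[K] K := b.coord ⟨2 * ℓ - 1, by omega⟩
  have hs : ∀ k, k < 2 * ℓ → s (x ^ k) = if k = 2 * ℓ - 1 then 1 else 0 := by
    intro k hk
    have := hb ⟨k, hk⟩
    simp only at this
    rw [← this]
    simp [s, Finsupp.single_apply, Fin.ext_iff]
  have hsσ : ∀ a, s (σ a) = - s a := by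
    have : s.comp σ.toLinearMap = -s := by
      apply b.ext
      intro i
      have hi := i.2
      simp only [LinearMap.comp_apply, AlgHom.toLinearMap_apply, LinearMap.neg_apply, hb, map_pow, hx]
      rw [neg_pow]
      have : ((-1 : E)) ^ (i : ℕ) * x ^ (i : ℕ) = ((-1 : K) ^ (i : ℕ)) • x ^ (i : ℕ) := by
        simp [Algebra.smul_def]
      rw [this, map_smul, hs _ hi]
      split_ifs with h
      · have : Odd (i : ℕ) := ⟨ℓ - 1, by omega⟩
        simp [this.neg_one_pow]
      · simp
    intro a
    exact LinearMap.congr_fun this a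
  have hsp : ∀ p : Polynomial K, p.natDegree < 2 * ℓ →
      s (Polynomial.aeval x p) = p.coeff (2 * ℓ - 1) := by
    intro p hp
    rw [Polynomial.aeval_eq_sum_range' hp, map_sum, Finset.sum_eq_single (2 * ℓ - 1)]
    · rw [map_smul, hs _ (by omega)]; simp
    · intro k hk hne
      rw [map_smul, hs _ (by simpa using hk)]; simp [hne]
    · intro hk; simp at hk; omega
  have hsnd : ∀ a, (∀ c, s (a * c) = 0) → a = 0 := by
    intro a ha
    let p : Polynomial K := ∑ i : Fin (2 * ℓ), Polynomial.monomial (i : ℕ) (b.repr a i)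
    have hpa : Polynomial.aeval x p = a := by
      conv_rhs => rw [← b.sum_repr a]
      simp only [p, map_sum, Polynomial.aeval_monomial, hb, Algebra.smul_def]
    have hpd : p.degree < (2 * ℓ : ℕ) := by
      refine (Polynomial.degree_sum_le _ _).trans_lt ?_
      rw [Finset.sup_lt_iff (WithBot.bot_lt_coe _)]
      intro j _
      refine (Polynomial.degree_monomial_le _ _).trans_lt ?_
      exact_mod_cast j.2
    by_contra hane
    have hpne : p ≠ 0 := by
      intro h; apply hane; rw [← hpa, h, map_zero]
    have hnd : p.natDegree < 2 * ℓ := (Polynomial.natDegree_lt_iff_degree_lt hpne).mpr hpd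
    have h1 := hsp (p * Polynomial.X ^ (2 * ℓ - 1 - p.natDegree)) (by
      rw [Polynomial.natDegree_mul_X_pow _ hpne]; omega)
    rw [map_mul, hpa, ha, Polynomial.coeff_mul_X_pow', if_pos (by omega),
      show 2 * ℓ - 1 - (2 * ℓ - 1 - p.natDegree) = p.natDegree by omega] at h1
    exact hpne (Polynomial.leadingCoeff_eq_zero.mp h1.symm)
  let h : E →ₗ[K] E →ₗ[K] K :=
    LinearMap.mk₂ K (fun a c => s (x * (a * σ c)))
      (by intros; simp [add_mul, mul_add]) (by intros; simp)
      (by intros; simp [mul_add]) (by intros; simp)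
  have hh : ∀ a c, h a c = s (x * (a * σ c)) := fun _ _ => rfl
  refine ⟨h, ?_, ?_, ?_, ?_⟩
  · intro a ha
    have h1 : x * a = 0 := by
      apply hsnd
      intro c
      have := ha (σ c)
      rw [hh, hσ] at this
      rw [mul_assoc]; exact this
    refine hker _ fun i => ?_
    have h3 := congrArg (φ i) h1
    rw [map_mul, map_zero] at h3
    exact (mul_eq_zero.mp h3).resolve_left (hx0 i)
  · intro a c
    rw [hh, hh, show x * (c * σ a) = - σ (x * (a * σ c)) by simp [hσ, hx]; ring, map_neg, hsσ,
      neg_neg]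
  · intro a y z
    rw [hh, hh, map_mul σ, hσ]
    congr 1; ring
  · have hlt : ∀ i : Fin (ℓ - 1), (i : ℕ) < 2 * ℓ := fun i => by have := i.2; omega
    have hli' : LinearIndependent K (fun i : Fin (ℓ - 1) => x ^ (i : ℕ)) :=
      hli.comp (fun i : Fin (ℓ - 1) => (⟨i, hlt i⟩ : Fin (2 * ℓ)))
        (fun i j hij => by simpa [Fin.ext_iff] using hij)
    refine ⟨Submodule.span K (Set.range fun i : Fin (ℓ - 1) => x ^ (i : ℕ)), ?_, ?_⟩
    · rw [finrank_span_eq_card hli', Fintype.card_fin]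
    · intro w hw w' hw'
      induction hw using Submodule.span_induction with
      | zero => simp
      | add a c _ _ h1 h3 => simp [h1, h3]
      | smul r a _ h1 => simp [h1]
      | mem a ha =>
        obtain ⟨i, rfl⟩ := ha
        induction hw' using Submodule.span_induction with
        | zero => simp
        | add a c _ _ h1 h3 => simp [h1, h3]
        | smul r a _ h1 => simp [h1]
        | mem c hc =>
          obtain ⟨j, rfl⟩ := hc
          have hi := i.2
          have hj := j.2
          have : x * (x ^ (i : ℕ) * σ (x ^ (j : ℕ))) =
              ((-1 : K) ^ (j : ℕ)) • x ^ ((i : ℕ) + j + 1) := by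
            rw [map_pow, hx, neg_pow, Algebra.smul_def]
            simp only [map_pow, map_neg, map_one]
            ring
          simp only [hh]
          rw [this, map_smul, hs _ (by omega), if_neg (by omega), smul_zero]


/-- Let `K` be a field of characteristic `≠ 2`, `ℓ ≥ 1`, `E` a finite étale
commutative `K`-algebra of dimension `2ℓ`, and `σ` a `K`-linear algebra involution of `E` with
`dim_K E^σ = ℓ`.  Then there is a nondegenerate symmetric `K`-bilinear form `h` on `E` with
`h (a * x) y = h x (σ a * y)` for all `a, x, y`, admitting a totally isotropic subspace of
dimension `ℓ - 1` (Witt index at least `ℓ - 1`). -/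
theorem statement5 {K E : Type u} [Field K] [CommRing E] [Algebra K E]
    [FiniteDimensional K E] [Algebra.Etale K E]
    (hchar : ringChar K ≠ 2)
    (ℓ : ℕ) (hℓ : 1 ≤ ℓ)
    (hdim : Module.finrank K E = 2 * ℓ)
    (σ : E →ₐ[K] E) (hσ : ∀ x, σ (σ x) = x)
    (hfix : Module.finrank K (LinearMap.ker (σ.toLinearMap - LinearMap.id)) = ℓ) :
    ∃ h : E →ₗ[K] E →ₗ[K] K,
      (∀ x : E, (∀ y : E, h x y = 0) → x = 0) ∧
      (∀ x y : E, h x y = h y x) ∧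
      (∀ a x y : E, h (a * x) y = h x (σ a * y)) ∧
      ∃ W : Submodule K E, Module.finrank K W = ℓ - 1 ∧
        ∀ w ∈ W, ∀ w' ∈ W, h w w' = 0 := by
  have h2 : (2 : K) ≠ 0 := Ring.two_ne_zero hchar
  obtain ⟨φ, hφ, hker, htr⟩ := aux_split K E
  rcases finite_or_infinite K with hK | hK
  · let σe : E ≃ₐ[K] E := AlgEquiv.ofAlgHom σ σ (AlgHom.ext hσ) (AlgHom.ext hσ)
    have htσ : ∀ a, Algebra.trace K E (σ a) = Algebra.trace K E a :=
      fun a => Algebra.trace_eq_of_algEquiv σe a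
    let h : E →ₗ[K] E →ₗ[K] K :=
      LinearMap.mk₂ K (fun a c => Algebra.trace K E (a * σ c))
        (by intros; simp [add_mul]) (by intros; simp)
        (by intros; simp [mul_add]) (by intros; simp)
    have hh : ∀ a c, h a c = Algebra.trace K E (a * σ c) := fun _ _ => rfl
    have hsym : ∀ x y : E, h x y = h y x := by
      intro x y
      rw [hh, hh, ← htσ, map_mul σ, hσ, mul_comm]
    refine ⟨h, ?_, hsym, ?_, aux_fin ℓ hdim h hsym (ℓ - 1) le_rfl⟩
    · intro a ha
      apply htr
      intro c
      have := ha (σ c)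
      rwa [hh, hσ] at this
    · intro a y z
      rw [hh, hh, map_mul σ, hσ]
      congr 1; ring
  · obtain ⟨x, hx, hx0, hxi⟩ := aux_gen h2 ℓ hdim σ hσ hfix _ φ hφ hker
    exact aux_inf ℓ hℓ hdim σ hσ φ hker x hx hx0 hxi
end

section
/- Let K be a field of characteristic different from 2, let ℓ ≥ 1, let E be a finite étale commutative K-algebra of K-dimension 2ℓ, and let σ be a K-linear algebra involution of E with dim_K E^σ = ℓ. Let V be a 2ℓ-dimensional K-vector space and let f be a nondegenerate alternating K-bilinear form on V. Then there exists an injective K-algebra homomorphism ι : E → End_K(V) such that f(ι(a)x, y) = f(x, ι(σ(a))y) for all a ∈ E and x, y ∈ V. -/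
open Module in
theorem sympl_aux {K : Type*} [Field K] (n : ℕ) : ∀ {V W : Type u} [AddCommGroup V] [Module K V]
    [FiniteDimensional K V] [AddCommGroup W] [Module K W] [FiniteDimensional K W]
    (f : V →ₗ[K] V →ₗ[K] K) (g : W →ₗ[K] W →ₗ[K] K),
    finrank K V = n → finrank K W = n →
    (∀ x, f x x = 0) → (∀ x, (∀ y, f x y = 0) → x = 0) →
    (∀ x, g x x = 0) → (∀ x, (∀ y, g x y = 0) → x = 0) →
    ∃ φ : V →ₗ[K] W, ∀ x y, g (φ x) (φ y) = f x y := by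
  induction n using Nat.strong_induction_on with
  | _ n ih =>
  intro V W _ _ _ _ _ _ f g hV hW fa fn ga gn
  have key : ∀ {V : Type u} [AddCommGroup V] [Module K V] [FiniteDimensional K V]
      (f : V →ₗ[K] V →ₗ[K] K), finrank K V = n → n ≠ 0 →
      (∀ x, f x x = 0) → (∀ x, (∀ y, f x y = 0) → x = 0) →
      ∃ e d : V, f e d = 1 ∧ f d e = -1 ∧ ∃ p : V →ₗ[K] V,
        (∀ x, p x = x - f x d • e - f e x • d) ∧ 
        (∀ x, f e (p x) = 0 ∧ f d (p x) = 0) ∧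
        finrank K (LinearMap.ker ((f e).prod (f d))) + 2 = n ∧
        (∀ x : V, f e x = 0 → f d x = 0 → (∀ y, f e y = 0 → f d y = 0 → f x y = 0) → x = 0) := by
    intro V _ _ _ f hV hn fa fn
    have sk : ∀ x y, f x y = - f y x := by
      intro x y
      have := fa (x + y)
      simp only [map_add, LinearMap.add_apply, fa] at this
      linear_combination this
    have : Nontrivial V := by
      apply Module.nontrivial_of_finrank_pos (R := K); omega
    obtain ⟨e, he⟩ := exists_ne (0 : V)
    have : ∃ y, f e y ≠ 0 := by
      by_contra! h
      exact he (fn e h)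
    obtain ⟨y, hy⟩ := this
    have h1 : f e ((f e y)⁻¹ • y) = 1 := by simp [hy]
    set d := (f e y)⁻¹ • y
    have h2 : f d e = -1 := by rw [sk, h1]
    have hp : ∀ x, f e (x - f x d • e - f e x • d) = 0 ∧ f d (x - f x d • e - f e x • d) = 0 := by
      intro x
      simp only [map_sub, map_smul, fa, h1, h2, smul_eq_mul]
      refine ⟨by ring, ?_⟩
      rw [sk d x]; ring
    refine ⟨e, d, h1, h2, LinearMap.id - (f.flip d).smulRight e - (f e).smulRight d, ?_, ?_, ?_, ?_⟩
    · intro x; simp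
    · intro x; simpa using hp x
    · have := LinearMap.finrank_range_add_finrank_ker ((f e).prod (f d))
      have hs : LinearMap.range ((f e).prod (f d)) = ⊤ := by
        rw [LinearMap.range_eq_top]
        rintro ⟨a, b⟩
        refine ⟨a • d - b • e, ?_⟩
        simp [fa, h1, h2]
      rw [hs, finrank_top, Module.finrank_prod, Module.finrank_self] at this
      omega
    · intro x hx1 hx2 hx
      apply fn
      intro y
      have := hx _ (hp y).1 (hp y).2
      simp only [map_sub, map_smul, smul_eq_mul] at this
      rw [sk x e, sk x d, hx1, hx2] at this
      simpa using this
  by_cases hn : n = 0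
  · refine ⟨0, fun x y => ?_⟩
    have : Subsingleton V := by
      apply Module.finrank_zero_iff (R := K) |>.1; omega
    simp [Subsingleton.elim x 0]
  obtain ⟨e, d, h1, h2, p, hp, hp', hd, hnd⟩ := key f hV hn fa fn
  obtain ⟨e', d', h1', h2', -, -, -, hd', hnd'⟩ := key g hW hn ga gn
  set A := LinearMap.ker ((f e).prod (f d))
  set B := LinearMap.ker ((g e').prod (g d'))
  have hA : ∀ x, x ∈ A ↔ f e x = 0 ∧ f d x = 0 := by intro x; simp [A]
  have hB : ∀ x, x ∈ B ↔ g e' x = 0 ∧ g d' x = 0 := by intro x; simp [B]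
  obtain ⟨ψ, hψ⟩ := ih (n - 2) (by omega) (f.domRestrict₁₂ A A) (g.domRestrict₁₂ B B)
    (by omega) (by omega) (fun x => fa x) (by
      rintro ⟨x, hx⟩ h
      ext
      exact hnd x ((hA x).1 hx).1 ((hA x).1 hx).2 fun y h1 h2 => h ⟨y, (hA y).2 ⟨h1, h2⟩⟩)
    (fun x => ga x) (by
      rintro ⟨x, hx⟩ h
      ext
      exact hnd' x ((hB x).1 hx).1 ((hB x).1 hx).2 fun y h1 h2 => h ⟨y, (hB y).2 ⟨h1, h2⟩⟩)
  have skf : ∀ x y, f x y = - f y x := by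
    intro x y
    have := fa (x + y)
    simp only [map_add, LinearMap.add_apply, fa] at this
    linear_combination this
  have skg : ∀ x y, g x y = - g y x := by
    intro x y
    have := ga (x + y)
    simp only [map_add, LinearMap.add_apply, ga] at this
    linear_combination this
  let q : V →ₗ[K] A := p.codRestrict A (fun x => (hA _).2 (hp' x))
  refine ⟨(f.flip d).smulRight e' + (f e).smulRight d' + B.subtype ∘ₗ ψ ∘ₗ q, fun x y => ?_⟩
  have h3 : g (ψ (q x) : W) (ψ (q y) : W) = f (p x) (p y) := hψ (q x) (q y)
  have m : ∀ x, g e' (ψ (q x) : W) = 0 ∧ g d' (ψ (q x) : W) = 0 := fun x =>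
    (hB _).1 (ψ (q x)).2
  have m1 := skg (ψ (q x) : W) e'
  have m2 := skg (ψ (q x) : W) d'
  rw [(m x).1] at m1
  rw [(m x).2] at m2
  simp only [LinearMap.add_apply, LinearMap.smulRight_apply, LinearMap.comp_apply,
    LinearMap.flip_apply, Submodule.subtype_apply, map_add, map_smul, LinearMap.smul_apply,
    smul_eq_mul, h3, ga, h1', h2', (m x).1, (m y).1, (m x).2, (m y).2, m1, m2]
  rw [hp, hp]
  simp only [map_sub, LinearMap.sub_apply, map_smul, LinearMap.smul_apply,
    smul_eq_mul, fa, h1, h2]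
  rw [skf d y, skf x e]
  ring

theorem frob_aux {K A : Type*} [Field K] [CommRing A] [Algebra K A] [FiniteDimensional K A]
    [IsReduced A] : ∃ t : A →ₗ[K] K, ∀ x, (∀ y, t (x * y) = 0) → x = 0 := by
  classical
  have : IsArtinianRing A := IsArtinianRing.of_finite K A
  have ht : ∀ m : MaximalSpectrum A, ∃ t : (A ⧸ m.asIdeal) →ₗ[K] K, t 1 ≠ 0 := by
    intro m
    have : Nontrivial (A ⧸ m.asIdeal) := Ideal.Quotient.nontrivial_iff.2 m.isMaximal.ne_top
    by_contra! h
    exact one_ne_zero ((Module.forall_dual_apply_eq_zero_iff K (1 : A ⧸ m.asIdeal)).1 h)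
  choose t ht using ht
  have := Fintype.ofFinite (MaximalSpectrum A)
  refine ⟨∑ m, t m ∘ₗ (Ideal.Quotient.mkₐ K m.asIdeal).toLinearMap, fun x hx => ?_⟩
  by_contra h0
  have : ∃ m, IsArtinianRing.equivPi A x m ≠ 0 := by
    by_contra! h
    apply h0
    apply (IsArtinianRing.equivPi A).injective
    rw [map_zero]
    exact funext h
  obtain ⟨m, hm⟩ := this
  have := m.isMaximal
  letI := Ideal.Quotient.field m.asIdeal
  obtain ⟨y, hy⟩ := (IsArtinianRing.equivPi A).surjective
    (Pi.single m (IsArtinianRing.equivPi A x m)⁻¹)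
  have := hx y
  apply ht m
  rw [← this]
  have e : ∀ m', (Ideal.Quotient.mkₐ K m'.asIdeal) (x * y) = Pi.single (M := fun m : MaximalSpectrum A => A ⧸ m.asIdeal) m 1 m' := by
    intro m'
    change IsArtinianRing.equivPi A (x * y) m' = _
    rw [map_mul, hy]
    by_cases h : m' = m
    · subst h
      simp only [Pi.mul_apply, Pi.single_eq_same]
      exact mul_inv_cancel₀ hm
    · simp [Pi.single_eq_of_ne h]
  simp only [LinearMap.sum_apply, LinearMap.comp_apply, AlgHom.toLinearMap_apply, e]
  rw [Finset.sum_eq_single m]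
  · simp
  · intro b _ hb
    simp [Pi.single_eq_of_ne hb]
  · simp

open Module in
theorem skew_aux {K E : Type*} [Field K] [CommRing E] [Algebra K E]
    [FiniteDimensional K E] [IsReduced E] (h2 : (2 : K) ≠ 0)
    (ℓ : ℕ) (hdimE : Module.finrank K E = 2 * ℓ)
    (σ : E →ₐ[K] E) (hσ : ∀ x, σ (σ x) = x)
    (hfix : Module.finrank K (LinearMap.ker (σ.toLinearMap - LinearMap.id)) = ℓ) :
    ∃ u : E, σ u = -u ∧ ∀ x, u * x = 0 → x = 0 := by
  have : IsArtinianRing E := IsArtinianRing.of_finite K E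
  have sq : ∀ x : E, x * x = 0 → x = 0 := fun x hx => eq_zero_of_pow_eq_zero (n := 2) (by rw [pow_two, hx])
  have half : ∀ x : E, (2:K)⁻¹ • (x + x) = x := by
    intro x; rw [← two_smul K x, smul_smul, inv_mul_cancel₀ h2, one_smul]
  obtain ⟨u, hu, hmin⟩ := WellFounded.has_min
    (measure fun u : E => finrank K (LinearMap.ker (LinearMap.mulLeft K u))).wf
    {u | σ u = -u} ⟨0, by simp⟩
  simp only [Set.mem_ofPred_eq] at hu hmin
  have hc : ∃ c, (u * u) * (u * u) * c = u * u ∧ σ c = c := by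
    have : ∃ c, (u * u) * (u * u) * c = u * u := by
      obtain ⟨n, c, hc⟩ := IsArtinian.exists_pow_succ_smul_dvd (u * u) (1 : E)
      refine ⟨c, ?_⟩
      simp only [smul_eq_mul, mul_one] at hc
      have : (u * u * (1 - u * u * c)) ^ (n+1) = 0 := by
        have h : (u*u)^n * (1 - u * u * c) = 0 := by
          rw [pow_succ] at hc; linear_combination -hc
        rw [mul_pow, pow_succ, pow_succ]
        linear_combination (u * u) * (1 - u * u * c)^n * h
      have := eq_zero_of_pow_eq_zero this
      linear_combination -this
    obtain ⟨c, hc⟩ := this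
    have hc' := congrArg σ hc
    simp only [map_mul, hu] at hc'
    refine ⟨(2:K)⁻¹ • (c + σ c), ?_, ?_⟩
    · rw [mul_smul_comm, mul_add, hc]
      rw [show u * u * (u * u) * σ c = u * u by linear_combination hc', half]
    · rw [map_smul, map_add, hσ, add_comm]
  obtain ⟨c, hc, hσc⟩ := hc
  have hu0 : u * (1 - u * u * c) = 0 := by
    apply sq
    linear_combination -(1 - u * u * c) * hc
  have hgen : ∀ v, σ v = -v → v = u * (c * u * v) := by
    intro v hv
    by_contra hne
    set w := (1 - u * u * c) * v with hw
    have hw0 : w ≠ 0 := by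
      intro h; apply hne; rw [hw] at h; linear_combination h
    have huw : u * w = 0 := by rw [hw]; linear_combination v * hu0
    apply hmin (u + w)
    · rw [hw]; simp only [map_add, map_mul, map_sub, map_one, hu, hv, hσc]; ring
    · apply Submodule.finrank_lt_finrank_of_lt
      refine lt_of_le_of_ne ?_ ?_
      · intro x hx
        simp only [LinearMap.mem_ker, LinearMap.mulLeft_apply] at hx ⊢
        apply sq
        linear_combination u * x * hx - x * x * huw
      · intro h
        have : w ∈ LinearMap.ker (LinearMap.mulLeft K u) := by simpa using huw
        rw [← h] at this
        simp only [LinearMap.mem_ker, LinearMap.mulLeft_apply] at this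
        apply hw0
        apply sq
        linear_combination this - huw
  refine ⟨u, hu, ?_⟩
  set F := LinearMap.ker (σ.toLinearMap - LinearMap.id)
  set R := LinearMap.range (σ.toLinearMap - LinearMap.id)
  have hF : ∀ x, x ∈ F ↔ σ x = x := by
    intro x; simp [F, sub_eq_zero]
  have hR : ∀ x, σ x = -x ↔ x ∈ R := by
    intro x
    constructor
    · intro hx
      refine ⟨-((2:K)⁻¹ • x), ?_⟩
      simp only [LinearMap.sub_apply, AlgHom.toLinearMap_apply, LinearMap.id_apply, map_neg,
        map_smul, hx]
      have h := half x
      rw [← smul_neg, neg_sub, sub_neg_eq_add, h]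
    · rintro ⟨y, rfl⟩
      simp [hσ]
  let M : F →ₗ[K] R := ((LinearMap.mulLeft K u) ∘ₗ F.subtype).codRestrict R (by
    intro x
    rw [← hR]
    have := (hF x).1 x.2
    simp [hu, this])
  have hM : Function.Injective M := by
    rw [LinearMap.injective_iff_surjective_of_finrank_eq_finrank]
    · rintro ⟨v, hv⟩
      have hv := (hR v).2 hv
      refine ⟨⟨c * u * v, (hF _).2 (by simp [hσc, hu, hv])⟩, ?_⟩
      ext
      exact (hgen v hv).symm
    · have := LinearMap.finrank_range_add_finrank_ker (σ.toLinearMap - LinearMap.id)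
      change finrank K R + finrank K F = _ at this
      omega
  have hinj : ∀ x, σ x = x → u * x = 0 → x = 0 := by
    intro x hx h
    have : M ⟨x, (hF x).2 hx⟩ = M 0 := by ext; simpa [M] using h
    simpa using congrArg Subtype.val (hM this)
  intro x hx
  have hx' : u * σ x = 0 := by
    have := congrArg σ hx
    simp only [map_mul, hu, map_zero] at this
    linear_combination -this
  have h := hinj (x + σ x) (by simp [hσ, add_comm]) (by linear_combination hx + hx')
  have h3 := hgen x (by linear_combination h)
  rw [h3]
  linear_combination c * u * hx

/-- Let `K` be a field of characteristic `≠ 2`, `ℓ ≥ 1`, `E` a finite étale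
commutative `K`-algebra of dimension `2ℓ` with involution `σ` such that `dim_K E^σ = ℓ`.  Let `V`
be a `2ℓ`-dimensional `K`-vector space with a nondegenerate alternating bilinear form `f`.  Then
there is an injective `K`-algebra homomorphism `ι : E → End_K V` with
`f (ι a x) y = f x (ι (σ a) y)` for all `a ∈ E`, `x, y ∈ V`. -/
theorem statement6 {K E V : Type u} [Field K] [CommRing E] [Algebra K E]
    [FiniteDimensional K E] [Algebra.Etale K E]
    [AddCommGroup V] [Module K V] [FiniteDimensional K V]
    (hchar : ringChar K ≠ 2)
    (ℓ : ℕ) (hℓ : 1 ≤ ℓ)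
    (hdimE : Module.finrank K E = 2 * ℓ)
    (σ : E →ₐ[K] E) (hσ : ∀ x, σ (σ x) = x)
    (hfix : Module.finrank K (LinearMap.ker (σ.toLinearMap - LinearMap.id)) = ℓ)
    (hdimV : Module.finrank K V = 2 * ℓ)
    (f : V →ₗ[K] V →ₗ[K] K)
    (halt : ∀ x : V, f x x = 0)
    (hnd : ∀ x : V, (∀ y : V, f x y = 0) → x = 0) :
    ∃ ι : E →ₐ[K] Module.End K V, Function.Injective ι ∧
      ∀ (a : E) (x y : V), f (ι a x) y = f x (ι (σ a) y) := by
  have := Algebra.FormallyUnramified.isReduced_of_field K E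
  have h2 : (2 : K) ≠ 0 := Ring.two_ne_zero hchar
  obtain ⟨u, hu, hu0⟩ := skew_aux h2 ℓ hdimE σ hσ hfix
  let F : Subalgebra K E := AlgHom.equalizer σ (AlgHom.id K E)
  have hF : ∀ x, x ∈ F ↔ σ x = x := fun x => Iff.rfl
  have : IsReduced F := isReduced_of_injective F.val Subtype.val_injective
  obtain ⟨t, ht⟩ := frob_aux (K := K) (A := F)
  let D : E →ₗ[K] F := (LinearMap.mulLeft K u ∘ₗ (LinearMap.id - σ.toLinearMap)).codRestrict
    (Subalgebra.toSubmodule F) (by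
      intro x
      rw [Subalgebra.mem_toSubmodule, hF]
      simp only [LinearMap.comp_apply, LinearMap.mulLeft_apply, LinearMap.sub_apply,
        LinearMap.id_apply, AlgHom.toLinearMap_apply, map_mul, map_sub, hu, hσ]
      ring)
  have hD : ∀ x, (D x : E) = u * (x - σ x) := fun x => rfl
  let g : E →ₗ[K] E →ₗ[K] K := LinearMap.mk₂ K (fun x y => t (D (x * σ y)))
    (by intros; simp [add_mul]) (by intros; simp) (by intros; simp [mul_add]) (by intros; simp)
  have hg : ∀ x y, g x y = t (D (x * σ y)) := fun x y => rfl
  have ga : ∀ x, g x x = 0 := by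
    intro x
    rw [hg]
    have : D (x * σ x) = 0 := by
      ext
      rw [hD, map_mul, hσ]
      simp [mul_comm]
    rw [this, map_zero]
  have gn : ∀ x, (∀ y, g x y = 0) → x = 0 := by
    intro x hx
    have h1 : ∀ z, x * z = σ (x * z) := by
      intro z
      have : D (x * z) = 0 := by
        apply ht
        intro c
        rw [← hx (σ (z * c)), hg, hσ]
        congr 1
        ext
        have hc : σ (c : E) = c := c.2
        rw [hD, Subalgebra.coe_mul, hD]
        simp only [map_mul, hc]
        ring
      have := congrArg Subtype.val this
      rw [hD] at this
      exact sub_eq_zero.1 (hu0 _ this)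
    have h3 := h1 1
    have h4 := h1 u
    rw [mul_one] at h3
    rw [map_mul, ← h3, hu] at h4
    apply hu0
    have h5 : (2 : K) • (u * x) = 0 := by rw [two_smul]; linear_combination h4
    exact (smul_eq_zero.1 h5).resolve_left h2
  obtain ⟨φ, hφ⟩ := sympl_aux (2 * ℓ) g f hdimE hdimV ga gn halt hnd
  have hinj : Function.Injective φ := by
    rw [injective_iff_map_eq_zero]
    intro x hx
    apply gn
    intro y
    rw [← hφ, hx]; simp
  let e : E ≃ₗ[K] V := LinearEquiv.ofInjectiveOfFinrankEq φ hinj (by rw [hdimE, hdimV])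
  have he : ∀ x y, f (e x) (e y) = g x y := hφ
  refine ⟨(e.conjAlgEquiv K).toAlgHom.comp (Algebra.lmul K E), ?_, ?_⟩
  · intro a b hab
    have := (e.conjAlgEquiv K).injective hab
    exact Algebra.lmul_injective this
  · intro a x y
    obtain ⟨x, rfl⟩ := e.surjective x
    obtain ⟨y, rfl⟩ := e.surjective y
    have h : ∀ a x, ((e.conjAlgEquiv K).toAlgHom.comp (Algebra.lmul K E)) a (e x) = e (a * x) := by
      intro a x
      simp [LinearEquiv.conjAlgEquiv_apply]
    rw [h, h, he, he, hg, hg, map_mul σ, hσ]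
    congr 2
    ring
end

section
/- Let K be a field of characteristic different from 2, let ℓ ≥ 1, let E be a finite étale commutative K-algebra of K-dimension 2ℓ + 1, and let σ be a K-linear algebra involution of E with dim_K E^σ = ℓ + 1. Let V be a (2ℓ+1)-dimensional K-vector space and let f be a nondegenerate symmetric K-bilinear form on V that admits a totally isotropic subspace of dimension ℓ (i.e. f has Witt index ℓ). Then there exists an injective K-algebra homomorphism ι : E → End_K(V) such that f(ι(a)x, y) = f(x, ι(σ(a))y) for all a ∈ E and x, y ∈ V. -/
lemma nf_aux {K V : Type*} [Field K] [AddCommGroup V] [Module K V] [FiniteDimensional K V]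
    (h2 : (2:K) ≠ 0) (ℓ : ℕ) 
    (hdimV : Module.finrank K V = 2 * ℓ + 1)
    (f : V →ₗ[K] V →ₗ[K] K)
    (hsym : ∀ x y : V, f x y = f y x)
    (hnd : ∀ x : V, (∀ y : V, f x y = 0) → x = 0)
    (W : Submodule K V) (hWd : Module.finrank K W = ℓ) (hW : ∀ w ∈ W, ∀ w' ∈ W, f w w' = 0) :
    ∃ d : K, d ≠ 0 ∧ ∃ Ψ : ((Fin ℓ → K) × (Fin ℓ → K) × K) ≃ₗ[K] V,
      ∀ x y, f (Ψ x) (Ψ y) = x.1 ⬝ᵥ y.2.1 + x.2.1 ⬝ᵥ y.1 + d * x.2.2 * y.2.2 := by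
  classical
  have hN : LinearMap.BilinForm.Nondegenerate f :=
    ⟨fun x hx => hnd x hx, fun x hx => hnd x (fun y => by rw [hsym]; exact hx y)⟩
  have horth : ∀ U : Submodule K V, Module.finrank K (LinearMap.BilinForm.orthogonal f U)
      = 2 * ℓ + 1 - Module.finrank K U := fun U => by
    rw [← hdimV]; exact LinearMap.BilinForm.finrank_orthogonal hN U
  have hWW : W ≤ LinearMap.BilinForm.orthogonal f W := fun x hx y hy => hW y hy x hx
  obtain ⟨u, hu, huW⟩ : ∃ u ∈ LinearMap.BilinForm.orthogonal f W, u ∉ W := by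
    by_contra! h
    have := Submodule.finrank_mono (show LinearMap.BilinForm.orthogonal f W ≤ W from h)
    rw [horth, hWd] at this
    omega
  have hwu : ∀ w ∈ W, f w u = 0 := fun w hw => hu w hw
  have hd : f u u ≠ 0 := by
    intro h0
    have h1 : W ⊔ K ∙ u ≤ LinearMap.BilinForm.orthogonal f (W ⊔ K ∙ u) := by
      intro x hx y hy
      obtain ⟨a, ha, b, hb, rfl⟩ := Submodule.mem_sup.1 hx
      obtain ⟨a', ha', b', hb', rfl⟩ := Submodule.mem_sup.1 hy
      obtain ⟨s, rfl⟩ := Submodule.mem_span_singleton.1 hb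
      obtain ⟨s', rfl⟩ := Submodule.mem_span_singleton.1 hb'
      simp [hW a' ha' a ha, hwu a' ha', h0, hsym u a, hwu a ha]
    have h2 : W < W ⊔ K ∙ u := by
      refine lt_of_le_of_ne le_sup_left fun h => huW ?_
      rw [h]
      exact Submodule.mem_sup_right (Submodule.mem_span_singleton_self u)
    have h3 := Submodule.finrank_mono h1
    have h4 := Submodule.finrank_lt_finrank_of_lt h2
    rw [horth] at h3
    omega
  let w := Module.finBasisOfFinrankEq K W hWd
  let T : V →ₗ[K] (Fin ℓ → K) := LinearMap.pi fun i => f (w i)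
  have hTs : Function.Surjective T := by
    rw [← LinearMap.range_eq_top]
    apply Submodule.eq_top_of_finrank_eq
    have hk : LinearMap.ker T ≤ LinearMap.BilinForm.orthogonal f W := by
      intro x hx y hy
      have : ∀ i, f (w i) x = 0 := fun i => congrFun (LinearMap.mem_ker.1 hx) i
      have h5 := congrArg Subtype.val (w.sum_repr ⟨y, hy⟩)
      simp only [AddSubmonoidClass.coe_finsetSum, Submodule.coe_smul] at h5
      change f y x = 0; rw [← h5]
      simp [this]
    have h6 := Submodule.finrank_mono hk
    have h7 := LinearMap.finrank_range_add_finrank_ker T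
    have h8 := Submodule.finrank_le (LinearMap.range T)
    rw [horth] at h6
    simp only [Module.finrank_fin_fun] at h8 ⊢
    omega
  choose v0 hv0 using fun j : Fin ℓ => hTs (Pi.single j 1)
  have hv0' : ∀ i j, f (w i) (v0 j) = (Pi.single j 1 : Fin ℓ → K) i := fun i j => congrFun (hv0 j) i
  let v1 : Fin ℓ → V := fun j => v0 j - (f u (v0 j) / f u u) • u
  have hv1 : ∀ i j, f (w i) (v1 j) = (Pi.single j 1 : Fin ℓ → K) i := fun i j => by
    simp [v1, hv0', hwu _ (w i).2]
  have hv1u : ∀ j, f u (v1 j) = 0 := fun j => by simp [v1, hd]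
  let v2 : Fin ℓ → V := fun j => v1 j - (2:K)⁻¹ • ∑ k, f (v1 j) (v1 k) • (w k : V)
  have hww : ∀ i j, f (w i) (w j) = 0 := fun i j => hW _ (w i).2 _ (w j).2
  have hv2 : ∀ i j, f (w i) (v2 j) = (Pi.single j 1 : Fin ℓ → K) i := fun i j => by
    simp [v2, hv1, hww]
  have huw : ∀ i, f u (w i) = 0 := fun i => by rw [hsym]; exact hwu _ (w i).2
  have hv2u : ∀ j, f u (v2 j) = 0 := fun j => by simp [v2, hv1u, huw]
  have hv1' : ∀ i j, f (v1 j) (w i) = (Pi.single j 1 : Fin ℓ → K) i := fun i j => by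
    rw [hsym, hv1]
  have hvv : ∀ i j, f (v2 i) (v2 j) = 0 := fun i j => by
    simp only [v2, map_sub, map_smul, map_sum, LinearMap.sub_apply, LinearMap.smul_apply,
      LinearMap.sum_apply, hv1, hv1', hww, smul_eq_mul]
    simp [Pi.single_apply]
    rw [hsym (v1 j) (v1 i)]
    field_simp
    ring
  let A := Fintype.linearCombination K (fun i => (w i : V))
  let B := Fintype.linearCombination K v2
  have hAA : ∀ a b, f (A a) (A b) = 0 := fun a b => by
    simp [A, Fintype.linearCombination_apply, hww]
  have hBB : ∀ a b, f (B a) (B b) = 0 := fun a b => by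
    simp [B, Fintype.linearCombination_apply, hvv]
  have hAB : ∀ a b, f (A a) (B b) = a ⬝ᵥ b := fun a b => by
    simp [A, B, Fintype.linearCombination_apply, hv2, Pi.single_apply, dotProduct, mul_comm]
  have hBA : ∀ a b, f (B a) (A b) = a ⬝ᵥ b := fun a b => by
    rw [hsym, hAB, dotProduct_comm]
  have huA : ∀ a, f u (A a) = 0 := fun a => by
    simp [A, Fintype.linearCombination_apply, huw]
  have huB : ∀ a, f u (B a) = 0 := fun a => by
    simp [B, Fintype.linearCombination_apply, hv2u]
  have hAu : ∀ a, f (A a) u = 0 := fun a => by rw [hsym, huA]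
  have hBu : ∀ a, f (B a) u = 0 := fun a => by rw [hsym, huB]
  let Ψ0 : ((Fin ℓ → K) × (Fin ℓ → K) × K) →ₗ[K] V :=
    A.coprod (B.coprod (LinearMap.toSpanSingleton K V u))
  have hΨ : ∀ x y, f (Ψ0 x) (Ψ0 y) = x.1 ⬝ᵥ y.2.1 + x.2.1 ⬝ᵥ y.1 + f u u * x.2.2 * y.2.2 := by
    intro x y
    simp [Ψ0, hAA, hBB, hAB, hBA, huA, huB, hAu, hBu]
    ring
  have hinj : Function.Injective Ψ0 := by
    rw [← LinearMap.ker_eq_bot, LinearMap.ker_eq_bot']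
    intro x hx
    have h : ∀ y : (Fin ℓ → K) × (Fin ℓ → K) × K,
        x.1 ⬝ᵥ y.2.1 + x.2.1 ⬝ᵥ y.1 + f u u * x.2.2 * y.2.2 = 0 := fun y => by
      rw [← hΨ, hx]; simp
    refine Prod.ext (funext fun i => ?_) (Prod.ext (funext fun i => ?_) ?_)
    · simpa using h (0, Pi.single i 1, 0)
    · simpa using h (Pi.single i 1, 0, 0)
    · simpa [hd] using h (0, 0, 1)
  refine ⟨f u u, hd, LinearMap.linearEquivOfInjective Ψ0 hinj ?_, fun x y => ?_⟩
  · simp [hdimV]; ring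
  · exact hΨ x y

lemma transport {K E V : Type*} [Field K] [CommRing E] [Algebra K E]
    [FiniteDimensional K E] 
    [AddCommGroup V] [Module K V] [FiniteDimensional K V]
    (h2 : (2:K) ≠ 0) (ℓ : ℕ)
    (hdimE : Module.finrank K E = 2 * ℓ + 1)
    (σ : E →ₐ[K] E) (hσ : ∀ x, σ (σ x) = x)
    (hdimV : Module.finrank K V = 2 * ℓ + 1)
    (f : V →ₗ[K] V →ₗ[K] K)
    (hsym : ∀ x y : V, f x y = f y x)
    (hnd : ∀ x : V, (∀ y : V, f x y = 0) → x = 0)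
    (hW : ∃ W : Submodule K V, Module.finrank K W = ℓ ∧ ∀ w ∈ W, ∀ w' ∈ W, f w w' = 0)
    (s : E →ₗ[K] K) (hs : ∀ x, s (σ x) = s x)
    (hsnd : ∀ x : E, (∀ y : E, s (x * y) = 0) → x = 0)
    (hsW : ∃ W : Submodule K E, Module.finrank K W = ℓ ∧ ∀ w ∈ W, ∀ w' ∈ W, s (w * σ w') = 0) :
    ∃ ι : E →ₐ[K] Module.End K V, Function.Injective ι ∧
      ∀ (a : E) (x y : V), f (ι a x) y = f x (ι (σ a) y) := by
  obtain ⟨W, hWd, hW⟩ := hW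
  obtain ⟨W', hWd', hW'⟩ := hsW
  obtain ⟨d, hd, Ψ, hΨ⟩ := nf_aux h2 ℓ hdimV f hsym hnd W hWd hW
  let b : E →ₗ[K] E →ₗ[K] K := ((LinearMap.mul K E).compr₂ s).compl₂ σ.toLinearMap
  have hb : ∀ x y, b x y = s (x * σ y) := fun x y => rfl
  obtain ⟨d', hd', Φ, hΦ⟩ := nf_aux h2 ℓ hdimE b
    (fun x y => by rw [hb, hb, ← hs (x * σ y), map_mul, hσ, mul_comm])
    (fun x hx => hsnd x fun y => by rw [← hσ y, ← hb]; exact hx _) W' hWd' hW'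
  have hc : d / d' ≠ 0 := div_ne_zero hd hd'
  let D : ((Fin ℓ → K) × (Fin ℓ → K) × K) ≃ₗ[K] ((Fin ℓ → K) × (Fin ℓ → K) × K) :=
    (LinearEquiv.smulOfNeZero K _ (d / d') hc).prodCongr (LinearEquiv.refl K _)
  let g : E ≃ₗ[K] V := (Φ.symm.trans D).trans Ψ
  have hg : ∀ x y, f (g x) (g y) = d / d' * s (x * σ y) := by
    intro x y
    obtain ⟨x, rfl⟩ := Φ.surjective x
    obtain ⟨y, rfl⟩ := Φ.surjective y
    rw [← hb, hΦ]
    simp [g, hΨ, D]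
    field_simp
  refine ⟨(AlgEquiv.toAlgHom (g.conjAlgEquiv K)).comp (Algebra.lmul K E), ?_, ?_⟩
  · exact (g.conjAlgEquiv K).injective.comp Algebra.lmul_injective
  · intro a x y
    obtain ⟨x, rfl⟩ := g.surjective x
    obtain ⟨y, rfl⟩ := g.surjective y
    simp [LinearEquiv.conjAlgEquiv]
    rw [hg, hg, map_mul σ, hσ]
    ring_nf

lemma ff_isotropic {K V : Type*} [Field K] [Finite K] [AddCommGroup V] [Module K V] [FiniteDimensional K V]
    (hV : 3 ≤ Module.finrank K V) (f : V →ₗ[K] V →ₗ[K] K) : ∃ v : V, v ≠ 0 ∧ f v v = 0 := by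
  classical
  have := Fintype.ofFinite K
  obtain ⟨p, hp⟩ := CharP.exists K
  have := Fact.mk (CharP.char_is_prime K p)
  let b := Module.finBasis K V
  let q : MvPolynomial (Fin (Module.finrank K V)) K :=
    ∑ i, ∑ j, MvPolynomial.C (f (b i) (b j)) * (MvPolynomial.X i * MvPolynomial.X j)
  have hq : q.totalDegree < Fintype.card (Fin (Module.finrank K V)) := by
    rw [Fintype.card_fin]
    refine lt_of_le_of_lt (b := 2) ?_ (by omega)
    refine MvPolynomial.totalDegree_finsetSum_le fun i _ => 
      MvPolynomial.totalDegree_finsetSum_le fun j _ => ?_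
    refine (MvPolynomial.totalDegree_mul _ _).trans ?_
    rw [MvPolynomial.totalDegree_C, zero_add]
    refine (MvPolynomial.totalDegree_mul _ _).trans ?_
    simp
  have hev : ∀ x, MvPolynomial.eval x q = f (∑ i, x i • b i) (∑ i, x i • b i) := by
    intro x
    simp [q, Finset.mul_sum, LinearMap.sum_apply]
    rw [Finset.sum_comm]
    refine Finset.sum_congr rfl fun i _ => Finset.sum_congr rfl fun j _ => ?_
    ring
  have h := char_dvd_card_solutions p hq
  have h0 : MvPolynomial.eval 0 q = 0 := by rw [hev]; simp
  have h1 : 1 < Fintype.card {x // MvPolynomial.eval x q = 0} :=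
    lt_of_lt_of_le (Fact.out : p.Prime).one_lt
      (Nat.le_of_dvd (Fintype.card_pos_iff.2 ⟨⟨0, h0⟩⟩) h)
  obtain ⟨⟨x, hx⟩, hne⟩ := Fintype.exists_ne_of_one_lt_card h1 ⟨0, h0⟩
  refine ⟨∑ i, x i • b i, fun hz => hne (Subtype.ext (funext fun i => ?_)), by rw [← hev, hx]⟩
  exact Fintype.linearIndependent_iff.1 b.linearIndependent x hz i

lemma ff_isotropic_subspace {K V : Type*} [Field K] [Finite K] [AddCommGroup V] [Module K V]
    [FiniteDimensional K V] (f : V →ₗ[K] V →ₗ[K] K) (hsym : ∀ x y : V, f x y = f y x) (k : ℕ) :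
    ∀ U : Submodule K V, 2 * k + 1 ≤ Module.finrank K U →
    ∃ W : Submodule K V, W ≤ U ∧ Module.finrank K W = k ∧ ∀ w ∈ W, ∀ w' ∈ W, f w w' = 0 := by
  induction k with
  | zero => exact fun U _ => ⟨⊥, bot_le, by simp, by simp⟩
  | succ k ih =>
    intro U hU
    obtain ⟨⟨v, hvU⟩, hv0, hvv⟩ := ff_isotropic (K := K) (V := U) (by omega) (f.domRestrict₁₂ U U)
    have hv0 : v ≠ 0 := fun h => hv0 (Subtype.ext h)
    have hvv : f v v = 0 := hvv
    let U1 := U ⊓ LinearMap.ker (f v)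
    have hU1 : 2 * k + 2 ≤ Module.finrank K U1 := by
      have h1 := Submodule.finrank_sup_add_finrank_inf_eq U (LinearMap.ker (f v))
      have h2 := (f v).finrank_range_add_finrank_ker
      have h3 := Submodule.finrank_le (LinearMap.range (f v))
      have h4 := Submodule.finrank_le (U ⊔ LinearMap.ker (f v))
      rw [Module.finrank_self] at h3
      change _ ≤ Module.finrank K (U ⊓ LinearMap.ker (f v) : Submodule K V)
      omega
    obtain ⟨C, hC⟩ := Submodule.exists_isCompl (K ∙ v)
    let U2 := U1 ⊓ C
    have hU2 : 2 * k + 1 ≤ Module.finrank K U2 := by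
      have h1 := Submodule.finrank_sup_add_finrank_inf_eq U1 C
      have h2 := Submodule.finrank_add_eq_of_isCompl hC
      have h3 := Submodule.finrank_le (U1 ⊔ C)
      rw [finrank_span_singleton hv0] at h2
      change _ ≤ Module.finrank K (U1 ⊓ C : Submodule K V)
      omega
    obtain ⟨W, hWU, hWd, hW⟩ := ih U2 hU2
    have hvW : ∀ w ∈ W, f v w = 0 := fun w hw => (hWU hw).1.2
    refine ⟨W ⊔ K ∙ v, sup_le (fun w hw => (hWU hw).1.1) ?_, ?_, ?_⟩
    · rw [Submodule.span_singleton_le_iff_mem]; exact hvU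
    · have h1 := Submodule.finrank_sup_add_finrank_inf_eq W (K ∙ v)
      have h2 : W ⊓ (K ∙ v) = ⊥ := by
        refine le_bot_iff.1 ?_
        rw [← hC.symm.inf_eq_bot]
        exact inf_le_inf_right _ fun w hw => (hWU hw).2
      rw [h2, finrank_span_singleton hv0, finrank_bot] at h1
      omega
    · intro x hx y hy
      obtain ⟨a, ha, b, hb, rfl⟩ := Submodule.mem_sup.1 hx
      obtain ⟨a', ha', b', hb', rfl⟩ := Submodule.mem_sup.1 hy
      obtain ⟨s, rfl⟩ := Submodule.mem_span_singleton.1 hb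
      obtain ⟨s', rfl⟩ := Submodule.mem_span_singleton.1 hb'
      simp [hW a ha a' ha', hvW a' ha', hsym a v, hvW a ha, hvv]

lemma etale_trace_nondeg {K E : Type u} [Field K] [CommRing E] [Algebra K E]
    [FiniteDimensional K E] [Algebra.Etale K E] (x : E)
    (hx : ∀ y, Algebra.trace K E (x * y) = 0) : x = 0 := by
  classical
  obtain ⟨I, _, A, _, _, e, h⟩ := (Algebra.Etale.iff_exists_algEquiv_prod K E).1 inferInstance
  have := fun i => (h i).1
  have := fun i => (h i).2
  have := Fintype.ofFinite I
  apply e.injective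
  rw [map_zero]
  funext i
  apply (traceForm_nondegenerate K (A i)).1
  intro z
  rw [Algebra.traceForm_apply]
  have h1 := hx (e.symm (Pi.single i z))
  rw [← Algebra.trace_eq_of_algEquiv e, map_mul, e.apply_symm_apply] at h1
  rw [← h1, Algebra.trace_apply, Algebra.trace_apply]
  have h2 : Algebra.lmul K (∀ i, A i) (e x * Pi.single i z) =
      (LinearMap.single K A i ∘ₗ Algebra.lmul K (A i) (e x i * z)) ∘ₗ LinearMap.proj i := by
    ext j y k
    simp only [LinearMap.comp_apply, LinearMap.proj_apply, LinearMap.single_apply, Algebra.coe_lmul_eq_mul, LinearMap.mul_apply']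
    by_cases hk : k = i
    · subst hk; simp
    · simp [hk]
  rw [h2, LinearMap.trace_comp_comm']
  congr 1
  ext y
  simp

lemma etale_homs (K E : Type u) [Field K] [CommRing E] [Algebra K E]
    [FiniteDimensional K E] [Algebra.Etale K E] :
    ∃ (J : Type u) (_ : Fintype J) (φ : J → (E →ₐ[K] AlgebraicClosure K)),
      Function.Injective φ ∧ Fintype.card J = Module.finrank K E ∧
      ∀ x, (∀ j, φ j x = 0) → x = 0 := by
  classical
  obtain ⟨I, _, A, _, _, e, h⟩ := (Algebra.Etale.iff_exists_algEquiv_prod K E).1 inferInstance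
  have := fun i => (h i).1
  have := fun i => (h i).2
  have := Fintype.ofFinite I
  let φ : (Σ i, (A i →ₐ[K] AlgebraicClosure K)) → (E →ₐ[K] AlgebraicClosure K) := fun j =>
    (j.2.comp (Pi.evalAlgHom K A j.1)).comp e.toAlgHom
  have hφ : ∀ j x, φ j x = j.2 (e x j.1) := fun j x => rfl
  refine ⟨Σ i, (A i →ₐ[K] AlgebraicClosure K), inferInstance, φ, ?_, ?_, ?_⟩
  · rintro ⟨i, a⟩ ⟨j, b⟩ hab
    have hij : i = j := by
      by_contra hij
      have h1 := DFunLike.congr_fun hab (e.symm (Pi.single i 1))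
      rw [hφ, hφ, e.apply_symm_apply] at h1
      simp [Pi.single_eq_of_ne (Ne.symm hij)] at h1
    subst hij
    congr 1
    ext z
    have h1 := DFunLike.congr_fun hab (e.symm (Pi.single i z))
    rw [hφ, hφ, e.apply_symm_apply] at h1
    simpa using h1
  · rw [Fintype.card_sigma, e.toLinearEquiv.finrank_eq, Module.finrank_pi_fintype]
    exact Finset.sum_congr rfl fun i _ => AlgHom.card K (A i) _
  · intro x hx
    apply e.injective
    rw [map_zero]
    funext i
    have a : A i →ₐ[K] AlgebraicClosure K := IsAlgClosed.lift
    have := hx ⟨i, a⟩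
    rw [hφ] at this
    simpa using this

lemma avoid {K M N T : Type*} [Field K] [Infinite K] [AddCommGroup M] [Module K M]
    [AddCommGroup N] [Module K N] [Finite T] (g : T → (M →ₗ[K] N)) (hg : ∀ t, g t ≠ 0) :
    ∃ m, ∀ t, g t m ≠ 0 := by
  by_contra! h
  obtain ⟨t, ht⟩ := Subspace.exists_eq_top_of_iUnion_eq_univ (k := K)
    (p := fun t => LinearMap.ker (g t)) (by
      rw [Set.eq_univ_iff_forall]
      intro m
      obtain ⟨t, ht⟩ := h m
      exact Set.mem_iUnion.2 ⟨t, ht⟩)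
  exact hg t (LinearMap.ker_eq_top.1 ht)

lemma skew_gen {K E : Type u} [Field K] [Infinite K] [CommRing E] [Algebra K E]
    [FiniteDimensional K E] [Algebra.Etale K E] (h2 : (2:K) ≠ 0) (ℓ : ℕ) 
    (hdimE : Module.finrank K E = 2 * ℓ + 1)
    (σ : E →ₐ[K] E) (hσ : ∀ x, σ (σ x) = x)
    (hfix : Module.finrank K (LinearMap.ker (σ.toLinearMap - LinearMap.id)) = ℓ + 1) :
    ∃ α : E, σ α = - α ∧ ∀ p : Polynomial K, p.natDegree ≤ 2 * ℓ → Polynomial.aeval α p = 0 → p = 0 := by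
  classical
  obtain ⟨J, _, φ, hinj, hcard, hjoint⟩ := etale_homs K E
  set F := LinearMap.ker (σ.toLinearMap - LinearMap.id) with hF
  let M := LinearMap.ker (σ.toLinearMap + LinearMap.id)
  have memF : ∀ x, x ∈ F ↔ σ x = x := fun x => by simp [F, sub_eq_zero]
  have memM : ∀ x, x ∈ M ↔ σ x = -x := fun x => by simp [M, add_eq_zero_iff_eq_neg]
  have hMd : ℓ ≤ Module.finrank K M := by
    have h1 := LinearMap.finrank_range_add_finrank_ker (σ.toLinearMap - LinearMap.id)
    have h3 : LinearMap.range (σ.toLinearMap - LinearMap.id) ≤ M := by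
      rintro _ ⟨x, rfl⟩
      rw [memM]; simp [hσ]
    have h4 := Submodule.finrank_mono h3
    rw [← hF, hfix, hdimE] at h1
    omega
  -- restricted functionals
  let r : J → (M →ₗ[K] AlgebraicClosure K) := fun j => (φ j).toLinearMap ∘ₗ M.subtype
  have hr : ∀ j (x : M), r j x = φ j x := fun j x => rfl
  have hdecomp : ∀ x : E, (2:K)⁻¹ • (x + σ x) ∈ F ∧ (2:K)⁻¹ • (x - σ x) ∈ M ∧
      x = (2:K)⁻¹ • (x + σ x) + (2:K)⁻¹ • (x - σ x) := fun x => by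
    refine ⟨?_, ?_, ?_⟩
    · rw [memF, map_smul, map_add, hσ, add_comm]
    · rw [memM, map_smul, map_sub, hσ, ← smul_neg, neg_sub]
    · rw [← smul_add, add_add_sub_cancel, ← two_smul K x, smul_smul, inv_mul_cancel₀ h2, one_smul]
  have hext : ∀ j k, (∀ x ∈ F, φ j x = φ k x) → (∀ x ∈ M, φ j x = φ k x) → j = k := by
    intro j k h1 h3
    apply hinj
    ext x
    obtain ⟨ha, hb, hc⟩ := hdecomp x
    rw [hc, map_add, map_add, h1 _ ha, h3 _ hb]
  obtain ⟨β, hβ⟩ := avoid (T := {j // r j ≠ 0}) (fun j => r j.1) (fun j => j.2)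
  have hβ' : ∀ j, φ j β = 0 → ∀ x ∈ M, φ j x = 0 := by
    intro j hj x hx
    by_contra hne
    refine hβ ⟨j, fun h0 => hne ?_⟩ hj
    exact DFunLike.congr_fun h0 ⟨x, hx⟩
  have hσβ : σ β = -β := (memM _).1 β.2
  have hne : ∀ j k, j ≠ k → r j - r k ≠ 0 := by
    intro j k hjk h0
    have h0' : ∀ x ∈ M, φ j x = φ k x := fun x hx =>
      sub_eq_zero.1 (DFunLike.congr_fun h0 ⟨x, hx⟩)
    apply hjk
    by_cases hj : φ j β = 0
    · have hk : φ k β = 0 := by rw [← h0' _ β.2, hj]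
      let m : M →ₗ[K] E := LinearMap.mulLeft K (β : E) ∘ₗ M.subtype
      have hm : Function.Injective m := by
        rw [← LinearMap.ker_eq_bot, LinearMap.ker_eq_bot']
        rintro ⟨x, hx⟩ h
        have h : (β : E) * x = 0 := h
        refine Subtype.ext (hjoint x fun i => ?_)
        by_cases hi : φ i β = 0
        · exact hβ' i hi x hx
        · have := congrArg (φ i) h
          rw [map_mul, map_zero] at this
          exact (mul_eq_zero.1 this).resolve_left hi
      have hRF : LinearMap.range m ≤ F := by
        rintro _ ⟨x, rfl⟩
        rw [memF]
        change σ (β * x) = β * x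
        rw [map_mul, hσβ, (memM _).1 x.2, neg_mul_neg]
      have hR0 : ∀ x ∈ LinearMap.range m, φ j x = 0 ∧ φ k x = 0 := by
        rintro _ ⟨x, rfl⟩
        change φ j (β * x) = 0 ∧ φ k (β * x) = 0
        simp [hj, hk]
      have hF1 : LinearMap.range m ⊔ K ∙ (1:E) = F := by
        apply Submodule.eq_of_le_of_finrank_le
        · refine sup_le hRF ?_
          rw [Submodule.span_singleton_le_iff_mem, memF, map_one]
        · have h1 : LinearMap.range m < LinearMap.range m ⊔ K ∙ (1:E) := by
            refine lt_of_le_of_ne le_sup_left fun h => ?_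
            have : (1:E) ∈ LinearMap.range m := by
              rw [h]
              exact Submodule.mem_sup_right (Submodule.mem_span_singleton_self _)
            simpa using (hR0 _ this).1
          have h3 := Submodule.finrank_lt_finrank_of_lt h1
          rw [LinearMap.finrank_range_of_inj hm] at h3
          omega
      refine hext j k (fun x hx => ?_) h0'
      rw [← hF1] at hx
      obtain ⟨a, ha, b, hb, rfl⟩ := Submodule.mem_sup.1 hx
      obtain ⟨s, rfl⟩ := Submodule.mem_span_singleton.1 hb
      simp [(hR0 a ha).1, (hR0 a ha).2]
    · refine hext j k (fun x hx => ?_) h0'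
      have h1 : x * β ∈ M := by rw [memM, map_mul, (memF _).1 hx, hσβ, mul_neg]
      have h3 := h0' _ h1
      rw [map_mul, map_mul, ← h0' _ β.2] at h3
      exact mul_right_cancel₀ hj h3
  obtain ⟨α, hα⟩ := avoid (T := {t : J × J // t.1 ≠ t.2}) (fun t => r t.1.1 - r t.1.2)
    (fun t => hne _ _ t.2)
  refine ⟨α, (memM _).1 α.2, fun p hp hp0 => ?_⟩
  have hαinj : Function.Injective fun j => φ j α := by
    intro j k hjk
    by_contra hn
    exact hα ⟨(j, k), hn⟩ (sub_eq_zero.2 hjk)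
  have hmap : p.map (algebraMap K (AlgebraicClosure K)) = 0 := by
    refine Polynomial.eq_zero_of_natDegree_lt_card_of_eval_eq_zero _ hαinj (fun j => ?_) ?_
    · rw [Polynomial.eval_map_algebraMap, Polynomial.aeval_algHom_apply, hp0, map_zero]
    · rw [Polynomial.natDegree_map, hcard, hdimE]; omega
  exact (Polynomial.map_eq_zero _).1 hmap

open Polynomial in
lemma inf_form {K E : Type*} [Field K] [CommRing E] [Algebra K E]
    [FiniteDimensional K E] (ℓ : ℕ) 
    (hdimE : Module.finrank K E = 2 * ℓ + 1)
    (σ : E →ₐ[K] E) (α : E) (hα : σ α = -α)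
    (hp : ∀ p : Polynomial K, p.natDegree ≤ 2 * ℓ → Polynomial.aeval α p = 0 → p = 0) :
    ∃ s : E →ₗ[K] K, (∀ x, s (σ x) = s x) ∧ (∀ x : E, (∀ y : E, s (x * y) = 0) → x = 0) ∧ 
      ∃ W : Submodule K E, Module.finrank K W = ℓ ∧ ∀ w ∈ W, ∀ w' ∈ W, s (w * σ w') = 0 := by
  have hmem : ∀ (n : ℕ) (p : K[X]), p ∈ degreeLT K (n+1) ↔ p.natDegree ≤ n := fun n p => by
    rw [mem_degreeLT, degree_lt_iff_coeff_zero, natDegree_le_iff_coeff_eq_zero]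
    rfl
  let m : degreeLT K (2 * ℓ + 1) →ₗ[K] E := (aeval α).toLinearMap ∘ₗ (degreeLT K (2 * ℓ + 1)).subtype
  have hm : Function.Injective m := by
    rw [← LinearMap.ker_eq_bot, LinearMap.ker_eq_bot']
    rintro ⟨p, h⟩ h0
    exact Subtype.ext (hp p ((hmem _ _).1 h) h0)
  have hfd : ∀ n, Module.finrank K (degreeLT K n) = n := fun n => by
    rw [(degreeLTEquiv K n).finrank_eq, Module.finrank_fin_fun]
  have : ∀ n, FiniteDimensional K (degreeLT K n) := fun n => 
    Module.Finite.equiv (degreeLTEquiv K n).symm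
  let e := LinearMap.linearEquivOfInjective m hm (by rw [hfd, hdimE])
  have he : ∀ p, e p = aeval α (p : K[X]) := fun p => rfl
  let s : E →ₗ[K] K := (lcoeff K (2*ℓ)) ∘ₗ (degreeLT K (2 * ℓ + 1)).subtype ∘ₗ e.symm.toLinearMap
  have hs : ∀ p : K[X], p.natDegree ≤ 2 * ℓ → s (aeval α p) = p.coeff (2 * ℓ) := by
    intro p h
    have : aeval α p = e ⟨p, (hmem _ _).2 h⟩ := rfl
    rw [this]
    simp [s]
  have hsurj : ∀ x : E, ∃ p : K[X], p.natDegree ≤ 2 * ℓ ∧ aeval α p = x := fun x => by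
    obtain ⟨⟨p, h⟩, rfl⟩ := e.surjective x
    exact ⟨p, (hmem _ _).1 h, rfl⟩
  have hσp : ∀ p : K[X], σ (aeval α p) = aeval α (p.comp (-X)) := fun p => by
    rw [← aeval_algHom_apply, hα, aeval_comp]; simp
  have hdeg : ∀ p : K[X], (p.comp (-X)).natDegree = p.natDegree := fun p => by
    rw [natDegree_comp]; simp
  refine ⟨s, ?_, ?_, (degreeLT K ℓ).map (aeval α).toLinearMap, ?_, ?_⟩
  · intro x
    obtain ⟨p, h, rfl⟩ := hsurj x
    rw [hσp, hs _ (by rwa [hdeg]), hs _ h]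
    have : (-X : K[X]) = C (-1) * X := by simp
    rw [this, comp_C_mul_X_coeff]
    simp
  · intro x hx
    obtain ⟨p, h, rfl⟩ := hsurj x
    by_contra hne
    have hp0 : p ≠ 0 := fun h => hne (by simp [h])
    have h1 := hx (aeval α (X ^ (2 * ℓ - p.natDegree) : K[X]))
    rw [← map_mul, hs _ (by rw [natDegree_mul_X_pow _ hp0]; omega)] at h1
    have h3 := coeff_mul_X_pow p (2 * ℓ - p.natDegree) p.natDegree
    rw [Nat.add_sub_cancel' h, h1] at h3
    exact hp0 (leadingCoeff_eq_zero.1 h3.symm)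
  · have hle : degreeLT K ℓ ≤ degreeLT K (2 * ℓ + 1) := degreeLT_mono (by omega)
    have : Function.Injective ((aeval α).toLinearMap ∘ₗ (degreeLT K ℓ).subtype : _ →ₗ[K] E) := by
      intro a b hab
      have := @hm ⟨a, hle a.2⟩ ⟨b, hle b.2⟩ hab
      exact Subtype.ext (Subtype.mk.inj this)
    have h1 := LinearMap.finrank_range_of_inj this
    rwa [LinearMap.range_comp, Submodule.range_subtype, hfd] at h1
  · rintro _ ⟨p, h, rfl⟩ _ ⟨q, h', rfl⟩
    change s (aeval α p * σ (aeval α q)) = 0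
    cases ℓ with
    | zero => 
      have : p = 0 := by simpa [mem_degreeLT] using h
      simp [this]
    | succ k =>
    have h := (hmem _ _).1 h
    have h' := (hmem _ _).1 h'
    have hd : (p * q.comp (-X)).natDegree < 2 * (k + 1) := by
      refine lt_of_le_of_lt natDegree_mul_le ?_
      rw [hdeg]
      omega
    rw [hσp, ← map_mul, hs _ hd.le, coeff_eq_zero_of_natDegree_lt hd]

/-- Let `K` be a field of characteristic `≠ 2`, `ℓ ≥ 1`, `E` a finite étale
commutative `K`-algebra of dimension `2ℓ + 1` with involution `σ` such that
`dim_K E^σ = ℓ + 1`.  Let `V` be a `(2ℓ+1)`-dimensional `K`-vector space with a nondegenerate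
symmetric bilinear form `f` of Witt index `ℓ`.  Then there is an injective `K`-algebra
homomorphism `ι : E → End_K V` with `f (ι a x) y = f x (ι (σ a) y)`. -/
theorem statement7 {K E V : Type u} [Field K] [CommRing E] [Algebra K E]
    [FiniteDimensional K E] [Algebra.Etale K E]
    [AddCommGroup V] [Module K V] [FiniteDimensional K V]
    (hchar : ringChar K ≠ 2)
    (ℓ : ℕ) (hℓ : 1 ≤ ℓ)
    (hdimE : Module.finrank K E = 2 * ℓ + 1)
    (σ : E →ₐ[K] E) (hσ : ∀ x, σ (σ x) = x)
    (hfix : Module.finrank K (LinearMap.ker (σ.toLinearMap - LinearMap.id)) = ℓ + 1)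
    (hdimV : Module.finrank K V = 2 * ℓ + 1)
    (f : V →ₗ[K] V →ₗ[K] K)
    (hsym : ∀ x y : V, f x y = f y x)
    (hnd : ∀ x : V, (∀ y : V, f x y = 0) → x = 0)
    (hW : ∃ W : Submodule K V, Module.finrank K W = ℓ ∧ ∀ w ∈ W, ∀ w' ∈ W, f w w' = 0) :
    ∃ ι : E →ₐ[K] Module.End K V, Function.Injective ι ∧
      ∀ (a : E) (x y : V), f (ι a x) y = f x (ι (σ a) y) := by
  have h2 : (2:K) ≠ 0 := Ring.two_ne_zero hchar
  cases finite_or_infinite K with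
  | inl hK =>
    let b : E →ₗ[K] E →ₗ[K] K :=
      ((LinearMap.mul K E).compr₂ (Algebra.trace K E)).compl₂ σ.toLinearMap
    have hb : ∀ x y, b x y = Algebra.trace K E (x * σ y) := fun x y => rfl
    have hs : ∀ x, Algebra.trace K E (σ x) = Algebra.trace K E x := fun x =>
      Algebra.trace_eq_of_algEquiv
        (AlgEquiv.ofAlgHom σ σ (AlgHom.ext hσ) (AlgHom.ext hσ)) x
    obtain ⟨W, -, hWd, hW'⟩ := ff_isotropic_subspace b
      (fun x y => by rw [hb, hb, ← hs (x * σ y), map_mul σ, hσ, mul_comm]) ℓ ⊤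
      (by rw [finrank_top, hdimE])
    exact transport h2 ℓ hdimE σ hσ hdimV f hsym hnd hW (Algebra.trace K E) hs
      etale_trace_nondeg ⟨W, hWd, hW'⟩
  | inr hK =>
    obtain ⟨α, hα, hp⟩ := skew_gen h2 ℓ hdimE σ hσ hfix
    obtain ⟨s, h1, h3, h4⟩ := inf_form ℓ hdimE σ α hα hp
    exact transport h2 ℓ hdimE σ hσ hdimV f hsym hnd hW s h1 h3 h4
end

section
/- Let K be a field of characteristic different from 2, let ℓ ≥ 1, let E be a finite étale commutative K-algebra of K-dimension 2ℓ, and let σ be a K-linear algebra involution of E with dim_K E^σ = ℓ. Let V be a 2ℓ-dimensional K-vector space and let f be a nondegenerate symmetric K-bilinear form on V admitting a totally isotropic subspace of dimension ℓ − 1. Assume there exists an invertible b ∈ E with σ(b) = b such that the discriminants of φ_b and of f coincide in K^×/(K^×)², i.e. the determinants of Gram matrices of φ_b and of f (with respect to any bases) differ by a nonzero square of K. Then there exists an injective K-algebra homomorphism ι : E → End_K(V) such that f(ι(a)x, y) = f(x, ι(σ(a))y) for all a ∈ E and x, y ∈ V. -/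
universe u

section S8Aux
open Module

theorem s8_emb (K E : Type*) [Field K] [CommRing E] [Algebra K E]
    [FiniteDimensional K E] [Algebra.Etale K E] :
    ∃ τ : Fin (finrank K E) → (E →ₐ[K] AlgebraicClosure K), Function.Injective τ ∧
      ∀ x, (∀ i, τ i x = 0) → x = 0 := by
  classical
  let Ω := AlgebraicClosure K
  let A := TensorProduct K Ω E
  let e : A ≃ₐ[Ω] (PrimeSpectrum A → Ω) := Algebra.FormallyEtale.equivPiOfIsSepClosed Ω A
  have hfinA : Module.Finite Ω A := inferInstance
  have : IsArtinianRing A := IsArtinianRing.of_finite Ω A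
  have : Finite (PrimeSpectrum A) := inferInstance
  have := Fintype.ofFinite (PrimeSpectrum A)
  have hcard : Fintype.card (PrimeSpectrum A) = finrank K E := by
    have h1 := e.toLinearEquiv.finrank_eq
    rw [Module.finrank_fintype_fun_eq_card] at h1
    rw [← h1]
    exact Module.finrank_baseChange
  let g : Fin (finrank K E) ≃ PrimeSpectrum A := (Fintype.equivFinOfCardEq hcard).symm
  let inc : E →ₐ[K] A := Algebra.TensorProduct.includeRight
  let ev : PrimeSpectrum A → (A →ₐ[Ω] Ω) := fun p => (Pi.evalAlgHom Ω (fun _ => Ω) p).comp e.toAlgHom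
  refine ⟨fun i => ((ev (g i)).restrictScalars K).comp inc, ?_, ?_⟩
  · intro i j hij
    apply g.injective
    have h2 : ev (g i) = ev (g j) := by
      apply Algebra.TensorProduct.ext'
      intro a x
      have h3 : ∀ p, ev p (a ⊗ₜ[K] x) = a * ev p (inc x) := by
        intro p
        have : (a ⊗ₜ[K] x : A) = a • inc x := by
          change (a ⊗ₜ[K] x : TensorProduct K Ω E) = a • ((1 : Ω) ⊗ₜ[K] x)
          rw [TensorProduct.smul_tmul', smul_eq_mul, mul_one]
        rw [this, map_smul, smul_eq_mul]
      rw [h3, h3]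
      congr 1
      exact DFunLike.congr_fun hij x
    by_contra hne
    have h4 := DFunLike.congr_fun h2 (e.symm (Pi.single (g i) 1))
    simp [ev, Ne.symm hne] at h4
  · intro x hx
    have : inc x = 0 := by
      apply e.injective
      rw [map_zero]
      funext p
      have := hx (g.symm p)
      simpa [ev] using this
    have hinj : Function.Injective inc := by
      exact Algebra.TensorProduct.includeRight_injective (algebraMap K Ω).injective 
    exact hinj (by rw [this, map_zero])

theorem s8_gen {K N Ω : Type*} [Field K] [Infinite K] [AddCommGroup N] [Module K N]
    [AddCommGroup Ω] [Module K Ω] {ι : Type*} [Finite ι] (g : ι → N →ₗ[K] Ω) (hg : ∀ i, g i ≠ 0) :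
    ∃ x, ∀ i, g i x ≠ 0 := by
  by_contra h
  push Not at h
  obtain ⟨i, hi⟩ := Subspace.exists_eq_top_of_iUnion_eq_univ (p := fun i => LinearMap.ker (g i)) (by
    ext x
    simpa using h x)
  exact hg i (LinearMap.ker_eq_top.mp hi)
theorem s8_unit_of_inj {K E : Type*} [Field K] [CommRing E] [Algebra K E]
    [FiniteDimensional K E] (x : E) (h : ∀ y, x * y = 0 → y = 0) : IsUnit x := by
  have hi : Function.Injective (LinearMap.mulLeft K x) := by
    rw [injective_iff_map_eq_zero]
    intro y hy
    exact h y hy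
  obtain ⟨y, hy⟩ := LinearMap.injective_iff_surjective.mp hi 1
  exact IsUnit.of_mul_eq_one y hy

theorem s8_generic {K E : Type*} [Field K] [Infinite K] [CommRing E] [Algebra K E]
    [FiniteDimensional K E] [Algebra.Etale K E] (h2 : (2 : K) ≠ 0)
    (ℓ : ℕ) (hdimE : finrank K E = 2 * ℓ)
    (σ : E →ₐ[K] E) (hσ : ∀ x, σ (σ x) = x)
    (hfix : finrank K (LinearMap.ker (σ.toLinearMap - LinearMap.id)) = ℓ) :
    ∃ β : E, σ β = -β ∧ IsUnit β ∧ LinearIndependent K (fun i : Fin (2 * ℓ) => β ^ (i : ℕ)) := by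
  classical
  have hemb := s8_emb K E
  rw [hdimE] at hemb
  obtain ⟨τ, hτi, hτ⟩ := hemb
  set F := LinearMap.ker (σ.toLinearMap - LinearMap.id) with hF
  set N := LinearMap.ker (σ.toLinearMap + LinearMap.id) with hN
  have memF : ∀ x, x ∈ F ↔ σ x = x := by
    intro x; simp [hF, sub_eq_zero]
  have memN : ∀ x, x ∈ N ↔ σ x = -x := by
    intro x; simp [hN, add_eq_zero_iff_eq_neg]
  have half : ∀ x : E, (2⁻¹ : K) • (x + x) = x := by
    intro x
    rw [← two_smul K x, smul_smul, inv_mul_cancel₀ h2, one_smul]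
  have hdimN : finrank K N = ℓ := by
    have hr := LinearMap.finrank_range_add_finrank_ker (σ.toLinearMap + LinearMap.id)
    have : LinearMap.range (σ.toLinearMap + LinearMap.id) = F := by
      ext x
      rw [memF]
      constructor
      · rintro ⟨y, rfl⟩
        simp [hσ, add_comm]
      · intro hx
        refine ⟨(2⁻¹ : K) • x, ?_⟩
        simp only [LinearMap.add_apply, AlgHom.toLinearMap_apply, LinearMap.id_apply, map_smul, hx]
        exact half x
    rw [this, hfix, hdimE] at hr
    have : finrank K N = finrank K (LinearMap.ker (σ.toLinearMap + LinearMap.id)) := rfl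
    omega
  let g : Fin (2 * ℓ) → N →ₗ[K] AlgebraicClosure K := fun i => (τ i).toLinearMap.comp N.subtype
  obtain ⟨δ, hδ⟩ := s8_gen (fun i : {i // g i ≠ 0} => g i.1) (fun i => i.2)
  have hδ' : ∀ y ∈ N, (δ : E) * y = 0 → y = 0 := by
    intro y hy hxy
    apply hτ
    intro i
    by_cases hi : g i = 0
    · exact DFunLike.congr_fun hi ⟨y, hy⟩
    · have h1 := hδ ⟨i, hi⟩
      have h3 := congrArg (τ i) hxy
      rw [map_mul, map_zero] at h3
      exact (mul_eq_zero.mp h3).resolve_left h1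
  have hσδ : σ (δ : E) = -δ := (memN _).mp δ.2
  have hδu : IsUnit (δ : E) := by
    let m : N →ₗ[K] F := (LinearMap.mulLeft K (δ : E)).restrict (p := N) (q := F) (by
      intro y hy
      rw [memN] at hy
      rw [memF]
      simp [hy, hσδ])
    have hm : Function.Injective m := by
      rw [injective_iff_map_eq_zero]
      intro y hy
      have := congrArg Subtype.val hy
      exact Subtype.ext (hδ' y y.2 this)
    have hs := (LinearMap.injective_iff_surjective_of_finrank_eq_finrank (hdimN.trans hfix.symm)).mp hm
    obtain ⟨y, hy⟩ := hs ⟨1, (memF 1).mpr (map_one σ)⟩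
    exact IsUnit.of_mul_eq_one (y : E) (congrArg Subtype.val hy)
  have hτδ : ∀ i, τ i (δ : E) ≠ 0 := fun i => (hδu.map (τ i)).ne_zero
  let G : {p : Fin (2 * ℓ) × Fin (2 * ℓ) // p.1 ≠ p.2} ⊕ Fin (2 * ℓ) → N →ₗ[K] AlgebraicClosure K :=
    Sum.elim (fun p => g p.1.1 - g p.1.2) g
  obtain ⟨β, hβ⟩ := s8_gen G (by
    rintro (⟨⟨i, j⟩, hij⟩ | i)
    · intro h0
      apply hij
      apply hτi
      have hN' : ∀ y ∈ N, τ i y = τ j y := by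
        intro y hy
        have := DFunLike.congr_fun h0 ⟨y, hy⟩
        simpa [G, g, sub_eq_zero] using this
      have hF' : ∀ y ∈ F, τ i y = τ j y := by
        intro y hy
        have h5 := hN' ((δ : E) * y) (by
          rw [memF] at hy
          rw [memN, map_mul, hy, hσδ, neg_mul])
        rw [map_mul, map_mul, hN' δ δ.2] at h5
        exact mul_left_cancel₀ (hτδ j) h5
      ext y
      have hy : y = (2⁻¹ : K) • ((y + σ y) + (y - σ y)) := by
        conv_lhs => rw [← half y]
        congr 1; ring
      have ha := hF' (y + σ y) (by rw [memF, map_add, hσ, add_comm])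
      have hb := hN' (y - σ y) (by rw [memN, map_sub, hσ, neg_sub])
      change τ i y = τ j y
      rw [hy, map_smul, map_smul, map_add _ (y + σ y), map_add _ (y + σ y), ha, hb]
    · intro h0
      exact hτδ i (DFunLike.congr_fun h0 δ))
  refine ⟨β, (memN _).mp β.2, ?_, ?_⟩
  · apply s8_unit_of_inj (K := K)
    intro y hy
    apply hτ
    intro i
    have h3 := congrArg (τ i) hy
    rw [map_mul, map_zero] at h3
    exact (mul_eq_zero.mp h3).resolve_left (hβ (Sum.inr i))
  · rw [Fintype.linearIndependent_iff]
    intro a ha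
    have hinj : Function.Injective (fun i => τ i (β : E)) := by
      intro i j hij
      by_contra hne
      have := hβ (Sum.inl ⟨(i, j), hne⟩)
      apply this
      simpa [G, g, sub_eq_zero] using hij
    have := Matrix.eq_zero_of_mulVec_eq_zero (Matrix.det_vandermonde_ne_zero_iff.mpr hinj)
      (v := fun i => algebraMap K (AlgebraicClosure K) (a i)) (by
        funext j
        have := congrArg (τ j) ha
        simp only [map_sum, Algebra.smul_def, map_mul, AlgHom.commutes, map_pow, map_zero] at this
        simp only [Matrix.mulVec, dotProduct, Matrix.vandermonde_apply, Pi.zero_apply]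
        rw [← this]
        exact Finset.sum_congr rfl fun i _ => mul_comm _ _)
    intro i
    have h6 := congrFun this i
    simpa using h6
/-- twisted form -/
noncomputable def s8Form {K E : Type*} [Field K] [CommRing E] [Algebra K E] (σ : E →ₐ[K] E)
    (t : E →ₗ[K] K) : LinearMap.BilinForm K E :=
  LinearMap.mk₂ K (fun x y => t (x * σ y))
    (by intros; simp [add_mul]) (by intros; simp)
    (by intros; simp [mul_add]) (by intros; simp)

@[simp] theorem s8Form_apply {K E : Type*} [Field K] [CommRing E] [Algebra K E] (σ : E →ₐ[K] E)
    (t : E →ₗ[K] K) (x y : E) : s8Form σ t x y = t (x * σ y) := rfl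

theorem s8_det_sq {K E : Type*} [Field K] [CommRing E] [Algebra K E]
    [FiniteDimensional K E] (h2 : (2 : K) ≠ 0)
    (ℓ : ℕ) (hdimE : finrank K E = 2 * ℓ)
    (σ : E →ₐ[K] E)
    (hfix : finrank K (LinearMap.ker (σ.toLinearMap - LinearMap.id)) = ℓ)
    (β : E) (hβ : σ β = -β) (hβu : IsUnit β) (u : E) (hu : σ u = u) :
    ∃ c : K, LinearMap.det (LinearMap.mulLeft K u) = c ^ 2 := by
  set F := LinearMap.ker (σ.toLinearMap - LinearMap.id) with hF
  have memF : ∀ x, x ∈ F ↔ σ x = x := by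
    intro x; simp [hF, sub_eq_zero]
  have half : ∀ x : E, x + x = 0 → x = 0 := by
    intro x hx
    rw [← two_smul K x] at hx
    exact (smul_eq_zero.mp hx).resolve_left h2
  let e0 : (F × F) →ₗ[K] E := F.subtype.coprod ((LinearMap.mulLeft K β).comp F.subtype)
  have he0 : Function.Injective e0 := by
    rw [injective_iff_map_eq_zero]
    rintro ⟨⟨x, hx⟩, ⟨y, hy⟩⟩ h
    rw [memF] at hx hy
    have h1 : x + β * y = 0 := h
    have h3 : x - β * y = 0 := by
      have := congrArg σ h1
      rw [map_add, map_mul, hx, hy, hβ, map_zero] at this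
      rw [← this]; ring
    have hx0 : x = 0 := half x (by linear_combination h1 + h3)
    have hy0 : β * y = 0 := by rw [hx0, zero_add] at h1; exact h1
    have hy1 : y = 0 := hβu.mul_right_eq_zero.mp hy0
    simp [hx0, hy1]
  let e : (F × F) ≃ₗ[K] E := LinearEquiv.ofInjectiveOfFinrankEq e0 he0 (by
    rw [Module.finrank_prod, hfix, hdimE]; ring)
  let m : F →ₗ[K] F := (LinearMap.mulLeft K u).restrict (p := F) (q := F) (by
    intro y hy
    rw [memF] at hy ⊢
    simp [hy, hu])
  have hconj : LinearMap.mulLeft K u = e.toLinearMap ∘ₗ (m.prodMap m) ∘ₗ e.symm.toLinearMap := by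
    ext x
    obtain ⟨⟨x, y⟩, rfl⟩ := e.surjective x
    simp only [LinearMap.comp_apply, LinearEquiv.coe_coe, LinearEquiv.symm_apply_apply]
    change u * (x + β * y) = (u * x : E) + β * (u * y)
    ring
  refine ⟨LinearMap.det m, ?_⟩
  rw [hconj, LinearMap.det_conj, LinearMap.det_prodMap, sq]

theorem s8_inf {K E : Type*} [Field K] [Infinite K] [CommRing E] [Algebra K E]
    [FiniteDimensional K E] [Algebra.Etale K E] (h2 : (2 : K) ≠ 0)
    (ℓ : ℕ) (hℓ : 1 ≤ ℓ) (hdimE : finrank K E = 2 * ℓ)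
    (σ : E →ₐ[K] E) (hσ : ∀ x, σ (σ x) = x)
    (hfix : finrank K (LinearMap.ker (σ.toLinearMap - LinearMap.id)) = ℓ)
    (T : E →ₗ[K] K) (hT : ∀ x, T (σ x) = T x) (hTn : ∀ x, (∀ y, T (x * y) = 0) → x = 0)
    (bE : Basis (Fin (2 * ℓ)) K E) :
    ∃ t : E →ₗ[K] K, (∀ x, t (σ x) = t x) ∧ (∀ x, (∀ y, t (x * y) = 0) → x = 0) ∧
      (∃ c : K, (LinearMap.BilinForm.toMatrix bE (s8Form σ t)).det =
        c ^ 2 * (LinearMap.BilinForm.toMatrix bE (s8Form σ T)).det) ∧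
      ∃ W : Submodule K E, finrank K W = ℓ - 1 ∧ ∀ w ∈ W, ∀ w' ∈ W, s8Form σ t w w' = 0 := by
  classical
  obtain ⟨β, hβ, hβu, hli⟩ := s8_generic h2 ℓ hdimE σ hσ hfix
  have : Nonempty (Fin (2 * ℓ)) := ⟨⟨0, by omega⟩⟩
  let B : Basis (Fin (2 * ℓ)) K E := basisOfLinearIndependentOfCardEqFinrank hli (by simp [hdimE])
  have hB : ∀ i, B i = β ^ (i : ℕ) := fun i => by simp [B]
  let t' : E →ₗ[K] K := B.coord ⟨2 * ℓ - 1, by omega⟩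
  have ht' : ∀ i : ℕ, i < 2 * ℓ → t' (β ^ i) = if i = 2 * ℓ - 1 then 1 else 0 := by
    intro i hi
    have h1 := hB ⟨i, hi⟩
    simp only at h1
    rw [← h1]
    simp [t', Finsupp.single_apply]
  have ht'σ : ∀ x, t' (σ x) = - t' x := by
    have : t' ∘ₗ σ.toLinearMap = -t' := by
      apply B.ext
      intro i
      simp only [LinearMap.comp_apply, AlgHom.toLinearMap_apply, LinearMap.neg_apply, hB, map_pow, hβ]
      rcases Nat.even_or_odd (i : ℕ) with he | ho
      · rw [he.neg_pow, ht' _ i.2, if_neg, neg_zero]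
        rintro h
        obtain ⟨k, hk⟩ := he
        omega
      · rw [ho.neg_pow, map_neg]
    intro x
    exact DFunLike.congr_fun this x
  have ht'n : ∀ x, (∀ y, t' (x * y) = 0) → x = 0 := by
    intro x hx
    have key : ∀ k : ℕ, ∀ i : Fin (2 * ℓ), (i : ℕ) + k = 2 * ℓ - 1 → B.repr x i = 0 := by
      intro k
      induction k using Nat.strong_induction_on with
      | _ k ih =>
        intro i hi
        have h1 := hx (β ^ k)
        rw [← B.sum_repr x, Finset.sum_mul, map_sum, Finset.sum_eq_single i] at h1
        · rw [hB, smul_mul_assoc, ← pow_add, map_smul, ht' _ (by omega), if_pos hi] at h1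
          simpa using h1
        · intro j _ hj
          rcases lt_or_ge (j : ℕ) (i : ℕ) with hlt | hge
          · rw [hB, smul_mul_assoc, ← pow_add, map_smul, ht' _ (by omega), if_neg (by omega), smul_zero]
          · have hne : (j : ℕ) ≠ i := fun h => hj (Fin.ext h)
            rw [ih (2 * ℓ - 1 - j) (by omega) j (by omega)]
            simp
        · simp
    rw [← B.sum_repr x]
    apply Finset.sum_eq_zero
    intro i _
    rw [key (2 * ℓ - 1 - i) i (by omega), zero_smul]
  let t : E →ₗ[K] K := t' ∘ₗ LinearMap.mulLeft K β
  have ht : ∀ x, t x = t' (β * x) := fun x => rfl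
  have htσ : ∀ x, t (σ x) = t x := by
    intro x
    have h1 := ht'σ (β * x)
    rw [map_mul, hβ, neg_mul, map_neg, neg_inj] at h1
    exact h1
  have htn : ∀ x, (∀ y, t (x * y) = 0) → x = 0 := by
    intro x hx
    have := ht'n (β * x) (fun y => by rw [mul_assoc]; exact hx y)
    exact hβu.mul_right_eq_zero.mp this
  refine ⟨t, htσ, htn, ?_, ?_⟩
  · let D : E →ₗ[K] Dual K E := LinearMap.mk₂ K (fun u x => T (u * x))
      (by intros; simp [add_mul]) (by intros; simp)
      (by intros; simp [mul_add]) (by intros; simp)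
    have hD : Function.Injective D := by
      rw [injective_iff_map_eq_zero]
      intro u hu
      exact hTn u (fun y => DFunLike.congr_fun hu y)
    obtain ⟨u, hu⟩ := (LinearMap.injective_iff_surjective_of_finrank_eq_finrank
      (Subspace.dual_finrank_eq).symm).mp hD t
    have hu' : ∀ x, T (u * x) = t x := fun x => DFunLike.congr_fun hu x
    have hus : σ u = u := by
      rw [← sub_eq_zero]
      apply hTn
      intro y
      rw [sub_mul, map_sub, hu', sub_eq_zero, ← htσ, ← hu', ← hT (u * σ y), map_mul σ, hσ]
    obtain ⟨c, hc⟩ := s8_det_sq h2 ℓ hdimE σ hfix β hβ hβu u hus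
    refine ⟨c, ?_⟩
    have : s8Form σ t = (s8Form σ T).compLeft (LinearMap.mulLeft K u) := by
      ext x y
      simp [← hu', mul_assoc]
    rw [this, LinearMap.BilinForm.toMatrix_compLeft, Matrix.det_mul, Matrix.det_transpose,
      LinearMap.det_toMatrix, hc]
  · have hli2 : LinearIndependent K (fun i : Fin (ℓ - 1) => β ^ (i : ℕ)) :=
      hli.comp (fun i : Fin (ℓ - 1) => (⟨i, by omega⟩ : Fin (2 * ℓ))) (by
        intro i j hij
        simpa [Fin.ext_iff] using hij)
    refine ⟨Submodule.span K (Set.range fun i : Fin (ℓ - 1) => β ^ (i : ℕ)), ?_, ?_⟩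
    · rw [finrank_span_eq_card hli2, Fintype.card_fin]
    · intro w hw w' hw'
      induction hw using Submodule.span_induction with
      | zero => simp
      | add x y _ _ hx hy => rw [map_add, LinearMap.add_apply, hx, hy, add_zero]
      | smul a x _ hx => rw [map_smul, LinearMap.smul_apply, hx, smul_zero]
      | mem x hx =>
        obtain ⟨i, rfl⟩ := hx
        induction hw' using Submodule.span_induction with
        | zero => simp
        | add x y _ _ hx hy => rw [map_add, hx, hy, add_zero]
        | smul a x _ hx => rw [map_smul, hx, smul_zero]
        | mem x hx =>
          obtain ⟨j, rfl⟩ := hx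
          have h0 : t' (β * (β ^ (i : ℕ) * β ^ (j : ℕ))) = 0 := by
            rw [← pow_add, ← pow_succ', ht' _ (by omega), if_neg (by omega)]
          simp only [s8Form_apply, map_pow, hβ, ht]
          rcases Nat.even_or_odd (j : ℕ) with h | h
          · rw [h.neg_pow, h0]
          · rw [h.neg_pow, mul_neg, mul_neg, map_neg, h0, neg_zero]
theorem s8_gram {K V ι κ : Type*} [Field K] [AddCommGroup V] [Module K V]
    [Fintype ι] [DecidableEq ι] [Fintype κ] [DecidableEq κ]
    (b : Basis ι K V) (c : Basis κ K V) (f : LinearMap.BilinForm K V) :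
    ∃ s : K, s ≠ 0 ∧ (LinearMap.BilinForm.toMatrix c f).det =
      s ^ 2 * (LinearMap.BilinForm.toMatrix b f).det := by
  let e : κ ≃ ι := c.indexEquiv b
  let c' := c.reindex e
  have h1 := LinearMap.BilinForm.toMatrix_mul_basis_toMatrix b c' f
  have h3 : (LinearMap.BilinForm.toMatrix c' f).det = (LinearMap.BilinForm.toMatrix c f).det := by
    rw [← Matrix.det_submatrix_equiv_self e]
    congr 1
    ext i j
    simp [c', LinearMap.BilinForm.toMatrix_apply]
  refine ⟨(b.toMatrix c').det, ?_, ?_⟩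
  · intro h0
    have h4 := congrArg Matrix.det (b.toMatrix_mul_toMatrix_flip c')
    rw [Matrix.det_mul, h0, zero_mul, Matrix.det_one] at h4
    exact zero_ne_one h4
  · rw [← h3, ← h1, Matrix.det_mul, Matrix.det_mul, Matrix.det_transpose]
    ring

theorem s8_nd {K V : Type*} [Field K] [AddCommGroup V] [Module K V]
    (f : LinearMap.BilinForm K V) (hsym : ∀ x y, f x y = f y x)
    (hnd : ∀ x, (∀ y, f x y = 0) → x = 0) : f.Nondegenerate := by
  refine ⟨hnd, ?_⟩
  intro x hx
  exact hnd x (fun y => by rw [hsym]; exact hx y)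

theorem s8_fin_iso {K V : Type*} [Field K] [Finite K] [AddCommGroup V] [Module K V]
    [FiniteDimensional K V] (hchar : ringChar K ≠ 2) (h2 : (2 : K) ≠ 0)
    (ℓ : ℕ) (hdimV : finrank K V = 2 * ℓ)
    (f : LinearMap.BilinForm K V) (hsym : ∀ x y, f x y = f y x)
    (hnd : ∀ x, (∀ y, f x y = 0) → x = 0) (k : ℕ) (hk : k ≤ ℓ - 1) :
    ∃ W : Submodule K V, finrank K W = k ∧ ∀ w ∈ W, ∀ w' ∈ W, f w w' = 0 := by
  classical
  have := Fintype.ofFinite K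
  induction k with
  | zero => exact ⟨⊥, by simp, by simp⟩
  | succ k ih =>
    obtain ⟨W, hW, hiso⟩ := ih (by omega)
    have hP := LinearMap.BilinForm.finrank_orthogonal (s8_nd f hsym hnd) W
    set P := f.orthogonal W with hPdef
    obtain ⟨C, hC⟩ := Submodule.exists_isCompl W
    have hC1 := Submodule.finrank_add_eq_of_isCompl hC
    have h3 := Submodule.finrank_sup_add_finrank_inf_eq P C
    have h4 := Submodule.finrank_le (P ⊔ C)
    set U := P ⊓ C with hU
    have hU3 : 3 ≤ finrank K U := by omega
    let _ := invertibleOfNonzero h2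
    obtain ⟨v, hv⟩ := LinearMap.BilinForm.exists_orthogonal_basis
      (B := f.restrict U) ⟨fun x y => hsym x y⟩
    let i0 : Fin (finrank K U) := ⟨0, by omega⟩
    let i1 : Fin (finrank K U) := ⟨1, by omega⟩
    let i2 : Fin (finrank K U) := ⟨2, by omega⟩
    have h01 : f (v i0) (v i1) = 0 := hv (i := i0) (j := i1) (by simp [i0, i1])
    have h02 : f (v i0) (v i2) = 0 := hv (i := i0) (j := i2) (by simp [i0, i2])
    have h12 : f (v i1) (v i2) = 0 := hv (i := i1) (j := i2) (by simp [i1, i2])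
    have hex : ∃ u : U, u ≠ 0 ∧ f u u = 0 := by
      by_cases ha0 : f (v i0) (v i0) = 0
      · exact ⟨v i0, v.ne_zero _, ha0⟩
      by_cases ha1 : f (v i1) (v i1) = 0
      · exact ⟨v i1, v.ne_zero _, ha1⟩
      obtain ⟨x, y, hxy⟩ := FiniteField.exists_root_sum_quadratic
        (f := Polynomial.C (f (v i0) (v i0)) * Polynomial.X ^ 2)
        (g := Polynomial.C (f (v i1) (v i1)) * Polynomial.X ^ 2 + Polynomial.C (f (v i2) (v i2)))
        (Polynomial.degree_C_mul_X_pow 2 ha0)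
        (by
          rw [Polynomial.degree_add_C, Polynomial.degree_C_mul_X_pow 2 ha1]
          · rfl
          · rw [Polynomial.degree_C_mul_X_pow 2 ha1]; decide)
        (FiniteField.odd_card_of_char_ne_two hchar)
      simp only [Polynomial.eval_add, Polynomial.eval_mul, Polynomial.eval_C, Polynomial.eval_pow,
        Polynomial.eval_X] at hxy
      refine ⟨x • v i0 + y • v i1 + v i2, ?_, ?_⟩
      · intro h0
        have := congrArg (fun z => v.repr z i2) h0
        simp [i0, i1, i2] at this
      · have h10 : f (v i1) (v i0) = 0 := by rw [hsym]; exact h01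
        have h20 : f (v i2) (v i0) = 0 := by rw [hsym]; exact h02
        have h21 : f (v i2) (v i1) = 0 := by rw [hsym]; exact h12
        simp only [Submodule.coe_add, Submodule.coe_smul, map_add, map_smul, LinearMap.add_apply,
          LinearMap.smul_apply, h01, h02, h12, h10, h20, h21, smul_eq_mul]
        linear_combination hxy
    obtain ⟨⟨u, huU⟩, hu0, huu⟩ := hex
    have huP : ∀ w ∈ W, f w u = 0 := LinearMap.BilinForm.mem_orthogonal_iff.mp huU.1
    have huW : u ∉ W := by
      intro h
      apply hu0
      have : u ∈ W ⊓ C := ⟨h, huU.2⟩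
      rw [hC.inf_eq_bot] at this
      exact Subtype.ext ((Submodule.mem_bot K).mp this)
    refine ⟨W ⊔ Submodule.span K {u}, ?_, ?_⟩
    · rw [Submodule.finrank_sup_span_singleton huW, hW]
    · intro w hw w' hw'
      obtain ⟨p, hp, q, hq, rfl⟩ := Submodule.mem_sup.mp hw
      obtain ⟨p', hp', q', hq', rfl⟩ := Submodule.mem_sup.mp hw'
      obtain ⟨r, rfl⟩ := Submodule.mem_span_singleton.mp hq
      obtain ⟨r', rfl⟩ := Submodule.mem_span_singleton.mp hq'
      have : f u p' = 0 := by rw [hsym]; exact huP p' hp'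
      simp [hiso p hp p' hp', huP p hp, huu, this]

theorem s8_std {K V : Type*} [Field K] [AddCommGroup V] [Module K V]
    [FiniteDimensional K V] (h2 : (2 : K) ≠ 0)
    (m : ℕ) (hdimV : finrank K V = 2 * (m + 1))
    (f : LinearMap.BilinForm K V) (hsym : ∀ x y, f x y = f y x)
    (hnd : ∀ x, (∀ y, f x y = 0) → x = 0)
    (W : Submodule K V) (hW : finrank K W = m) (hiso : ∀ w ∈ W, ∀ w' ∈ W, f w w' = 0) :
    ∃ (B : Basis ((Fin m ⊕ Fin m) ⊕ Fin 2) K V) (a d : K),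
      LinearMap.BilinForm.toMatrix B f =
        Matrix.fromBlocks (Matrix.fromBlocks 0 1 1 0) 0 0 (Matrix.diagonal ![a, d]) := by
  classical
  let w : Basis (Fin m) K W := Module.finBasisOfFinrankEq K W hW
  have hww : ∀ i j, f (w i) (w j) = 0 := fun i j => hiso _ (w i).2 _ (w j).2
  -- dual vectors
  have hfs : Function.Surjective f := by
    have hfi : Function.Injective f := by
      rw [injective_iff_map_eq_zero]
      intro x hx
      exact hnd x (fun y => DFunLike.congr_fun hx y)
    exact (LinearMap.injective_iff_surjective_of_finrank_eq_finrank
      (Subspace.dual_finrank_eq).symm).mp hfi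
  have hz0 : ∀ i, ∃ z : V, ∀ j, f z (w j) = if i = j then 1 else 0 := by
    intro i
    obtain ⟨g, hg⟩ := LinearMap.exists_extend (w.coord i)
    obtain ⟨z, hz⟩ := hfs g
    refine ⟨z, fun j => ?_⟩
    rw [hz]
    have := DFunLike.congr_fun hg (w j)
    simp only [LinearMap.comp_apply, Submodule.subtype_apply] at this
    rw [this]
    simp [Finsupp.single_apply, eq_comm]
  choose z hz using hz0
  let z' : Fin m → V := fun i => z i - (2⁻¹ : K) • ∑ j, f (z i) (z j) • (w j : V)
  have hz'w : ∀ i j, f (z' i) (w j) = if i = j then 1 else 0 := by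
    intro i j
    simp [z', hz, hww]
  have hwz' : ∀ i j, f (w j) (z' i) = if i = j then 1 else 0 := by
    intro i j
    rw [hsym, hz'w]
  have hwz : ∀ i j, f (w j) (z i) = if i = j then 1 else 0 := by
    intro i j
    rw [hsym, hz]
  have hz'z' : ∀ i k, f (z' i) (z' k) = 0 := by
    intro i k
    have h1 : f (z' i) (z' k) = f (z' i) (z k) - 2⁻¹ * f (z k) (z i) := by
      conv_lhs => rw [show z' k = z k - (2⁻¹ : K) • ∑ j, f (z k) (z j) • (w j : V) from rfl]
      simp [hz'w]
    rw [h1]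
    have h3 : f (z' i) (z k) = f (z i) (z k) - 2⁻¹ * f (z i) (z k) := by
      simp [z', hwz]
    rw [h3, hsym (z k) (z i)]
    field_simp
    ring
  let wz : Fin m ⊕ Fin m → V := Sum.elim (fun i => (w i : V)) z'
  have hwzli : LinearIndependent K wz := by
    rw [Fintype.linearIndependent_iff]
    intro c hc
    simp only [Fintype.sum_sum_type, wz, Sum.elim_inl, Sum.elim_inr] at hc
    rintro (i | i)
    · have := congrArg (f (z' i)) hc
      simpa [hz'w, hz'z'] using this
    · have := congrArg (f (w i)) hc
      simpa [hww, hwz'] using this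
  let H := Submodule.span K (Set.range wz)
  have hH : finrank K H = 2 * m := by
    rw [finrank_span_eq_card hwzli]; simp; ring
  have hU : finrank K (f.orthogonal H) = 2 := by
    rw [LinearMap.BilinForm.finrank_orthogonal (s8_nd f hsym hnd), hH, hdimV]; omega
  let _ := invertibleOfNonzero h2
  obtain ⟨v0, hv0⟩ := LinearMap.BilinForm.exists_orthogonal_basis
      (B := f.restrict (f.orthogonal H)) ⟨fun x y => hsym x y⟩
  let v := v0.reindex (finCongr hU)
  have hv : ∀ i j, i ≠ j → f (v i) (v j) = 0 := by
    intro i j hij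
    have := hv0 (i := (finCongr hU).symm i) (j := (finCongr hU).symm j) (by simpa using hij)
    simpa [v] using this
  have hwzv : ∀ i j, f (wz i) (v j) = 0 := fun i j =>
    LinearMap.BilinForm.mem_orthogonal_iff.mp (v j).2 _ (Submodule.subset_span ⟨i, rfl⟩)
  have hvwz : ∀ i j, f (v j) (wz i) = 0 := fun i j => by rw [hsym]; exact hwzv i j
  let b : (Fin m ⊕ Fin m) ⊕ Fin 2 → V := Sum.elim wz (fun i => (v i : V))
  have hbli : LinearIndependent K b := by
    rw [Fintype.linearIndependent_iff]
    intro c hc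
    rw [Fintype.sum_sum_type] at hc
    simp only [b, Sum.elim_inl, Sum.elim_inr] at hc
    have h1 : ∀ i, c (Sum.inl i) = 0 := by
      rintro (i | i)
      · have h3 := congrArg (f (z' i)) hc
        have h4 : ∀ j, f (z' i) (v j) = 0 := hwzv (Sum.inr i)
        simpa [Fintype.sum_sum_type, wz, hz'w, hz'z', h4] using h3
      · have h3 := congrArg (f (w i)) hc
        have h4 : ∀ j, f (w i) (v j) = 0 := hwzv (Sum.inl i)
        simpa [Fintype.sum_sum_type, wz, hww, hwz', h4] using h3
    rintro (i | i)
    · exact h1 i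
    · simp only [h1, zero_smul, Finset.sum_const_zero, zero_add] at hc
      have hvli : LinearIndependent K (fun i => (v i : V)) :=
        v.linearIndependent.map' (Submodule.subtype _) (Submodule.ker_subtype _)
      exact Fintype.linearIndependent_iff.mp hvli (fun i => c (Sum.inr i)) hc i
  let B := basisOfLinearIndependentOfCardEqFinrank hbli (by simp [hdimV]; ring)
  have hB : ∀ i, B i = b i := fun i => by simp [B]
  refine ⟨B, f (v 0) (v 0), f (v 1) (v 1), ?_⟩
  ext i j
  rw [LinearMap.BilinForm.toMatrix_apply, hB, hB]
  rcases i with (i | i) | i <;> rcases j with (j | j) | j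
  · simpa [b, wz] using hww i j
  · simp [b, wz, hwz', Matrix.one_apply, eq_comm]
  · simpa [b, wz] using hwzv (Sum.inl i) j
  · simp [b, wz, hz'w, Matrix.one_apply]
  · simpa [b, wz] using hz'z' i j
  · simpa [b, wz] using hwzv (Sum.inr i) j
  · simpa [b, wz] using hvwz (Sum.inl j) i
  · simpa [b, wz] using hvwz (Sum.inr j) i
  · fin_cases i <;> fin_cases j <;> simp [b, hv]

theorem s8_isom {K E V : Type*} [Field K] [AddCommGroup V] [Module K V]
    [FiniteDimensional K V] [AddCommGroup E] [Module K E] [FiniteDimensional K E]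
    (h2 : (2 : K) ≠ 0) (ℓ : ℕ) (hℓ : 1 ≤ ℓ)
    (hdimV : finrank K V = 2 * ℓ) (hdimE : finrank K E = 2 * ℓ)
    (f : LinearMap.BilinForm K V) (hsym : ∀ x y, f x y = f y x)
    (hnd : ∀ x, (∀ y, f x y = 0) → x = 0)
    (W : Submodule K V) (hW : finrank K W = ℓ - 1) (hiso : ∀ w ∈ W, ∀ w' ∈ W, f w w' = 0)
    (g : LinearMap.BilinForm K E) (gsym : ∀ x y, g x y = g y x)
    (gnd : ∀ x, (∀ y, g x y = 0) → x = 0)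
    (W' : Submodule K E) (hW' : finrank K W' = ℓ - 1) (hiso' : ∀ w ∈ W', ∀ w' ∈ W', g w w' = 0)
    {n : ℕ} (bE : Basis (Fin n) K E) (bV : Basis (Fin n) K V) (c : K)
    (hc : (LinearMap.BilinForm.toMatrix bE g).det =
      c ^ 2 * (LinearMap.BilinForm.toMatrix bV f).det) :
    ∃ (e : E ≃ₗ[K] V) (r : K), ∀ x y, f (e x) (e y) = r * g x y := by
  obtain ⟨m, rfl⟩ : ∃ m, ℓ = m + 1 := ⟨ℓ - 1, by omega⟩
  obtain ⟨B, a, d, hB⟩ := s8_std h2 m hdimV f hsym hnd W hW hiso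
  obtain ⟨B', a', d', hB'⟩ := s8_std h2 m hdimE g gsym gnd W' hW' hiso'
  obtain ⟨s, hs, hs'⟩ := s8_gram B bV f
  obtain ⟨s1, hs1, hs1'⟩ := s8_gram bE B' g
  have hf0 := (LinearMap.BilinForm.nondegenerate_iff_det_ne_zero B).mp (s8_nd f hsym hnd)
  have hg0 := (LinearMap.BilinForm.nondegenerate_iff_det_ne_zero B').mp (s8_nd g gsym gnd)
  rw [hc, hs'] at hs1'
  rw [hB, Matrix.det_fromBlocks_zero₂₁, Matrix.det_diagonal, Fin.prod_univ_two] at hf0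
  rw [hB', Matrix.det_fromBlocks_zero₂₁, Matrix.det_diagonal, Fin.prod_univ_two] at hg0
  rw [hB, hB', Matrix.det_fromBlocks_zero₂₁, Matrix.det_diagonal, Fin.prod_univ_two,
    Matrix.det_fromBlocks_zero₂₁, Matrix.det_diagonal, Fin.prod_univ_two] at hs1'
  simp only [Matrix.cons_val_zero, Matrix.cons_val_one] at hf0 hg0 hs1'
  set κ := (Matrix.fromBlocks (0 : Matrix (Fin m) (Fin m) K) 1 1 (0 : Matrix (Fin m) (Fin m) K)).det
  have hκ : κ ≠ 0 := left_ne_zero_of_mul hf0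
  have had := right_ne_zero_of_mul hf0
  have had' := right_ne_zero_of_mul hg0
  have ha := left_ne_zero_of_mul had
  have ha' := left_ne_zero_of_mul had'
  have key : a' * d' = (s1 * c * s) ^ 2 * (a * d) := by
    apply mul_left_cancel₀ hκ
    linear_combination hs1'
  set q := s1 * c * s with hq
  have hq0 : q ≠ 0 := by
    intro h
    rw [h] at key
    apply had'
    rw [key]; ring
  let lam : Kˣ := Units.mk0 (a / a') (div_ne_zero ha ha')
  let r : Kˣ := Units.mk0 (q * a / a') (div_ne_zero (mul_ne_zero hq0 ha) ha')
  let wt : (Fin m ⊕ Fin m) ⊕ Fin 2 → Kˣ := Sum.elim (Sum.elim (fun _ => lam) (fun _ => 1)) ![1, r]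
  let B'' := B.unitsSMul wt
  let e : E ≃ₗ[K] V := B'.equiv B'' (Equiv.refl _)
  refine ⟨e, a / a', ?_⟩
  have hext : f.comp e.toLinearMap e.toLinearMap = (a / a') • g := by
    apply LinearMap.BilinForm.ext_basis B'
    intro i j
    have h1 := congrFun (congrFun hB i) j
    have h3 := congrFun (congrFun hB' i) j
    rw [LinearMap.BilinForm.toMatrix_apply] at h1 h3
    simp only [LinearMap.BilinForm.comp_apply, LinearEquiv.coe_coe, e, Basis.equiv_apply,
      Equiv.refl_apply, B'', Basis.unitsSMul_apply, Units.smul_def, map_smul, LinearMap.smul_apply,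
      smul_eq_mul]
    rw [h1, h3]
    rcases i with (i | i) | i <;> rcases j with (j | j) | j
    · simp
    · simp [wt, lam]
    · simp
    · simp [wt, lam]
    · simp
    · simp
    · simp
    · simp
    · fin_cases i <;> fin_cases j <;> simp [wt, r]
      · field_simp
      · field_simp
        linear_combination -key
  intro x y
  exact DFunLike.congr_fun (DFunLike.congr_fun hext x) y

end S8Aux

/-- Let `K` be a field of characteristic `≠ 2`, `ℓ ≥ 1`, `E` a finite étale
commutative `K`-algebra of dimension `2ℓ` with involution `σ`, `dim_K E^σ = ℓ`.  Let `V` be a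
`2ℓ`-dimensional `K`-vector space with a nondegenerate symmetric bilinear form `f` of Witt index
`≥ ℓ - 1`.  If there is an invertible `b ∈ E` with `σ b = b` such that the discriminants of
`φ_b` and `f` agree in `K^× / (K^×)²` (determinants of Gram matrices differ by a nonzero
square), then there is an injective `K`-algebra homomorphism `ι : E → End_K V` with
`f (ι a x) y = f x (ι (σ a) y)`. -/
theorem statement8 {K E V : Type u} [Field K] [CommRing E] [Algebra K E]
    [FiniteDimensional K E] [Algebra.Etale K E]
    [AddCommGroup V] [Module K V] [FiniteDimensional K V]
    (hchar : ringChar K ≠ 2)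
    (ℓ : ℕ) (hℓ : 1 ≤ ℓ)
    (hdimE : Module.finrank K E = 2 * ℓ)
    (σ : E →ₐ[K] E) (hσ : ∀ x, σ (σ x) = x)
    (hfix : Module.finrank K (LinearMap.ker (σ.toLinearMap - LinearMap.id)) = ℓ)
    (hdimV : Module.finrank K V = 2 * ℓ)
    (f : V →ₗ[K] V →ₗ[K] K)
    (hsym : ∀ x y : V, f x y = f y x)
    (hnd : ∀ x : V, (∀ y : V, f x y = 0) → x = 0)
    (hW : ∃ W : Submodule K V, Module.finrank K W = ℓ - 1 ∧ ∀ w ∈ W, ∀ w' ∈ W, f w w' = 0)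
    (b : E) (hb : IsUnit b) (hbs : σ b = b)
    (hdisc : ∃ (bE : Module.Basis (Fin (2 * ℓ)) K E) (bV : Module.Basis (Fin (2 * ℓ)) K V) (c : K),
      c ≠ 0 ∧
        (Matrix.of fun i j => Algebra.trace K E (bE i * b * σ (bE j))).det =
          c ^ 2 * (Matrix.of fun i j => f (bV i) (bV j)).det) :
    ∃ ι : E →ₐ[K] Module.End K V, Function.Injective ι ∧
      ∀ (a : E) (x y : V), f (ι a x) y = f x (ι (σ a) y) := by
  have h2 : (2 : K) ≠ 0 := Ring.two_ne_zero hchar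
  obtain ⟨W, hWdim, hWiso⟩ := hW
  obtain ⟨bE, bV, c, hc, hdet⟩ := hdisc
  let T : E →ₗ[K] K := Algebra.trace K E ∘ₗ LinearMap.mulLeft K b
  have hTa : ∀ x, T x = Algebra.trace K E (b * x) := fun x => rfl
  let σe : E ≃ₐ[K] E := AlgEquiv.ofAlgHom σ σ (AlgHom.ext hσ) (AlgHom.ext hσ)
  have hT : ∀ x, T (σ x) = T x := by
    intro x
    rw [hTa, hTa, ← Algebra.trace_eq_of_algEquiv σe (b * x)]
    congr 1
    change b * σ x = σ (b * x)
    rw [map_mul, hbs]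
  have formsym : ∀ t : E →ₗ[K] K, (∀ x, t (σ x) = t x) →
      ∀ x y, s8Form σ t x y = s8Form σ t y x := by
    intro t ht x y
    rw [s8Form_apply, s8Form_apply, ← ht (x * σ y), map_mul σ, hσ, mul_comm]
  have hm1 : (Matrix.of fun i j => Algebra.trace K E (bE i * b * σ (bE j))) =
      LinearMap.BilinForm.toMatrix bE (s8Form σ T) := by
    ext i j
    rw [LinearMap.BilinForm.toMatrix_apply, s8Form_apply, hTa, Matrix.of_apply]
    congr 1
    ring
  have hm2 : (Matrix.of fun i j => f (bV i) (bV j)) = LinearMap.BilinForm.toMatrix bV f := by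
    ext i j
    rw [LinearMap.BilinForm.toMatrix_apply, Matrix.of_apply]
  rw [hm1, hm2] at hdet
  have hf0 := (LinearMap.BilinForm.nondegenerate_iff_det_ne_zero bV).mp (s8_nd f hsym hnd)
  have hTnd : (s8Form σ T).Nondegenerate := by
    rw [LinearMap.BilinForm.nondegenerate_iff_det_ne_zero bE, hdet]
    exact mul_ne_zero (pow_ne_zero 2 hc) hf0
  have hTn : ∀ x, (∀ y, T (x * y) = 0) → x = 0 := fun x hx => hTnd.1 x (fun y => hx (σ y))
  have hmain : ∃ t : E →ₗ[K] K, (∀ x, t (σ x) = t x) ∧ (∀ x, (∀ y, t (x * y) = 0) → x = 0) ∧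
      (∃ c : K, (LinearMap.BilinForm.toMatrix bE (s8Form σ t)).det =
        c ^ 2 * (LinearMap.BilinForm.toMatrix bE (s8Form σ T)).det) ∧
      ∃ W : Submodule K E, Module.finrank K W = ℓ - 1 ∧
        ∀ w ∈ W, ∀ w' ∈ W, s8Form σ t w w' = 0 := by
    rcases finite_or_infinite K with hK | hK
    · exact ⟨T, hT, hTn, ⟨1, by ring⟩, s8_fin_iso hchar h2 ℓ hdimE _ (formsym T hT)
        hTnd.1 (ℓ - 1) le_rfl⟩
    · exact s8_inf h2 ℓ hℓ hdimE σ hσ hfix T hT hTn bE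
  obtain ⟨t, ht, htn, ⟨c', hc'⟩, W', hW'dim, hW'iso⟩ := hmain
  obtain ⟨e, r, he⟩ := s8_isom h2 ℓ hℓ hdimV hdimE f hsym hnd W hWdim hWiso (s8Form σ t)
    (formsym t ht) (fun x hx => htn x (fun y => by
      have := hx (σ y)
      rwa [s8Form_apply, hσ] at this)) W' hW'dim hW'iso bE bV (c' * c)
    (by rw [hc', hdet]; ring)
  refine ⟨(e.conjAlgEquiv K).toAlgHom.comp (Algebra.lmul K E), ?_, ?_⟩
  · exact (e.conjAlgEquiv K).injective.comp Algebra.lmul_injective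
  · intro a x y
    obtain ⟨x, rfl⟩ := e.surjective x
    obtain ⟨y, rfl⟩ := e.surjective y
    have h1 : ∀ a z, ((e.conjAlgEquiv K).toAlgHom.comp (Algebra.lmul K E)) a (e z) = e (a * z) := by
      intro a z
      simp [LinearEquiv.conjAlgEquiv]
    rw [h1, h1, he, he, s8Form_apply, s8Form_apply, map_mul σ, hσ]
    congr 2
    ring
end

section
/- Let K be a field of characteristic different from 2, let L be a separable quadratic field extension of K with nontrivial K-automorphism ρ, let E be an n-dimensional finite étale commutative L-algebra, and let σ be a ring involution of E that is ρ-semilinear (σ(λx) = ρ(λ)σ(x) for λ ∈ L, x ∈ E). Let V = L^n and let h be a nondegenerate hermitian ρ-sesquilinear form on V (h is L-linear in the first variable, ρ-semilinear in the second, and h(y,x) = ρ(h(x,y))) that admits a totally isotropic L-subspace of dimension ⌊n/2⌋. Then there exists an injective L-algebra homomorphism ι : E → End_L(V) such that h(ι(a)x, y) = h(x, ι(σ(a))y) for all a ∈ E and x, y ∈ V. -/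
def GoodAlg (K F : Type*) [Field K] [CommRing F] [Algebra K F] : Prop :=
  ∃ (s : F →ₗ[K] K) (W : Submodule K F) (v : F), (∀ x, (∀ y, s (x*y) = 0) → x = 0) ∧
    Module.finrank K W = Module.finrank K F / 2 ∧
    (∀ w ∈ W, ∀ w' ∈ W, s (w*w') = 0) ∧ (∀ w ∈ W, s (w*v) = 0) ∧
    s (v*v) = ((Module.finrank K F % 2 : ℕ) : K)

theorem GoodAlg.of_field (K F : Type*) [Field K] [Field F] [Algebra K F] [FiniteDimensional K F]
    [Algebra.IsSeparable K F] : GoodAlg K F := by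
  classical
  let pb := Field.powerBasisOfFiniteOfSeparable K F
  have hd : Module.finrank K F = pb.dim := pb.finrank
  have hpos : 0 < pb.dim := pb.dim_pos
  let s : F →ₗ[K] K := pb.basis.coord ⟨pb.dim - 1, by omega⟩
  have hs : ∀ k, k < pb.dim → s (pb.gen ^ k) = if k = pb.dim - 1 then 1 else 0 := by
    intro k hk
    have : pb.gen ^ k = pb.basis ⟨k, hk⟩ := by simp
    rw [this]
    simp only [s, Module.Basis.coord_apply, Module.Basis.repr_self, Finsupp.single_apply, Fin.mk.injEq]
  have hli : LinearIndependent K (fun i : Fin (pb.dim / 2) => pb.gen ^ (i : ℕ)) := by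
    have := pb.basis.linearIndependent.comp
      (fun i : Fin (pb.dim / 2) => (⟨i, by omega⟩ : Fin pb.dim)) (by
        intro a b hab; simpa [Fin.ext_iff] using hab)
    simpa [Function.comp_def] using this
  refine ⟨s, Submodule.span K (Set.range (fun i : Fin (pb.dim / 2) => pb.gen ^ (i : ℕ))),
    if pb.dim % 2 = 1 then pb.gen ^ (pb.dim / 2) else 0, ?_, ?_, ?_, ?_, ?_⟩
  · intro x hx
    by_contra h0
    have := hx (x⁻¹ * pb.gen ^ (pb.dim - 1))
    rw [mul_inv_cancel_left₀ h0, hs _ (by omega)] at this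
    simp at this
  · rw [finrank_span_eq_card hli, hd]; simp
  · intro w hw w' hw'
    induction hw, hw' using Submodule.span_induction₂ with
    | mem_mem x y hx hy =>
      obtain ⟨i, rfl⟩ := hx
      obtain ⟨j, rfl⟩ := hy
      simp only [← pow_add]
      rw [hs _ (by omega), if_neg (by omega)]
    | zero_left => simp
    | zero_right => simp
    | add_left x y z _ _ _ h1 h2 => simp [add_mul, h1, h2]
    | add_right x y z _ _ _ h1 h2 => simp [mul_add, h1, h2]
    | smul_left r x y _ _ h => simp [h]
    | smul_right r x y _ _ h => simp [h]
  · intro w hw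
    split_ifs with ho
    · induction hw using Submodule.span_induction with
      | mem x hx =>
        obtain ⟨i, rfl⟩ := hx
        simp only [← pow_add]
        rw [hs _ (by omega), if_neg (by omega)]
      | zero => simp
      | add x y _ _ h1 h2 => simp [add_mul, h1, h2]
      | smul r x _ h => simp [h]
    · simp
  · rw [hd]
    split_ifs with ho
    · rw [← pow_add, hs _ (by omega), if_pos (by omega), ho]; simp
    · have : pb.dim % 2 = 0 := by omega
      simp [this]

theorem GoodAlg.prod {K F G : Type*} [Field K] [CommRing F] [Algebra K F] [FiniteDimensional K F]
    [CommRing G] [Algebra K G] [FiniteDimensional K G] (hF : GoodAlg K F) (hG : GoodAlg K G) :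
    GoodAlg K (F × G) := by
  obtain ⟨s, W, v, hn, hW, hi, ho, hv⟩ := hF
  obtain ⟨s', W', v', hn', hW', hi', ho', hv'⟩ := hG
  have hdim : Module.finrank K (F × G) = Module.finrank K F + Module.finrank K G :=
    Module.finrank_prod
  have hWW : Module.finrank K (W.prod W') = Module.finrank K W + Module.finrank K W' := by
    have h1 : LinearMap.range (W.subtype.prodMap W'.subtype) = W.prod W' := by
      rw [LinearMap.range_prodMap, Submodule.range_subtype, Submodule.range_subtype]
    rw [← h1, LinearMap.finrank_range_of_inj, Module.finrank_prod]
    exact Function.Injective.prodMap W.injective_subtype W'.injective_subtype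
  by_cases hodd : Module.finrank K F % 2 = 1 ∧ Module.finrank K G % 2 = 1
  · rw [hodd.1] at hv
    rw [hodd.2] at hv'
    have hnot : ((v, v') : F × G) ∉ W.prod W' := by
      intro hm
      have := hi v hm.1 v hm.1
      rw [hv] at this; simp at this
    refine ⟨s.comp (LinearMap.fst K F G) - s'.comp (LinearMap.snd K F G),
      W.prod W' ⊔ Submodule.span K {(v, v')}, 0, ?_, ?_, ?_, ?_, ?_⟩
    · rintro ⟨x, x'⟩ hx
      ext
      · exact hn x fun y => by simpa using hx (y, 0)
      · exact hn' x' fun y => by simpa using hx (0, y)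
    · have h0 : ((v, v') : F × G) ≠ 0 := fun h => hnot (h ▸ Submodule.zero_mem _)
      have hinf : W.prod W' ⊓ Submodule.span K {(v, v')} = ⊥ :=
        ((Submodule.disjoint_span_singleton_of_notMem hnot)).eq_bot
      have := Submodule.finrank_sup_add_finrank_inf_eq (W.prod W') (Submodule.span K {(v, v')})
      rw [hinf, finrank_bot, finrank_span_singleton h0, hWW] at this
      omega
    · intro w hw w' hw'
      obtain ⟨⟨a, a'⟩, ⟨ha, ha'⟩, z, hz, rfl⟩ := Submodule.mem_sup.1 hw
      obtain ⟨⟨b, b'⟩, ⟨hb, hb'⟩, y, hy, rfl⟩ := Submodule.mem_sup.1 hw'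
      obtain ⟨p, rfl⟩ := Submodule.mem_span_singleton.1 hz
      obtain ⟨q, rfl⟩ := Submodule.mem_span_singleton.1 hy
      simp only at ha ha' hb hb'
      simp [mul_add, add_mul, hi a ha b hb, hi' a' ha' b' hb', ho a ha, ho' a' ha', hv, hv',
        mul_comm v b, mul_comm v' b', ho b hb, ho' b' hb']
    · simp
    · have : Module.finrank K (F × G) % 2 = 0 := by omega
      rw [this]; simp
  · refine ⟨s.comp (LinearMap.fst K F G) + s'.comp (LinearMap.snd K F G),
      W.prod W', (v, v'), ?_, ?_, ?_, ?_, ?_⟩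
    · rintro ⟨x, x'⟩ hx
      ext
      · exact hn x fun y => by simpa using hx (y, 0)
      · exact hn' x' fun y => by simpa using hx (0, y)
    · rw [hWW]; omega
    · rintro ⟨a, a'⟩ ⟨ha, ha'⟩ ⟨b, b'⟩ ⟨hb, hb'⟩
      simp only at ha ha' hb hb'
      simp [hi a ha b hb, hi' a' ha' b' hb']
    · rintro ⟨a, a'⟩ ⟨ha, ha'⟩
      simp only at ha ha'
      simp [ho a ha, ho' a' ha']
    · simp only [LinearMap.add_apply, LinearMap.comp_apply, LinearMap.fst_apply,
        LinearMap.snd_apply, Prod.fst_mul, Prod.snd_mul, hv, hv']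
      rw [← Nat.cast_add]; congr 1; omega

theorem GoodAlg.of_equiv {K F G : Type*} [Field K] [CommRing F] [Algebra K F]
    [CommRing G] [Algebra K G] (e : F ≃ₐ[K] G) (hG : GoodAlg K G) :
    GoodAlg K F := by
  obtain ⟨s, W, v, hn, hW, hi, ho, hv⟩ := hG
  have hf : Module.finrank K F = Module.finrank K G := e.toLinearEquiv.finrank_eq
  refine ⟨s.comp e.toLinearMap, W.map e.symm.toLinearMap, e.symm v, ?_, ?_, ?_, ?_, ?_⟩
  · intro x hx
    have := hn (e x) fun y => by simpa using hx (e.symm y)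
    simpa using this
  · rw [hf, ← hW]
    exact LinearEquiv.finrank_map_eq e.symm.toLinearEquiv W
  · rintro _ ⟨w, hw, rfl⟩ _ ⟨w', hw', rfl⟩
    simpa using hi w hw w' hw'
  · rintro _ ⟨w, hw, rfl⟩
    simpa using ho w hw
  · simpa [hf] using hv

theorem GoodAlg.of_subsingleton {K F : Type*} [Field K] [CommRing F] [Algebra K F]
    [Subsingleton F] : GoodAlg K F := by
  have : Module.finrank K F = 0 := Module.finrank_zero_of_subsingleton
  refine ⟨0, ⊥, 0, fun x _ => Subsingleton.elim _ _, ?_, by simp, by simp, by simp [this]⟩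
  rw [this]; simp

theorem GoodAlg.pi {K : Type u} [Field K] (I : Type u) [Fintype I] :
    ∀ (A : I → Type u) [∀ i, Field (A i)] [∀ i, Algebra K (A i)]
    [∀ i, FiniteDimensional K (A i)] [∀ i, Algebra.IsSeparable K (A i)],
      GoodAlg K (∀ i, A i) := by
  refine Fintype.induction_empty_option (P := fun I _ => ∀ (A : I → Type u) [∀ i, Field (A i)] [∀ i, Algebra K (A i)]
    [∀ i, FiniteDimensional K (A i)] [∀ i, Algebra.IsSeparable K (A i)],
      GoodAlg K (∀ i, A i)) ?_ ?_ ?_ I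
  · intro α β _ e ih A _ _ _ _
    exact GoodAlg.of_equiv (AlgEquiv.piCongrLeft K A e).symm (ih (fun i => A (e i)))
  · intro A _ _ _ _
    exact GoodAlg.of_subsingleton
  · intro α _ ih A _ _ _ _
    refine GoodAlg.of_equiv (G := A none × ∀ i, A (some i)) (AlgEquiv.ofRingEquiv
      (f := RingEquiv.piOptionEquivProd) ?_) (GoodAlg.prod (GoodAlg.of_field _ _) (ih _))
    intro r
    rfl

theorem GoodAlg.of_etale {K F : Type u} [Field K] [CommRing F] [Algebra K F]
    [Algebra.Etale K F] : GoodAlg K F := by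
  obtain ⟨I, _, A, _, _, e, h⟩ := (Algebra.Etale.iff_exists_algEquiv_prod K F).1 inferInstance
  have := Fintype.ofFinite I
  have := fun i => (h i).1
  have := fun i => (h i).2
  exact GoodAlg.of_equiv e (GoodAlg.pi I A)

section DescPart
open TensorProduct
variable {K L E : Type u} [Field K] [Field L] [Algebra K L] [CommRing E] [Algebra L E]
  [Algebra K E] [IsScalarTower K L E]

theorem quad_coord (hquad : Module.finrank K L = 2) (h2 : (2 : L) ≠ 0) (ρ : L ≃ₐ[K] L) (c : L)
    (hc : c ≠ 0) (hρc : ρ c = -c) (l : L) :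
    ∃ a b : K, l = algebraMap K L a + algebraMap K L b * c := by
  have : FiniteDimensional K L := Module.finite_of_finrank_pos (by omega)
  have hli : LinearIndependent K ![(1 : L), c] := by
    rw [LinearIndependent.pair_iff]
    intro s t hst
    rw [Algebra.smul_def, Algebra.smul_def, mul_one] at hst
    have h1 := congrArg ρ hst
    simp only [map_add, map_mul, AlgEquiv.commutes, hρc, map_zero] at h1
    have h3 : (2 : L) * algebraMap K L s = 0 := by linear_combination hst + h1
    have h4 : algebraMap K L s = 0 := (mul_eq_zero.1 h3).resolve_left h2
    rw [h4, zero_add] at hst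
    have h5 := (mul_eq_zero.1 hst).resolve_right hc
    exact ⟨by simpa using h4, by simpa using h5⟩
  have hsp := hli.span_eq_top_of_card_eq_finrank' (by simp [hquad])
  have hl : l ∈ Submodule.span K (Set.range ![(1 : L), c]) := hsp ▸ Submodule.mem_top
  simp only [Matrix.range_cons, Matrix.range_empty, Set.union_empty, Set.singleton_union] at hl
  obtain ⟨a, b, hab⟩ := Submodule.mem_span_pair.1 hl
  exact ⟨a, b, by rw [← hab, Algebra.smul_def, Algebra.smul_def, mul_one]⟩

theorem desc_li (hquad : Module.finrank K L = 2) (h2 : (2 : L) ≠ 0) (ρ : L ≃ₐ[K] L) (c : L)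
    (hc : c ≠ 0) (hρc : ρ c = -c) (σ : E →+* E)
    (hσ : ∀ (c : L) (x : E), σ (c • x) = ρ c • σ x) {ι : Type*} [Fintype ι] (x : ι → E)
    (hx : ∀ i, σ (x i) = x i) (hli : LinearIndependent K x) : LinearIndependent L x := by
  rw [Fintype.linearIndependent_iff] at hli ⊢
  intro g hg
  choose a b hab using fun i => quad_coord hquad h2 ρ c hc hρc (g i)
  have hP : ∑ i, g i • x i = ∑ i, a i • x i + c • ∑ i, b i • x i := by
    rw [Finset.smul_sum, ← Finset.sum_add_distrib]
    refine Finset.sum_congr rfl fun i _ => ?_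
    rw [hab i, add_smul, mul_comm, mul_smul, algebraMap_smul, algebraMap_smul]
  have hfix : ∀ a : ι → K, σ (∑ i, a i • x i) = ∑ i, a i • x i := by
    intro a
    rw [map_sum]
    refine Finset.sum_congr rfl fun i _ => ?_
    rw [← algebraMap_smul L (a i) (x i), hσ, AlgEquiv.commutes, hx]
  rw [hP] at hg
  have hg' := congrArg σ hg
  rw [map_add, hσ, hfix, hfix, hρc, map_zero, neg_smul] at hg'
  have e1 : (2 : L) • ∑ i, a i • x i = 0 := by
    rw [two_smul]
    linear_combination (exp := 1) hg + hg'
  have e2 := (smul_eq_zero_iff_right h2).1 e1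
  rw [e2, zero_add] at hg
  have e3 := (smul_eq_zero_iff_right hc).1 hg
  intro i
  rw [hab i, hli a e2 i, hli b e3 i]; simp

def fixAlg (ρ : L ≃ₐ[K] L) (σ : E →+* E) (hσ : ∀ (c : L) (x : E), σ (c • x) = ρ c • σ x) :
    Subalgebra K E where
  carrier := {x | σ x = x}
  mul_mem' := by intro a b ha hb; simp only [Set.mem_ofPred_eq] at *; rw [map_mul, ha, hb]
  add_mem' := by intro a b ha hb; simp only [Set.mem_ofPred_eq] at *; rw [map_add, ha, hb]
  algebraMap_mem' := by
    intro r
    simp only [Set.mem_ofPred_eq]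
    rw [IsScalarTower.algebraMap_apply K L E, Algebra.algebraMap_eq_smul_one, hσ, map_one,
      AlgEquiv.commutes]

theorem exists_S [FiniteDimensional L E] [Algebra.Etale L E]
    (hquad : Module.finrank K L = 2) (h2 : (2 : L) ≠ 0) (ρ : L ≃ₐ[K] L) (c : L)
    (hc : c ≠ 0) (hρc : ρ c = -c) (σ : E →+* E) (hσσ : ∀ x, σ (σ x) = x)
    (hσ : ∀ (c : L) (x : E), σ (c • x) = ρ c • σ x)
    (n : ℕ) (hdim : Module.finrank L E = n) :
    ∃ S : E →ₗ[L] L, (∀ x, S (σ x) = ρ (S x)) ∧ (∀ x, (∀ y, S (x * y) = 0) → x = 0) ∧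
      ∃ (e : Fin (n / 2) → E) (v : E), LinearIndependent L e ∧
        (∀ i, σ (e i) = e i) ∧ σ v = v ∧ (∀ i j, S (e i * e j) = 0) ∧ (∀ i, S (e i * v) = 0) ∧
        S (v * v) = ((n % 2 : ℕ) : L) := by
  subst hdim
  have : FiniteDimensional K L := Module.finite_of_finrank_pos (by omega)
  have : FiniteDimensional K E := Module.Finite.trans L E
  let F := fixAlg ρ σ hσ
  have hF : ∀ x : F, σ (x : E) = x := fun x => x.2
  have hdec : ∀ x : E, ∃ a b : F, x = a + c • (b : E) := by
    intro x
    have hr2 : ρ 2⁻¹ = 2⁻¹ := by rw [map_inv₀, map_ofNat]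
    refine ⟨⟨(2⁻¹ : L) • (x + σ x), ?_⟩, ⟨(2⁻¹ * c⁻¹ : L) • (x - σ x), ?_⟩, ?_⟩
    · change σ _ = _
      rw [hσ, map_add, hσσ, hr2, add_comm]
    · change σ _ = _
      rw [hσ, map_sub, hσσ, map_mul, hr2, map_inv₀, hρc, inv_neg, mul_neg, neg_smul, ← smul_neg,
        neg_sub]
    · simp only [smul_smul]
      rw [mul_comm, mul_assoc, inv_mul_cancel₀ hc, mul_one, ← smul_add, add_add_sub_cancel,
        ← two_smul L, smul_smul, inv_mul_cancel₀ h2, one_smul]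
  let b := Module.finBasis K F
  have hbli : LinearIndependent L (fun i => (b i : E)) :=
    desc_li hquad h2 ρ c hc hρc σ hσ _ (fun i => hF _)
      (b.linearIndependent.map' F.val.toLinearMap (LinearMap.ker_eq_bot.2 Subtype.val_injective))
  have hbsp : ⊤ ≤ Submodule.span L (Set.range (fun i => (b i : E))) := by
    have hFs : ∀ x : F, (x : E) ∈ Submodule.span L (Set.range (fun i => (b i : E))) := by
      intro x
      rw [← b.sum_repr x, AddSubmonoidClass.coe_finsetSum]
      refine Submodule.sum_mem _ fun i _ => ?_
      rw [Subalgebra.coe_smul, ← algebraMap_smul L]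
      exact Submodule.smul_mem _ _ (Submodule.subset_span ⟨i, rfl⟩)
    intro x _
    obtain ⟨p, q, rfl⟩ := hdec x
    exact Submodule.add_mem _ (hFs _) (Submodule.smul_mem _ _ (hFs _))
  let bE := Module.Basis.mk hbli hbsp
  have hbE : ∀ i, bE i = b i := fun i => by simp [bE]
  have hfr : Module.finrank K F = Module.finrank L E := by
    rw [Module.finrank_eq_card_basis bE]; simp
  let φ : L ⊗[K] F →ₐ[L] E := Algebra.TensorProduct.lift (Algebra.ofId L E) F.val
    (fun _ _ => Commute.all _ _)
  have hφ : φ.toLinearMap = ((Algebra.TensorProduct.basis L b).equiv bE (Equiv.refl _)).toLinearMap := by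
    refine (Algebra.TensorProduct.basis L b).ext fun i => ?_
    rw [LinearEquiv.coe_coe, Module.Basis.equiv_apply]
    simp [φ, hbE]
  have hbij : Function.Bijective φ := by
    have : (φ : L ⊗[K] F → E) = ((Algebra.TensorProduct.basis L b).equiv bE (Equiv.refl _)) := by
      ext x; exact congrArg (fun f => f x) hφ
    rw [this]; exact LinearEquiv.bijective _
  have : Algebra.Etale L (L ⊗[K] F) := Algebra.Etale.of_equiv (AlgEquiv.ofBijective φ hbij).symm
  have : Algebra.Etale K F := Algebra.Etale.of_etale_tensorProduct_of_faithfullyFlat L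
  obtain ⟨s, W, v, hn, hW, hi, ho, hv⟩ := GoodAlg.of_etale (K := K) (F := F)
  let S : E →ₗ[L] L := bE.constr L (fun i => algebraMap K L (s (b i)))
  have hS : ∀ x : F, S x = algebraMap K L (s x) := by
    have : (S.restrictScalars K).comp F.val.toLinearMap = (Algebra.linearMap K L).comp s := by
      refine b.ext fun i => ?_
      simp only [LinearMap.comp_apply, LinearMap.restrictScalars_apply, AlgHom.toLinearMap_apply,
        Subalgebra.coe_val, Algebra.linearMap_apply]
      rw [← hbE, Module.Basis.constr_basis]
    exact fun x => congrArg (fun f => f x) this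
  have hSF : ∀ x y : F, S (x * y) = algebraMap K L (s (x * y)) := fun x y => by
    rw [← hS]; rfl
  have hSd : ∀ p q : F, S (p + c • (q : E)) = algebraMap K L (s p) + algebraMap K L (s q) * c := by
    intro p q
    rw [map_add, map_smul, hS, hS, smul_eq_mul, mul_comm]
  rw [hfr] at hW hv
  let bW := Module.finBasisOfFinrankEq K W hW
  refine ⟨S, ?_, ?_, fun i => ((bW i : F) : E), v, ?_, fun i => hF _, hF _, ?_, ?_, ?_⟩
  · intro x
    obtain ⟨p, q, rfl⟩ := hdec x
    rw [map_add, hσ, hF, hF, hρc, hSd, map_add, map_smul, hS, hS]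
    simp [hρc, mul_comm]
  · intro x hx
    obtain ⟨p, q, rfl⟩ := hdec x
    have key : ∀ y : F, s (p * y) = 0 ∧ s (q * y) = 0 := by
      intro y
      have h1 := hx y
      rw [add_mul, smul_mul_assoc] at h1
      have h1 : S (((p * y : F) : E) + c • ((q * y : F) : E)) = 0 := h1
      rw [hSd] at h1
      have h3 := congrArg ρ h1
      simp only [map_add, map_mul, AlgEquiv.commutes, hρc, map_zero] at h3
      have h4 : (2 : L) * algebraMap K L (s (p * y)) = 0 := by linear_combination h1 + h3
      have h5 := (mul_eq_zero.1 h4).resolve_left h2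
      rw [h5, zero_add] at h1
      have h6 := (mul_eq_zero.1 h1).resolve_right hc
      exact ⟨by simpa using h5, by simpa using h6⟩
    rw [hn p fun y => (key y).1, hn q fun y => (key y).2]
    simp
  · refine desc_li hquad h2 ρ c hc hρc σ hσ _ (fun i => hF _) ?_
    exact bW.linearIndependent.map' (F.val.toLinearMap.comp W.subtype)
      (LinearMap.ker_eq_bot.2 (Subtype.val_injective.comp Subtype.val_injective))
  · intro i j
    rw [hSF, hi _ (bW i).2 _ (bW j).2, map_zero]
  · intro i
    rw [hSF, ho _ (bW i).2, map_zero]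
  · rw [hSF, hv, map_natCast]

end DescPart

section HermPart
variable {L V : Type*} [Field L] [AddCommGroup V] [Module L V] [FiniteDimensional L V]
  {ρ : L →+* L} (B : V →ₗ[L] V →ₛₗ[ρ] L)

theorem herm_surj (hρ : ∀ x, ρ (ρ x) = x) (herm : ∀ x y, B y x = ρ (B x y))
    (hnd : ∀ x, (∀ y, B x y = 0) → x = 0) {α : Type*} [Fintype α] {u : α → V}
    (hu : LinearIndependent L u) :
    Function.Surjective (LinearMap.pi (fun i => B.flip (u i)) : V →ₗ[L] (α → L)) := by
  classical
  rw [← LinearMap.range_eq_top]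
  by_contra hne
  obtain ⟨f, hf0, hf⟩ := Submodule.exists_le_ker_of_lt_top _ (lt_top_iff_ne_top.2 hne)
  apply hf0
  have key : ∑ i, ρ (f (Pi.single i 1)) • u i = 0 := by
    apply hnd
    intro y
    rw [herm y]
    have h1 : f (LinearMap.pi (fun i => B.flip (u i)) y) = 0 := hf ⟨y, rfl⟩
    rw [LinearMap.pi_apply_eq_sum_univ f] at h1
    have : B y (∑ i, ρ (f (Pi.single i 1)) • u i) = 0 := by
      rw [map_sum, ← h1]
      refine Finset.sum_congr rfl fun i _ => ?_
      simp only [map_smulₛₗ, hρ, smul_eq_mul, LinearMap.pi_apply, LinearMap.flip_apply]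
      rw [mul_comm]
      congr 2
      ext j; simp [Pi.single_apply, eq_comm]
    rw [this, map_zero]
  have h2 := Fintype.linearIndependent_iff.1 hu _ key
  refine LinearMap.pi_ext' fun i => LinearMap.ext_ring ?_
  have := congrArg ρ (h2 i)
  simpa [hρ] using this

theorem herm_iso_bound (hρ : ∀ x, ρ (ρ x) = x) (herm : ∀ x y, B y x = ρ (B x y))
    (hnd : ∀ x, (∀ y, B x y = 0) → x = 0) {α : Type*} [Fintype α] {u : α → V}
    (hu : LinearIndependent L u) (hiso : ∀ i j, B (u i) (u j) = 0) :
    2 * Fintype.card α ≤ Module.finrank L V := by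
  have hs := herm_surj B hρ herm hnd hu
  set T := (LinearMap.pi (fun i => B.flip (u i)) : V →ₗ[L] (α → L)) with hT
  have h1 := LinearMap.finrank_range_add_finrank_ker T
  rw [LinearMap.range_eq_top.2 hs, finrank_top, Module.finrank_fintype_fun_eq_card] at h1
  have h2 : Submodule.span L (Set.range u) ≤ LinearMap.ker T := by
    rw [Submodule.span_le]
    rintro _ ⟨i, rfl⟩
    simp only [SetLike.mem_coe, LinearMap.mem_ker]
    ext j
    simp [hT, hiso]
  have h3 := Submodule.finrank_mono h2
  rw [finrank_span_eq_card hu] at h3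
  omega

theorem herm_exists_v (hρ : ∀ x, ρ (ρ x) = x) (herm : ∀ x y, B y x = ρ (B x y))
    (hnd : ∀ x, (∀ y, B x y = 0) → x = 0) {m : ℕ} {e : Fin m → V}
    (he : LinearIndependent L e) (hiso : ∀ i j, B (e i) (e j) = 0)
    (hn : Module.finrank L V = 2 * m + 1) :
    ∃ v, (∀ i, B (e i) v = 0) ∧ B v v ≠ 0 := by
  have hs := herm_surj B hρ herm hnd he
  set T := (LinearMap.pi (fun i => B.flip (e i)) : V →ₗ[L] (Fin m → L)) with hT
  have h1 := LinearMap.finrank_range_add_finrank_ker T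
  rw [LinearMap.range_eq_top.2 hs, finrank_top, Module.finrank_fintype_fun_eq_card,
    Fintype.card_fin] at h1
  have h2 : ¬ LinearMap.ker T ≤ Submodule.span L (Set.range e) := by
    intro h
    have h3 := Submodule.finrank_mono h
    rw [finrank_span_eq_card he, Fintype.card_fin] at h3
    omega
  obtain ⟨v, hv, hve⟩ := SetLike.not_le_iff_exists.1 h2
  have hve' : ∀ i, B v (e i) = 0 := fun i => congrFun (LinearMap.mem_ker.1 hv) i
  have hev : ∀ i, B (e i) v = 0 := fun i => by rw [herm v, hve', map_zero]
  refine ⟨v, hev, fun h0 => ?_⟩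
  have hli : LinearIndependent L (fun o : Option (Fin m) => o.elim v e) := by
    rw [linearIndependent_option]
    exact ⟨he, hve⟩
  have := herm_iso_bound B hρ herm hnd hli (by
    rintro (_ | i) (_ | j) <;> simp [h0, hve', hev, hiso])
  simp at this
  omega

theorem herm_li {ι κ : Type*} [Fintype ι] [Fintype κ] [DecidableEq κ] {e : ι → V} {v : κ → V}
    {d : L} (hd : d ≠ 0) (he : LinearIndependent L e) (hev : ∀ i j, B (e i) (v j) = 0)
    (hvv : ∀ i j, B (v i) (v j) = if i = j then d else 0) :
    LinearIndependent L (Sum.elim e v) := by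
  rw [Fintype.linearIndependent_iff]
  intro g hg
  rw [Fintype.sum_sum_type] at hg
  simp only [Sum.elim_inl, Sum.elim_inr] at hg
  have h1 : ∀ j, g (Sum.inr j) = 0 := by
    intro j
    have := congrArg (fun x => B x (v j)) hg
    simpa [hev, hvv, hd] using this
  simp only [h1, zero_smul, Finset.sum_const_zero, add_zero] at hg
  rintro (i | j)
  · exact Fintype.linearIndependent_iff.1 he _ hg i
  · exact h1 j

def hermGram {ι κ : Type*} [DecidableEq ι] [DecidableEq κ] (d : L) : ι ⊕ ι ⊕ κ → ι ⊕ ι ⊕ κ → L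
  | .inl i, .inr (.inl j) => if i = j then 1 else 0
  | .inr (.inl i), .inl j => if i = j then 1 else 0
  | .inr (.inr i), .inr (.inr j) => if i = j then d else 0
  | _, _ => 0

theorem herm_basis (h2 : (2 : L) ≠ 0) (hρ : ∀ x, ρ (ρ x) = x) (herm : ∀ x y, B y x = ρ (B x y))
    (hnd : ∀ x, (∀ y, B x y = 0) → x = 0) {ι κ : Type*} [Fintype ι] [Fintype κ]
    [DecidableEq ι] [DecidableEq κ] {e : ι → V} {v : κ → V}
    {d : L} (hd : d ≠ 0) (he : LinearIndependent L e)
    (hee : ∀ i j, B (e i) (e j) = 0) (hev : ∀ i j, B (e i) (v j) = 0)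
    (hvv : ∀ i j, B (v i) (v j) = if i = j then d else 0)
    (hn : Module.finrank L V = 2 * Fintype.card ι + Fintype.card κ) :
    ∃ b : Module.Basis (ι ⊕ ι ⊕ κ) L V, ∀ i j, B (b i) (b j) = hermGram d i j := by
  have hs := herm_surj B hρ herm hnd (herm_li B hd he hev hvv)
  have : ∀ j : ι, ∃ f : V, (∀ i, B f (e i) = if i = j then 1 else 0) ∧ ∀ i, B f (v i) = 0 := by
    intro j
    obtain ⟨f, hf⟩ := hs (Sum.elim (fun i => if i = j then 1 else 0) 0)
    exact ⟨f, fun i => by simpa using congrFun hf (.inl i),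
      fun i => by simpa using congrFun hf (.inr i)⟩
  choose f hfe hfv using this
  have hef : ∀ i j, B (e i) (f j) = if i = j then 1 else 0 := fun i j => by
    rw [herm (f j), hfe]; split_ifs <;> simp
  have hve : ∀ i j, B (v i) (e j) = 0 := fun i j => by rw [herm (e j), hev, map_zero]
  have hρ2 : ρ (2⁻¹) = 2⁻¹ := by rw [map_inv₀, map_ofNat]
  let f' : ι → V := fun j => f j - (2⁻¹ : L) • ∑ k, B (f j) (f k) • e k
  have hf'e : ∀ i j, B (f' i) (e j) = if i = j then 1 else 0 := by
    intro i j
    simp [f', hfe, hee, eq_comm]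
  have hf'v : ∀ i j, B (f' i) (v j) = 0 := by
    intro i j
    simp [f', hfv, hev]
  have hff : ∀ i j, B (f' i) (f' j) = 0 := by
    intro i j
    simp only [f', map_sub, map_smulₛₗ, map_sum, LinearMap.sub_apply, LinearMap.smul_apply,
      LinearMap.sum_apply, hee, hfe, hef, hρ2, smul_eq_mul, RingHom.id_apply, mul_ite, mul_one, mul_zero,
      Finset.sum_ite_eq, Finset.sum_ite_eq', Finset.mem_univ, if_true, Finset.sum_const_zero, sub_zero]
    rw [← herm]
    field_simp
    ring
  have hef' : ∀ i j, B (e i) (f' j) = if i = j then 1 else 0 := fun i j => by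
    rw [herm (f' j), hf'e]; simp only [eq_comm (a := j)]; split_ifs <;> simp
  have hvf' : ∀ i j, B (v i) (f' j) = 0 := fun i j => by rw [herm (f' j), hf'v, map_zero]
  let u : ι ⊕ ι ⊕ κ → V := Sum.elim e (Sum.elim f' v)
  have hG : ∀ i j, B (u i) (u j) = hermGram d i j := by
    rintro (i | i | i) (j | j | j) <;>
      simp [u, hermGram, hee, hev, hve, hvv, hf'e, hf'v, hff, hef', hvf']
  have hli : LinearIndependent L u := by
    rw [Fintype.linearIndependent_iff]
    intro g hg
    have h0 : ∀ j, ∑ i, g i * hermGram d i j = 0 := by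
      intro j
      have := congrArg (fun x => B x (u j)) hg
      simpa [hG] using this
    simp only [Fintype.sum_sum_type] at h0
    rintro (i | i | i)
    · simpa [hermGram] using h0 (.inr (.inl i))
    · simpa [hermGram] using h0 (.inl i)
    · simpa [hermGram, hd] using h0 (.inr (.inr i))
  have hcard : Fintype.card (ι ⊕ ι ⊕ κ) = Module.finrank L V := by
    simp [hn]; ring
  by_cases hne : Nonempty (ι ⊕ ι ⊕ κ)
  · refine ⟨basisOfLinearIndependentOfCardEqFinrank hli hcard, fun i j => ?_⟩
    simp [hG]
  · rw [not_nonempty_iff] at hne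
    have h0 : Module.finrank L V = 0 := by rw [← hcard]; exact Fintype.card_eq_zero
    have := Module.finrank_zero_iff.1 h0
    exact ⟨Module.Basis.empty V, fun i => isEmptyElim i⟩

end HermPart

/-- Let `K` be a field of characteristic `≠ 2`, `L/K` a separable quadratic
field extension with nontrivial `K`-automorphism `ρ`, `E` an `n`-dimensional finite étale
commutative `L`-algebra with a `ρ`-semilinear ring involution `σ`.  Let `h` be a nondegenerate
hermitian `ρ`-sesquilinear form on `V = L^n` admitting a totally isotropic subspace of dimension
`⌊n/2⌋`.  Then there is an injective `L`-algebra homomorphism `ι : E → End_L V` with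
`h (ι a x) y = h x (ι (σ a) y)` for all `a ∈ E`, `x, y ∈ V`. -/
theorem statement9 {K L E : Type u} [Field K] [Field L] [Algebra K L]
    [Algebra.IsSeparable K L] (hquad : Module.finrank K L = 2)
    (hchar : ringChar K ≠ 2)
    (ρ : L ≃ₐ[K] L) (hρ : ∃ c : L, ρ c ≠ c)
    [CommRing E] [Algebra L E] [FiniteDimensional L E] [Algebra.Etale L E]
    (n : ℕ) (hdim : Module.finrank L E = n)
    (σ : E →+* E) (hσinv : ∀ x, σ (σ x) = x)
    (hσsemi : ∀ (c : L) (x : E), σ (algebraMap L E c * x) = algebraMap L E (ρ c) * σ x)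
    (h : (Fin n → L) → (Fin n → L) → L)
    (hlin : ∀ (c : L) (x x' y : Fin n → L), h (c • x + x') y = c * h x y + h x' y)
    (hsemi : ∀ (c : L) (x y y' : Fin n → L), h x (c • y + y') = ρ c * h x y + h x y')
    (hherm : ∀ x y : Fin n → L, h y x = ρ (h x y))
    (hnd : ∀ x : Fin n → L, (∀ y : Fin n → L, h x y = 0) → x = 0)
    (hW : ∃ W : Submodule L (Fin n → L), Module.finrank L W = n / 2 ∧
      ∀ w ∈ W, ∀ w' ∈ W, h w w' = 0) :
    ∃ ι : E →ₐ[L] Module.End L (Fin n → L), Function.Injective ι ∧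
      ∀ (a : E) (x y : Fin n → L), h (ι a x) y = h x (ι (σ a) y) := by
  classical
  have hfin : FiniteDimensional K L := Module.finite_of_finrank_pos (by omega)
  have h2K : (2 : K) ≠ 0 := Ring.two_ne_zero hchar
  have h2 : (2 : L) ≠ 0 := by
    have := (map_ne_zero (algebraMap K L)).2 h2K
    rwa [map_ofNat] at this
  have hρρ : ∀ x, ρ (ρ x) = x := by
    obtain ⟨c, hc⟩ := hρ
    have hcard : Fintype.card (L ≃ₐ[K] L) ≤ 2 := hquad ▸ AlgEquiv.card_le
    have h1 : ρ ≠ 1 := fun h => hc (by rw [h]; rfl)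
    have h3 : ρ * ρ = 1 := by
      by_contra hne
      have hs : ({1, ρ, ρ * ρ} : Finset (L ≃ₐ[K] L)).card = 3 :=
        Finset.card_eq_three.2 ⟨_, _, _, h1.symm, Ne.symm hne, fun h => h1 (by simpa using h), rfl⟩
      have := Finset.card_le_univ ({1, ρ, ρ * ρ} : Finset (L ≃ₐ[K] L))
      omega
    exact fun x => DFunLike.congr_fun h3 x
  obtain ⟨c, hc, hρc⟩ : ∃ c : L, c ≠ 0 ∧ ρ c = -c := by
    obtain ⟨c, hc⟩ := hρ
    exact ⟨c - ρ c, sub_ne_zero.2 hc.symm, by rw [map_sub, hρρ, neg_sub]⟩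
  letI : Algebra K E := ((algebraMap L E).comp (algebraMap K L)).toAlgebra
  haveI : IsScalarTower K L E := IsScalarTower.of_algebraMap_eq fun _ => rfl
  have hσ : ∀ (c : L) (x : E), σ (c • x) = ρ c • σ x := fun c x => by
    rw [Algebra.smul_def, Algebra.smul_def, hσsemi]
  obtain ⟨S, hSσ, hSn, e', v', he', hσe, hσv, hee', hev', hvv'⟩ :=
    exists_S hquad h2 ρ c hc hρc σ hσinv hσ n hdim
  -- the form on V
  have h0l : ∀ y, h 0 y = 0 := fun y => by simpa using hlin 1 0 0 y
  have h0r : ∀ x, h x 0 = 0 := fun x => by simpa using hsemi 1 x 0 0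
  let r : L →+* L := (ρ : L →+* L)
  have hrr : ∀ x, r (r x) = x := hρρ
  let B : (Fin n → L) →ₗ[L] (Fin n → L) →ₛₗ[r] L := LinearMap.mk₂'ₛₗ (RingHom.id L) r h
    (fun x x' y => by simpa using hlin 1 x x' y) (fun a x y => by simpa [h0l] using hlin a x 0 y)
    (fun x y y' => by simpa using hsemi 1 x y y') (fun a x y => by simpa [h0r, r] using hsemi a x y 0)
  have hB : ∀ x y, B x y = h x y := fun _ _ => rfl
  have hnV : Module.finrank L (Fin n → L) = n := by simp
  have hBherm : ∀ x y, B y x = r (B x y) := hherm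
  obtain ⟨W, hWd, hWi⟩ := hW
  let bW := Module.finBasisOfFinrankEq L W hWd
  let e : Fin (n / 2) → (Fin n → L) := fun i => bW i
  have he : LinearIndependent L e :=
    bW.linearIndependent.map' W.subtype (LinearMap.ker_eq_bot.2 Subtype.val_injective)
  have hee : ∀ i j, B (e i) (e j) = 0 := fun i j => hWi _ (bW i).2 _ (bW j).2
  obtain ⟨d, hd, hrd, v, hev, hvv⟩ : ∃ d : L, d ≠ 0 ∧ r d = d ∧ ∃ v : Fin (n % 2) → (Fin n → L),
      (∀ i j, B (e i) (v j) = 0) ∧ ∀ i j, B (v i) (v j) = if i = j then d else 0 := by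
    rcases Nat.mod_two_eq_zero_or_one n with h0 | h1
    · have : IsEmpty (Fin (n % 2)) := by rw [h0]; infer_instance
      exact ⟨1, one_ne_zero, map_one _, fun i => isEmptyElim i, fun _ i => isEmptyElim i,
        fun i => isEmptyElim i⟩
    · obtain ⟨v, hv1, hv2⟩ := herm_exists_v B hrr hBherm hnd he hee (by omega)
      refine ⟨B v v, hv2, (hBherm v v).symm, fun _ => v, fun i _ => hv1 i, fun i j => ?_⟩
      rw [if_pos (by omega)]
  obtain ⟨b, hb⟩ := herm_basis B h2 hrr hBherm hnd hd he hee hev hvv (by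
    simp only [Fintype.card_fin]; omega)
  -- the form on E
  let H : E →ₗ[L] E →ₛₗ[r] L := LinearMap.mk₂'ₛₗ (RingHom.id L) r (fun x y => d * S (x * σ y))
    (fun x x' y => by simp [add_mul, mul_add]) (fun a x y => by simp; ring)
    (fun x y y' => by simp [mul_add]) (fun a x y => by
      simp only [hσ, mul_smul_comm, map_smul, smul_eq_mul]
      change d * (r a * _) = _
      ring)
  have hH : ∀ x y, H x y = d * S (x * σ y) := fun _ _ => rfl
  have hHherm : ∀ x y, H y x = r (H x y) := by
    intro x y
    rw [hH, hH, map_mul r, hrd]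
    congr 1
    change _ = ρ _
    rw [← hSσ, map_mul σ, hσinv, mul_comm]
  have hHnd : ∀ x, (∀ y, H x y = 0) → x = 0 := by
    intro x hx
    refine hSn x fun y => ?_
    have := hx (σ y)
    rw [hH, hσinv] at this
    exact (mul_eq_zero.1 this).resolve_left hd
  obtain ⟨b', hb'⟩ := herm_basis H h2 hrr hHherm hHnd (e := e') (v := fun _ : Fin (n % 2) => v')
    hd he' (fun i j => by rw [hH, hσe, hee', mul_zero])
    (fun i j => by rw [hH, hσv, hev', mul_zero])
    (fun i j => by
      have hn1 : n % 2 = 1 := by have := i.2; omega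
      rw [hH, hσv, hvv', if_pos (by omega)]
      simp [hn1])
    (by simp only [Fintype.card_fin]; omega)
  let φ : E ≃ₗ[L] (Fin n → L) := b'.equiv b (Equiv.refl _)
  have hiso : ∀ x y, B (φ x) (φ y) = H x y := by
    have : (B.comp φ.toLinearMap).compl₂ φ.toLinearMap = H := by
      refine LinearMap.ext_basis b' b' fun i j => ?_
      simp [φ, hb, hb']
    intro x y
    rw [← this]; rfl
  refine ⟨(φ.conjAlgEquiv L : Module.End L E →ₐ[L] Module.End L (Fin n → L)).comp (Algebra.lmul L E),
    ?_, ?_⟩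
  · exact (φ.conjAlgEquiv L).injective.comp Algebra.lmul_injective
  · intro a x y
    obtain ⟨x, rfl⟩ := φ.surjective x
    obtain ⟨y, rfl⟩ := φ.surjective y
    have h1 : ∀ a x, ((φ.conjAlgEquiv L : Module.End L E →ₐ[L] Module.End L (Fin n → L)).comp
        (Algebra.lmul L E)) a (φ x) = φ (a * x) := by
      intro a x; simp [LinearEquiv.conjAlgEquiv_apply]
    rw [h1, h1, ← hB, ← hB, hiso, hiso, hH, hH, map_mul σ, hσinv]
    congr 2; ring
end

section
/- Let K be an infinite field and let E be a finite étale commutative K-algebra of K-dimension n. Then there exists an element e ∈ E such that 1, e, e², …, e^{n−1} form a K-basis of E; in other words, E is generated as a K-algebra by a single element. -/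
universe u

/-- Let `K` be an infinite field and `E` a finite étale commutative
`K`-algebra of dimension `n`.  Then there is `e ∈ E` such that `1, e, e², …, e^{n-1}` is a
`K`-basis of `E`; in particular `E` is generated by a single element as a `K`-algebra. -/
theorem statement11 {K E : Type u} [Field K] [Infinite K] [CommRing E] [Algebra K E]
    [FiniteDimensional K E] [Algebra.Etale K E]
    (n : ℕ) (hdim : Module.finrank K E = n) :
    ∃ e : E, (∃ B : Module.Basis (Fin n) K E, ∀ i : Fin n, B i = e ^ (i : ℕ)) ∧
      Algebra.adjoin K {e} = ⊤ := by
  classical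
  obtain ⟨I, _, L, _, _, φ, hL⟩ :=
    (Algebra.Etale.iff_exists_algEquiv_prod K E).mp inferInstance
  have h1 : ∀ i, Module.Finite K (L i) := fun i => (hL i).1
  have h2 : ∀ i, Algebra.IsSeparable K (L i) := fun i => (hL i).2
  have := Fintype.ofFinite I
  let Ω := AlgebraicClosure K
  let S := Σ i, (L i →ₐ[K] Ω)
  have hcard : Fintype.card S = n := by
    rw [Fintype.card_sigma, ← hdim, φ.toLinearEquiv.finrank_eq, Module.finrank_pi_fintype]
    exact Finset.sum_congr rfl fun i _ => AlgHom.card K (L i) Ω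
  let F : S → (E →ₐ[K] Ω) := fun s => (s.2.comp (Pi.evalAlgHom K L s.1)).comp φ.toAlgHom
  have hF : Function.Injective F := by
    rintro ⟨i, f⟩ ⟨j, g⟩ h
    have h' : ∀ x : Π i, L i, f (x i) = g (x j) := fun x => by
      simpa [F] using DFunLike.congr_fun h (φ.symm x)
    have hij : i = j := by
      by_contra hij
      have := h' (Pi.single i 1)
      rw [Pi.single_eq_same, Pi.single_eq_of_ne (Ne.symm hij)] at this
      simp at this
    subst hij
    congr 1
    ext x
    simpa using h' (Pi.single i x)
  obtain ⟨e, he⟩ : ∃ e : E, Function.Injective fun s => F s e := by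
    let p : {q : S × S // q.1 ≠ q.2} → Submodule K E := fun q =>
      LinearMap.ker ((F q.1.1).toLinearMap - (F q.1.2).toLinearMap)
    have hp : ∀ q, p q ≠ ⊤ := by
      rintro ⟨⟨s, t⟩, hst⟩ htop
      apply hst
      apply hF
      ext x
      have : x ∈ p ⟨⟨s, t⟩, hst⟩ := htop ▸ Submodule.mem_top
      simpa [p, sub_eq_zero] using this
    have := Submodule.iUnion_ssubset_of_forall_ne_top_of_card_lt Finset.univ p hp
      (by rw [ENat.card_eq_top_of_infinite]; exact ENat.coe_lt_top _)
    obtain ⟨e, -, he⟩ := Set.exists_of_ssubset this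
    refine ⟨e, fun s t hst => ?_⟩
    by_contra hne
    apply he
    simp only [Set.mem_iUnion]
    exact ⟨⟨⟨s, t⟩, hne⟩, Finset.mem_univ _, by simpa [p, sub_eq_zero] using hst⟩
  have hint : IsIntegral K e := Algebra.IsIntegral.isIntegral e
  have hdeg : n ≤ (minpoly K e).natDegree := by
    by_contra hlt
    have h0 := Polynomial.eq_zero_of_natDegree_lt_card_of_eval_eq_zero
      ((minpoly K e).map (algebraMap K Ω)) he
      (fun s => by
        rw [Polynomial.eval_map_algebraMap, Polynomial.aeval_algHom_apply, minpoly.aeval, map_zero])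
      (by rw [Polynomial.natDegree_map, hcard]; omega)
    exact minpoly.ne_zero hint ((Polynomial.map_eq_zero _).mp h0)
  have hli : LinearIndependent K (fun i : Fin n => e ^ (i : ℕ)) :=
    (linearIndependent_pow (K := K) e).comp (Fin.castLE hdeg) (Fin.castLE_injective hdeg)
  have hsp : Submodule.span K (Set.range fun i : Fin n => e ^ (i : ℕ)) = ⊤ :=
    hli.span_eq_top_of_card_eq_finrank' (by simp [hdim])
  refine ⟨e, ⟨Module.Basis.mk hli hsp.ge, fun i => by simp⟩, ?_⟩
  rw [← Algebra.toSubmodule_eq_top, eq_top_iff, ← hsp, Submodule.span_le]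
  rintro _ ⟨i, rfl⟩
  exact pow_mem (Algebra.self_mem_adjoin_singleton K e) _
end

section
/- Let ℓ ≥ 1, n = 2ℓ + 1, and let r be an integer with 0 ≤ r ≤ n; set s = min(r, n − r). Let α, β, γ be nonnegative integers with α + β + 2γ = ℓ and α + 2γ ≤ s. Let (E, σ) be the real étale algebra with involution E = ℝ × (ℝ × ℝ)^α × ℂ^β × (ℂ × ℂ)^γ, where σ is the identity on the ℝ factor, the switch of coordinates on each ℝ × ℝ factor, complex conjugation on each ℂ factor, and the switch of coordinates on each ℂ × ℂ factor. Let f be the symmetric bilinear form on ℝ^n associated to the quadratic form r⟨1⟩ ⊥ (n − r)⟨−1⟩ (i.e. the diagonal form with r entries +1 and n − r entries −1). Then there exists an injective ℝ-algebra homomorphism ι : E → End_ℝ(ℝ^n) such that f(ι(a)x, y) = f(x, ι(σ(a))y) for all a ∈ E and x, y ∈ ℝ^n. -/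
/-- The real étale algebra `ℝ × (ℝ × ℝ)^α × ℂ^β × (ℂ × ℂ)^γ`. -/
abbrev RealEtaleAlgB (α β γ : ℕ) : Type :=
  ℝ × (Fin α → ℝ × ℝ) × (Fin β → ℂ) × (Fin γ → ℂ × ℂ)

/-- The involution of `ℝ × (ℝ × ℝ)^α × ℂ^β × (ℂ × ℂ)^γ`: identity on the `ℝ` factor, the
coordinate switch on each `ℝ × ℝ` factor, complex conjugation on each `ℂ` factor, and the
coordinate switch on each `ℂ × ℂ` factor. -/
def sigmaB (α β γ : ℕ) : RealEtaleAlgB α β γ → RealEtaleAlgB α β γ :=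
  fun x =>
    (x.1, fun i => ((x.2.1 i).2, (x.2.1 i).1),
      fun i => (starRingEnd ℂ) (x.2.2.1 i),
      fun i => ((x.2.2.2 i).2, (x.2.2.2 i).1))

/-- The symmetric bilinear form on `ℝ^n` associated to the quadratic form
`r⟨1⟩ ⊥ (n - r)⟨-1⟩`. -/
def diagRForm (n r : ℕ) (x y : Fin n → ℝ) : ℝ :=
  ∑ i : Fin n, (if (i : ℕ) < r then (1 : ℝ) else -1) * x i * y i

abbrev IdxB (α β γ : ℕ) : Type :=
  Unit ⊕ (Fin α × Bool) ⊕ (Fin β × Bool) ⊕ (Fin γ × Bool × Bool)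

def toFunB (α β γ : ℕ) (x : RealEtaleAlgB α β γ) : IdxB α β γ → ℝ
  | .inl _ => x.1
  | .inr (.inl (i, true)) => (x.2.1 i).1 + (x.2.1 i).2
  | .inr (.inl (i, false)) => (x.2.1 i).1 - (x.2.1 i).2
  | .inr (.inr (.inl (i, true))) => (x.2.2.1 i).re
  | .inr (.inr (.inl (i, false))) => (x.2.2.1 i).im
  | .inr (.inr (.inr (i, true, true))) => (x.2.2.2 i).1.re + (x.2.2.2 i).2.re
  | .inr (.inr (.inr (i, true, false))) => (x.2.2.2 i).1.im - (x.2.2.2 i).2.im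
  | .inr (.inr (.inr (i, false, true))) => (x.2.2.2 i).1.im + (x.2.2.2 i).2.im
  | .inr (.inr (.inr (i, false, false))) => (x.2.2.2 i).1.re - (x.2.2.2 i).2.re

noncomputable def invFunB (α β γ : ℕ) (f : IdxB α β γ → ℝ) : RealEtaleAlgB α β γ :=
  (f (.inl ()),
   fun i => ((f (.inr (.inl (i, true))) + f (.inr (.inl (i, false)))) / 2,
     (f (.inr (.inl (i, true))) - f (.inr (.inl (i, false)))) / 2),
   fun i => ⟨f (.inr (.inr (.inl (i, true)))), f (.inr (.inr (.inl (i, false))))⟩,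
   fun i =>
    (⟨(f (.inr (.inr (.inr (i, true, true)))) + f (.inr (.inr (.inr (i, false, false))))) / 2,
      (f (.inr (.inr (.inr (i, false, true)))) + f (.inr (.inr (.inr (i, true, false))))) / 2⟩,
     ⟨(f (.inr (.inr (.inr (i, true, true)))) - f (.inr (.inr (.inr (i, false, false))))) / 2,
      (f (.inr (.inr (.inr (i, false, true)))) - f (.inr (.inr (.inr (i, true, false))))) / 2⟩))

noncomputable def equivB (α β γ : ℕ) : RealEtaleAlgB α β γ ≃ₗ[ℝ] (IdxB α β γ → ℝ) where
  toFun := toFunB α β γ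
  invFun := invFunB α β γ
  map_add' x y := by
    funext i
    rcases i with _ | ⟨i, _ | _⟩ | ⟨i, _ | _⟩ | ⟨i, _ | _, _ | _⟩ <;> simp [toFunB] <;> ring
  map_smul' c x := by
    funext i
    rcases i with _ | ⟨i, _ | _⟩ | ⟨i, _ | _⟩ | ⟨i, _ | _, _ | _⟩ <;> simp [toFunB] <;> ring
  left_inv x := by
    obtain ⟨x0, x1, x2, x3⟩ := x
    simp only [invFunB, toFunB]
    refine Prod.ext rfl (Prod.ext ?_ (Prod.ext rfl ?_))
    · funext i
      refine Prod.ext ?_ ?_ <;> simp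
    · funext i
      refine Prod.ext (Complex.ext ?_ ?_) (Complex.ext ?_ ?_) <;> simp <;> ring
  right_inv f := by
    funext i
    rcases i with _ | ⟨i, _ | _⟩ | ⟨i, _ | _⟩ | ⟨i, _ | _, _ | _⟩ <;>
      simp [toFunB, invFunB] <;> ring

def posB (α β γ k : ℕ) (b : Bool) : IdxB α β γ → Bool
  | .inl _ => b
  | .inr (.inl (_, c)) => c
  | .inr (.inr (.inl (i, _))) => decide ((i : ℕ) < k)
  | .inr (.inr (.inr (_, c, _))) => c

lemma card_posB (α β γ k : ℕ) (b : Bool) (hk : k ≤ β) :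
    Fintype.card {i : IdxB α β γ // posB α β γ k b i = true} =
      (if b then 1 else 0) + α + 2 * k + 2 * γ := by
  rw [Fintype.card_subtype, Finset.card_filter]
  have h : ∑ i : Fin β, (if (i : ℕ) < k then 1 else 0) = k := by
    rw [← Finset.card_filter, Fin.card_filter_val_lt]; omega
  simp only [Fintype.sum_sum_type, Fintype.sum_prod_type, posB, Fintype.sum_bool,
    decide_eq_true_eq, Finset.sum_add_distrib, h]
  cases b <;> simp <;> ring

lemma adjB (α β γ k : ℕ) (b : Bool) (a u v : RealEtaleAlgB α β γ) :
    ∑ i, (if posB α β γ k b i = true then (1 : ℝ) else -1) * toFunB α β γ (a * u) i *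
        toFunB α β γ v i =
      ∑ i, (if posB α β γ k b i = true then (1 : ℝ) else -1) * toFunB α β γ u i *
        toFunB α β γ (sigmaB α β γ a * v) i := by
  simp only [Fintype.sum_sum_type, Fintype.sum_prod_type, Fintype.sum_bool]
  congr 1
  · simp [posB, toFunB, sigmaB]; ring
  congr 1
  · refine Finset.sum_congr rfl fun i _ => ?_
    simp [posB, toFunB, sigmaB]; ring
  congr 1
  · refine Finset.sum_congr rfl fun i _ => ?_
    by_cases h : (i : ℕ) < k <;> simp [posB, toFunB, sigmaB, h] <;> ring
  · refine Finset.sum_congr rfl fun i _ => ?_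
    simp [posB, toFunB, sigmaB]; ring

lemma exists_equivB (α β γ k n r : ℕ) (b : Bool) (hk : k ≤ β) (hn : n = 2 * (α + β + 2 * γ) + 1)
    (hrn : r ≤ n) (hr : r = (if b then 1 else 0) + α + 2 * k + 2 * γ) :
    ∃ e : IdxB α β γ ≃ Fin n, ∀ i, posB α β γ k b i = true ↔ ((e i : Fin n) : ℕ) < r := by
  classical
  have h1 : Fintype.card {i : IdxB α β γ // posB α β γ k b i = true} =
      Fintype.card {j : Fin n // (j : ℕ) < r} := by
    rw [card_posB _ _ _ _ _ hk, Fintype.card_subtype, Fin.card_filter_val_lt]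
    omega
  have h2 : Fintype.card {i : IdxB α β γ // ¬ posB α β γ k b i = true} =
      Fintype.card {j : Fin n // ¬ (j : ℕ) < r} := by
    rw [Fintype.card_subtype_compl, Fintype.card_subtype_compl, h1]
    congr 1
    simp [hn]; ring
  let e1 := Fintype.equivOfCardEq h1
  let e2 := Fintype.equivOfCardEq h2
  refine ⟨(Equiv.sumCompl _).symm.trans ((Equiv.sumCongr e1 e2).trans (Equiv.sumCompl _)), ?_⟩
  intro i
  by_cases h : posB α β γ k b i = true
  · simpa [h, Equiv.sumCompl_symm_apply_of_pos] using (e1 ⟨i, h⟩).2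
  · have := (e2 ⟨i, h⟩).2
    rw [Equiv.trans_apply, Equiv.sumCompl_symm_apply_of_neg (p := fun i => posB α β γ k b i = true) h]
    simpa [h] using this

/-- Let `ℓ ≥ 1`, `n = 2ℓ + 1`, `0 ≤ r ≤ n`, `s = min r (n - r)`, and let
`α, β, γ` be nonnegative integers with `α + β + 2γ = ℓ` and `α + 2γ ≤ s`.  Let `(E, σ)` be the
real étale algebra with involution `ℝ × (ℝ × ℝ)^α × ℂ^β × (ℂ × ℂ)^γ` and let `f` be the
symmetric bilinear form of signature `(r, n - r)` on `ℝ^n`.  Then there is an injective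
`ℝ`-algebra homomorphism `ι : E → End_ℝ (ℝ^n)` with `f (ι a x) y = f x (ι (σ a) y)`. -/
theorem statement12 (ℓ r α β γ : ℕ) (hℓ : 1 ≤ ℓ) (hr : r ≤ 2 * ℓ + 1)
    (hsum : α + β + 2 * γ = ℓ) (hle : α + 2 * γ ≤ min r (2 * ℓ + 1 - r)) :
    ∃ ι : RealEtaleAlgB α β γ →ₐ[ℝ] Module.End ℝ (Fin (2 * ℓ + 1) → ℝ),
      Function.Injective ι ∧
        ∀ (a : RealEtaleAlgB α β γ) (x y : Fin (2 * ℓ + 1) → ℝ),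
          diagRForm (2 * ℓ + 1) r (ι a x) y =
            diagRForm (2 * ℓ + 1) r x (ι (sigmaB α β γ a) y) := by
  obtain ⟨b, k, hk, hb⟩ : ∃ (b : Bool) (k : ℕ), k ≤ β ∧
      r = (if b then 1 else 0) + α + 2 * k + 2 * γ := by
    have h1 := le_min_iff.mp hle
    rcases Nat.even_or_odd' (r - (α + 2 * γ)) with ⟨k, h | h⟩
    · exact ⟨false, k, by omega, by simp; omega⟩
    · exact ⟨true, k, by omega, by simp; omega⟩
  obtain ⟨e, he⟩ := exists_equivB α β γ k (2 * ℓ + 1) r b hk (by omega) hr hb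
  let φ : RealEtaleAlgB α β γ ≃ₗ[ℝ] (Fin (2 * ℓ + 1) → ℝ) :=
    (equivB α β γ).trans (LinearEquiv.funCongrLeft ℝ ℝ e.symm)
  have hφ : ∀ u i, φ u (e i) = toFunB α β γ u i := by
    intro u i
    simp [φ, equivB, LinearEquiv.funCongrLeft_apply, LinearMap.funLeft_apply]
  have hform : ∀ u v, diagRForm (2 * ℓ + 1) r (φ u) (φ v) =
      ∑ i, (if posB α β γ k b i = true then (1 : ℝ) else -1) * toFunB α β γ u i *
        toFunB α β γ v i := by
    intro u v
    unfold diagRForm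
    rw [← Equiv.sum_comp e]
    simp only [hφ, he]
  let ι : RealEtaleAlgB α β γ →ₐ[ℝ] Module.End ℝ (Fin (2 * ℓ + 1) → ℝ) :=
    (φ.conjAlgEquiv ℝ).toAlgHom.comp (Algebra.lmul ℝ (RealEtaleAlgB α β γ))
  have hι : ∀ a u, ι a (φ u) = φ (a * u) := by
    intro a u
    simp [ι, LinearEquiv.conjAlgEquiv_apply]
  refine ⟨ι, ?_, ?_⟩
  · intro a a' h
    have := congrArg (fun g => g (φ 1)) h
    simp only [hι, mul_one] at this
    exact φ.injective this
  · intro a x y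
    obtain ⟨u, rfl⟩ := φ.surjective x
    obtain ⟨v, rfl⟩ := φ.surjective y
    rw [hι, hι, hform, hform, adjB]
end

section
/- Let ℓ ≥ 1, n = 2ℓ + 1, and let r be an integer with 0 ≤ r ≤ n. Let α, β, γ be nonnegative integers with α + β + 2γ = ℓ, and let (E, σ) be the real étale algebra with involution E = ℝ × (ℝ × ℝ)^α × ℂ^β × (ℂ × ℂ)^γ, where σ is the identity on the ℝ factor, the switch of coordinates on each ℝ × ℝ factor, complex conjugation on each ℂ factor, and the switch of coordinates on each ℂ × ℂ factor. Let f be a nondegenerate symmetric bilinear form on ℝ^n of signature (r, n − r), i.e. equivalent to the diagonal form with r entries +1 and n − r entries −1. If there exists an injective ℝ-algebra homomorphism ι : E → End_ℝ(ℝ^n) such that f(ι(a)x, y) = f(x, ι(σ(a))y) for all a ∈ E and x, y ∈ ℝ^n, then α + 2γ ≤ min(r, n − r). -/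
/-- Linear inclusion of half of the split part. -/
noncomputable def jB (α β γ : ℕ) :
    ((Fin α → ℝ) × (Fin γ → ℂ)) →ₗ[ℝ] RealEtaleAlgB α β γ where
  toFun u := (0, fun i => (u.1 i, 0), 0, fun i => (u.2 i, 0))
  map_add' u w := by
    ext <;> simp
  map_smul' c u := by
    ext <;> simp

theorem jB_mul (α β γ : ℕ) (u w) : jB α β γ u * jB α β γ w = jB α β γ (u * w) := by
  ext <;> simp [jB]

theorem jB_sigma (α β γ : ℕ) (u w) : sigmaB α β γ (jB α β γ u) * jB α β γ w = 0 := by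
  ext <;> simp [jB, sigmaB]

theorem jB_inj (α β γ : ℕ) (u) (h : jB α β γ u = 0) : u = 0 := by
  simp only [jB, LinearMap.coe_mk, AddHom.coe_mk, Prod.ext_iff, funext_iff] at h
  ext i
  · simpa using (h.2.1 i).1
  · simpa using (h.2.2.2 i).1

theorem exists_common {V S : Type*} [AddCommGroup V] [Module ℝ V] [Finite S]
    (p : S → Module.End ℝ V) (hp : ∀ s, p s ≠ 0) : ∃ v, ∀ s, p s v ≠ 0 := by
  by_contra hcon
  push Not at hcon
  obtain ⟨s, hs⟩ := Subspace.exists_eq_top_of_iUnion_eq_univ (k := ℝ) (E := V)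
    (p := fun s => LinearMap.ker (p s)) (by
      ext v
      simpa using hcon v)
  exact hp s (LinearMap.ker_eq_top.mp hs)

/-- Projection to coordinates satisfying a predicate. -/
def prB (n : ℕ) (P : Fin n → Prop) : (Fin n → ℝ) →ₗ[ℝ] ({i // P i} → ℝ) :=
  LinearMap.funLeft ℝ ℝ Subtype.val

theorem isotropic_pos (n r : ℕ) (x : Fin n → ℝ) (h : diagRForm n r x x = 0)
    (hx : ∀ i : Fin n, (i : ℕ) < r → x i = 0) : x = 0 := by
  have h1 : ∑ i, x i * x i = 0 := by
    rw [← neg_eq_zero, ← h, diagRForm, ← Finset.sum_neg_distrib]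
    refine Finset.sum_congr rfl fun i _ => ?_
    by_cases hi : (i : ℕ) < r
    · simp [hx i hi]
    · simp [hi]
  rw [Finset.sum_eq_zero_iff_of_nonneg (fun i _ => mul_self_nonneg _)] at h1
  ext i
  simpa using h1 i (Finset.mem_univ i)

theorem isotropic_neg (n r : ℕ) (x : Fin n → ℝ) (h : diagRForm n r x x = 0)
    (hx : ∀ i : Fin n, ¬ (i : ℕ) < r → x i = 0) : x = 0 := by
  have h1 : ∑ i, x i * x i = 0 := by
    rw [← h, diagRForm]
    refine Finset.sum_congr rfl fun i _ => ?_
    by_cases hi : (i : ℕ) < r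
    · simp [hi]
    · simp [hx i hi]
  rw [Finset.sum_eq_zero_iff_of_nonneg (fun i _ => mul_self_nonneg _)] at h1
  ext i
  simpa using h1 i (Finset.mem_univ i)

theorem card_lt (n r : ℕ) (hr : r ≤ n) : Fintype.card {i : Fin n // (i : ℕ) < r} = r := by
  have e : {i : Fin n // (i : ℕ) < r} ≃ Fin r :=
    { toFun := fun i => ⟨i.1, i.2⟩
      invFun := fun i => ⟨⟨i, i.2.trans_le hr⟩, i.2⟩
      left_inv := fun i => rfl
      right_inv := fun i => rfl }
  simpa using Fintype.card_congr e

/-- Let `ℓ ≥ 1`, `n = 2ℓ + 1`, `0 ≤ r ≤ n`, and let `α, β, γ` be nonnegative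
integers with `α + β + 2γ = ℓ`.  Let `(E, σ)` be the real étale algebra with involution
`ℝ × (ℝ × ℝ)^α × ℂ^β × (ℂ × ℂ)^γ` and let `f` be a nondegenerate symmetric bilinear form on
`ℝ^n` of signature `(r, n - r)`, i.e. equivalent to the diagonal form with `r` entries `+1` and
`n - r` entries `-1`.  If there is an injective `ℝ`-algebra homomorphism `ι : E → End_ℝ (ℝ^n)`
with `f (ι a x) y = f x (ι (σ a) y)` for all `a, x, y`, then `α + 2γ ≤ min r (n - r)`. -/
theorem statement13 (ℓ r α β γ : ℕ) (hℓ : 1 ≤ ℓ) (hr : r ≤ 2 * ℓ + 1)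
    (hsum : α + β + 2 * γ = ℓ)
    (f : (Fin (2 * ℓ + 1) → ℝ) → (Fin (2 * ℓ + 1) → ℝ) → ℝ)
    (hf : ∃ g : (Fin (2 * ℓ + 1) → ℝ) ≃ₗ[ℝ] (Fin (2 * ℓ + 1) → ℝ),
      ∀ x y, f x y = diagRForm (2 * ℓ + 1) r (g x) (g y))
    (ι : RealEtaleAlgB α β γ →ₐ[ℝ] Module.End ℝ (Fin (2 * ℓ + 1) → ℝ))
    (hinj : Function.Injective ι)
    (hcompat : ∀ (a : RealEtaleAlgB α β γ) (x y : Fin (2 * ℓ + 1) → ℝ),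
      f (ι a x) y = f x (ι (sigmaB α β γ a) y)) :
    α + 2 * γ ≤ min r (2 * ℓ + 1 - r) := by
  obtain ⟨g, hg⟩ := hf
  obtain ⟨v, hv⟩ := exists_common
    (Sum.elim (fun i : Fin α => ι (jB α β γ (Pi.single i 1, 0)))
      (fun k : Fin γ => ι (jB α β γ (0, Pi.single k 1)))) (by
    rintro (i | k) h
    · simp only [Sum.elim_inl] at h
      have := jB_inj _ _ _ _ (hinj (h.trans (map_zero ι).symm))
      simpa using congrFun (congrArg Prod.fst this) i
    · simp only [Sum.elim_inr] at h
      have := jB_inj _ _ _ _ (hinj (h.trans (map_zero ι).symm))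
      simpa using congrFun (congrArg Prod.snd this) k)
  let T : ((Fin α → ℝ) × (Fin γ → ℂ)) →ₗ[ℝ] (Fin (2 * ℓ + 1) → ℝ) :=
    g.toLinearMap ∘ₗ (LinearMap.applyₗ v) ∘ₗ ι.toLinearMap ∘ₗ jB α β γ
  have hT : ∀ u, T u = g (ι (jB α β γ u) v) := fun u => rfl
  have hTinj : ∀ u, T u = 0 → u = 0 := by
    intro u hu
    rw [hT, LinearEquiv.map_eq_zero_iff] at hu
    have key : ∀ w, ι (jB α β γ (w * u)) v = 0 := by
      intro w
      rw [← jB_mul, map_mul, Module.End.mul_apply, hu, map_zero]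
    refine Prod.ext (funext fun i => ?_) (funext fun k => ?_)
    · by_contra hne
      refine hv (Sum.inl i) ?_
      have := key (Pi.single i (u.1 i)⁻¹, 0)
      rw [show ((Pi.single i (u.1 i)⁻¹, 0) : (Fin α → ℝ) × (Fin γ → ℂ)) * u
        = (Pi.single i 1, 0) from ?_] at this
      · exact this
      · refine Prod.ext (funext fun i' => ?_) (by simp)
        by_cases h : i' = i
        · subst h; simpa using inv_mul_cancel₀ hne
        · simp [h]
    · by_contra hne
      refine hv (Sum.inr k) ?_
      have := key (0, Pi.single k (u.2 k)⁻¹)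
      rw [show ((0, Pi.single k (u.2 k)⁻¹) : (Fin α → ℝ) × (Fin γ → ℂ)) * u
        = (0, Pi.single k 1) from ?_] at this
      · exact this
      · refine Prod.ext (by simp) (funext fun i' => ?_)
        by_cases h : i' = k
        · subst h; simpa using inv_mul_cancel₀ hne
        · simp [h]
  have hiso : ∀ u, diagRForm (2 * ℓ + 1) r (T u) (T u) = 0 := by
    intro u
    rw [hT, ← hg, hcompat, ← Module.End.mul_apply, ← map_mul, jB_sigma, hg]
    simp [diagRForm]
  have hdim : Module.finrank ℝ ((Fin α → ℝ) × (Fin γ → ℂ)) = α + 2 * γ := by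
    rw [Module.finrank_prod, Module.finrank_pi_fintype, Module.finrank_pi_fintype]
    simp [Complex.finrank_real_complex, mul_comm]
  have hc := card_lt (2 * ℓ + 1) r hr
  have hinj2 : ∀ P : Fin (2 * ℓ + 1) → Prop, ∀ [DecidablePred P],
      (∀ x, diagRForm (2 * ℓ + 1) r x x = 0 → (∀ i, P i → x i = 0) → x = 0) →
      α + 2 * γ ≤ Fintype.card {i // P i} := by
    intro P _ hP
    rw [← hdim, ← Module.finrank_fintype_fun_eq_card (R := ℝ)]
    refine LinearMap.finrank_le_finrank_of_injective (f := prB _ P ∘ₗ T) ?_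
    rw [injective_iff_map_eq_zero]
    intro u hu
    exact hTinj u (hP _ (hiso u) fun i hi => congrFun hu ⟨i, hi⟩)
  refine le_min ?_ ?_
  · rw [← hc]
    exact hinj2 _ fun x h hx => isotropic_pos _ r x h hx
  · have := hinj2 (fun i => ¬ (i : ℕ) < r) fun x h hx => isotropic_neg _ r x h hx
    rw [Fintype.card_subtype_compl, hc] at this
    simpa using this
end
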